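/- arXiv:math/0502222 — 8 statements merged into one kernel-verified Lean document; each statement's English description precedes it below -/
import Mathlib

section
/- Let L be a field complete with respect to a nonarchimedean absolute value |·|, q ∈ L with 0 < |q| < 1, and let θ be the theta function with period q. Then for every u ∈ Lˣ one has θ(qu) = −u⁻¹·θ(u). -/
/-- The `p`-adic theta function `θ(u) = θ(u,q) = (1-u)·∏_{n=1}^∞ (1-qⁿu)(1-qⁿu⁻¹)`,
the infinite product being interpreted as a `tprod`. -/
noncomputable def tateTheta {L : Type*} [NormedField L] (q u : L) : L :=
  (1 - u) * ∏' n : ℕ, (1 - q ^ (n + 1) * u) * (1 - q ^ (n + 1) * u⁻¹)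

/-!
Writing `(a; q)_∞ = ∏_{n ≥ 0} (1 - qⁿ a)`, the theta function is `θ(u) = (u; q)_∞ (q u⁻¹; q)_∞`.
Replacing `u` by `q u` removes the factor `1 - u` from the first symbol and adds the factor
`1 - u⁻¹` to the second, and `1 - u⁻¹ = -u⁻¹ (1 - u)`.
-/

/-- The infinite `q`-Pochhammer symbol `(a; q)_∞ = ∏_{n ≥ 0} (1 - qⁿ a)`, in terms of which the
theta function factors. The base `q` comes first, as in `tateTheta`. As a `tprod`, it takes the
value `1` when the product does not converge. -/
noncomputable def qPochhammerInf {R : Type*} [CommRing R] [TopologicalSpace R] (q a : R) : R :=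
  ∏' n : ℕ, (1 - q ^ n * a)

section NormedCommRing

variable {R : Type*} [NormedCommRing R] [NormOneClass R] [CompleteSpace R] {q : R}

theorem multipliable_one_sub_pow_mul (hq : ‖q‖ < 1) (a : R) :
    Multipliable fun n : ℕ ↦ 1 - q ^ n * a := by
  have summable_norm : Summable fun n : ℕ ↦ ‖-(q ^ n * a)‖ := by
    refine .of_nonneg_of_le (fun _ ↦ norm_nonneg _) (fun n ↦ ?_)
      ((summable_geometric_of_lt_one (norm_nonneg q) hq).mul_right ‖a‖)
    calc ‖-(q ^ n * a)‖ = ‖q ^ n * a‖ := norm_neg _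
      _ ≤ ‖q ^ n‖ * ‖a‖ := norm_mul_le _ _
      _ ≤ ‖q‖ ^ n * ‖a‖ := by gcongr; exact norm_pow_le q n
  simpa only [sub_eq_add_neg] using multipliable_one_add_of_summable summable_norm

theorem qPochhammerInf_eq_one_sub_mul (hq : ‖q‖ < 1) (a : R) :
    qPochhammerInf q a = (1 - a) * qPochhammerInf q (q * a) := by
  have shift (n : ℕ) : 1 - q ^ n * (q * a) = 1 - q ^ (n + 1) * a := by ring
  have multipliable_shift : Multipliable fun n : ℕ ↦ 1 - q ^ (n + 1) * a :=
    (multipliable_one_sub_pow_mul hq (q * a)).congr shift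
  calc qPochhammerInf q a
      = (1 - q ^ 0 * a) * ∏' n : ℕ, (1 - q ^ (n + 1) * a) :=
        tprod_eq_zero_mul' (f := fun n ↦ 1 - q ^ n * a) multipliable_shift
    _ = (1 - a) * qPochhammerInf q (q * a) := by
        simp only [pow_zero, one_mul, qPochhammerInf, shift]

end NormedCommRing

section NormedField

variable {L : Type*} [NormedField L] [CompleteSpace L] {q : L}

theorem tateTheta_eq_qPochhammerInf_mul (hq : ‖q‖ < 1) (u : L) :
    tateTheta q u = qPochhammerInf q u * qPochhammerInf q (q * u⁻¹) := by
  have shift (n : ℕ) (c : L) : 1 - q ^ (n + 1) * c = 1 - q ^ n * (q * c) := by ring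
  calc tateTheta q u
      = (1 - u) * ∏' n : ℕ, (1 - q ^ n * (q * u)) * (1 - q ^ n * (q * u⁻¹)) := by
        simp only [tateTheta, shift]
    _ = (1 - u) * (qPochhammerInf q (q * u) * qPochhammerInf q (q * u⁻¹)) := by
        rw [(multipliable_one_sub_pow_mul hq _).tprod_mul (multipliable_one_sub_pow_mul hq _)]
        rfl
    _ = qPochhammerInf q u * qPochhammerInf q (q * u⁻¹) := by
        rw [qPochhammerInf_eq_one_sub_mul hq u, mul_assoc]

theorem tateTheta_q_mul_general (hq0 : q ≠ 0) (hq1 : ‖q‖ < 1) {u : L} (hu : u ≠ 0) :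
    tateTheta q (q * u) = -u⁻¹ * tateTheta q u := by
  have inv_shift : q * (q * u)⁻¹ = u⁻¹ := by field_simp
  have one_sub_inv : 1 - u⁻¹ = -u⁻¹ * (1 - u) := by field_simp; ring
  calc tateTheta q (q * u)
      = qPochhammerInf q (q * u) * qPochhammerInf q u⁻¹ := by
        rw [tateTheta_eq_qPochhammerInf_mul hq1, inv_shift]
    _ = qPochhammerInf q (q * u) * (-u⁻¹ * (1 - u) * qPochhammerInf q (q * u⁻¹)) := by
        rw [qPochhammerInf_eq_one_sub_mul hq1 u⁻¹, one_sub_inv]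
    _ = -u⁻¹ * ((1 - u) * qPochhammerInf q (q * u) * qPochhammerInf q (q * u⁻¹)) := by ring
    _ = -u⁻¹ * tateTheta q u := by
        rw [← qPochhammerInf_eq_one_sub_mul hq1 u, ← tateTheta_eq_qPochhammerInf_mul hq1]

end NormedField

/-- **Functional equation of the theta function:** `θ(qu) = -u⁻¹·θ(u)`. -/
theorem tateTheta_q_mul {L : Type*} [NormedField L] [CompleteSpace L]
    [IsUltrametricDist L] (q : L) (hq0 : 0 < ‖q‖) (hq1 : ‖q‖ < 1) (u : Lˣ) :
    tateTheta q (q * (u : L)) = -((u : L))⁻¹ * tateTheta q (u : L) :=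
  tateTheta_q_mul_general (norm_pos_iff.mp hq0) hq1 u.ne_zero
end

section
/- Let L be a field complete with respect to a nonarchimedean absolute value |·|, and q ∈ L with 0 < |q| < 1. Let N ≥ 1, let μ ∈ L be a primitive N-th root of unity, and let ζ ∈ Lˣ with |ζ| = 1. Then ∏_{i=0}^{N−1} S(ζμ^i, q) = ∏_{k=1}^∞ ((1 − ζ^N q^{Nk})/(1 − ζ^{−N} q^{Nk}))^k, where both sides are convergent infinite products in L. -/
/-- The infinite product `S(α) = S(α,q) = ∏_{k=1}^∞ ((1 - αq^k)/(1 - α⁻¹q^k))^k`,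
interpreted as a `tprod`. -/
noncomputable def tateS {L : Type*} [NormedField L] (q α : L) : L :=
  ∏' k : ℕ, ((1 - α * q ^ (k + 1)) / (1 - α⁻¹ * q ^ (k + 1))) ^ (k + 1)

/-!
A primitive `N`-th root of unity `μ` satisfies `∏ᵢ (1 - μ^i y) = 1 - y^N`. Applied with
`y = ζ q^k` to the numerators and, for the root `μ⁻¹`, with `y = ζ⁻¹ q^k` to the denominators, this
turns the product over `i` of the `k`-th factors of `S(ζμ^i, q)` into the `k`-th factor of the
right-hand side. A finite product of convergent infinite products may be taken factor by factor,
so only convergence remains. It holds over every complete normed field, because `∑ k |a q^k| < ∞`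
makes `∏ (1 - a q^k)^k` converge absolutely, to a nonzero limit if no factor vanishes.
-/

open Filter

section RootsOfUnity

lemma prod_range_one_sub_pow_mul {R : Type*} [CommRing R] [IsDomain R] {N : ℕ} (hN : 0 < N) {μ : R}
    (hμ : IsPrimitiveRoot μ N) (y : R) :
    ∏ i ∈ Finset.range N, (1 - μ ^ i * y) = 1 - y ^ N := by
  have h := congrArg (Polynomial.eval 1) (X_pow_sub_C_eq_prod hμ hN (rfl : y ^ N = y ^ N))
  simpa [Polynomial.eval_prod] using h.symm

lemma prod_range_one_sub_div_one_sub_inv {K : Type*} [Field K] {N : ℕ} (hN : 0 < N) {μ : K}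
    (hμ : IsPrimitiveRoot μ N) (ζ x : K) :
    ∏ i ∈ Finset.range N, (1 - ζ * μ ^ i * x) / (1 - (ζ * μ ^ i)⁻¹ * x) =
      (1 - ζ ^ N * x ^ N) / (1 - (ζ ^ N)⁻¹ * x ^ N) := by
  have numerator : ∏ i ∈ Finset.range N, (1 - ζ * μ ^ i * x) = 1 - ζ ^ N * x ^ N := by
    rw [← mul_pow, ← prod_range_one_sub_pow_mul hN hμ]
    exact Finset.prod_congr rfl fun i _ => by ring
  have denominator :
      ∏ i ∈ Finset.range N, (1 - (ζ * μ ^ i)⁻¹ * x) = 1 - (ζ ^ N)⁻¹ * x ^ N := by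
    rw [← inv_pow, ← mul_pow, ← prod_range_one_sub_pow_mul hN hμ.inv]
    exact Finset.prod_congr rfl fun i _ => by rw [mul_inv, inv_pow]; ring
  rw [Finset.prod_div_distrib, numerator, denominator]

end RootsOfUnity

section Convergence

variable {R : Type*} [NormedCommRing R] [NormOneClass R]

lemma norm_one_add_pow_sub_one_le (x : R) (n : ℕ) :
    ‖(1 + x) ^ n - 1‖ ≤ Real.exp (n * ‖x‖) - 1 := by
  simpa using (Finset.range n).norm_prod_one_add_sub_one_le fun _ => x

lemma summable_norm_one_add_pow_sub_one {ι : Type*} {f : ι → R} {n : ι → ℕ}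
    (hf : Summable fun i => n i * ‖f i‖) : Summable fun i => ‖(1 + f i) ^ n i - 1‖ := by
  have eventually_le_one : ∀ᶠ i in cofinite, n i * ‖f i‖ ≤ 1 :=
    hf.tendsto_cofinite_zero.eventually_le_const one_pos
  refine (hf.mul_left 2).of_norm_bounded_eventually ?_
  filter_upwards [eventually_le_one] with i hi
  have nonneg : 0 ≤ n i * ‖f i‖ := by positivity
  calc ‖‖(1 + f i) ^ n i - 1‖‖ = ‖(1 + f i) ^ n i - 1‖ := norm_norm _
    _ ≤ Real.exp (n i * ‖f i‖) - 1 := norm_one_add_pow_sub_one_le _ _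
    _ ≤ |Real.exp (n i * ‖f i‖) - 1| := le_abs_self _
    _ ≤ 2 * |n i * ‖f i‖| := Real.abs_exp_sub_one_le (by rwa [abs_of_nonneg nonneg])
    _ = 2 * (n i * ‖f i‖) := by rw [abs_of_nonneg nonneg]

lemma summable_norm_one_sub_mul_pow_pow_sub_one {q : R} (hq : ‖q‖ < 1) (a : R) :
    Summable fun k : ℕ => ‖(1 - a * q ^ (k + 1)) ^ (k + 1) - 1‖ := by
  have summable_nat_mul_pow : Summable fun k : ℕ => ((k + 1 : ℕ) : ℝ) * ‖q‖ ^ (k + 1) := by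
    have h := summable_pow_mul_geometric_of_norm_lt_one 1 (r := ‖q‖) (by rwa [norm_norm])
    simpa only [pow_one] using (summable_nat_add_iff 1).mpr h
  have summable_nat_mul_norm :
      Summable fun k : ℕ => ((k + 1 : ℕ) : ℝ) * ‖-(a * q ^ (k + 1))‖ := by
    refine (summable_nat_mul_pow.mul_left ‖a‖).of_nonneg_of_le (fun k => by positivity) fun k => ?_
    calc ((k + 1 : ℕ) : ℝ) * ‖-(a * q ^ (k + 1))‖ ≤ (k + 1 : ℕ) * (‖a‖ * ‖q‖ ^ (k + 1)) := by
          rw [norm_neg]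
          gcongr
          exact norm_mul_le_of_le le_rfl (norm_pow_le _ _)
      _ = ‖a‖ * ((k + 1 : ℕ) * ‖q‖ ^ (k + 1)) := mul_left_comm _ _ _
  simpa only [sub_eq_add_neg] using summable_norm_one_add_pow_sub_one summable_nat_mul_norm

lemma multipliable_one_sub_mul_pow_pow [CompleteSpace R] {q : R} (hq : ‖q‖ < 1) (a : R) :
    Multipliable fun k : ℕ => (1 - a * q ^ (k + 1)) ^ (k + 1) := by
  simpa only [add_sub_cancel] using
    multipliable_one_add_of_summable (summable_norm_one_sub_mul_pow_pow_sub_one hq a)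

lemma tprod_one_sub_mul_pow_pow_ne_zero [CompleteSpace R] [NormMulClass R] {q a : R}
    (hq : ‖q‖ < 1) (ha : ∀ k : ℕ, 1 - a * q ^ (k + 1) ≠ 0) :
    ∏' k : ℕ, (1 - a * q ^ (k + 1)) ^ (k + 1) ≠ 0 := by
  simpa only [add_sub_cancel] using
    tprod_one_add_ne_zero_of_summable
      (fun k => by simpa only [add_sub_cancel] using pow_ne_zero (k + 1) (ha k))
      (summable_norm_one_sub_mul_pow_pow_sub_one hq a)

end Convergence

lemma ne_pow_succ_of_norm_eq_one {R : Type*} [SeminormedRing R] {q α : R} (hq : ‖q‖ < 1)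
    (hα : ‖α‖ = 1) (k : ℕ) : α ≠ q ^ (k + 1) := by
  rintro rfl
  have norm_lt_one : ‖q ^ (k + 1)‖ < 1 :=
    (norm_pow_le' q k.succ_pos).trans_lt (pow_lt_one₀ (norm_nonneg q) hq k.succ_ne_zero)
  exact norm_lt_one.ne hα

section TateS

variable {L : Type*} [NormedField L] [CompleteSpace L]

lemma multipliable_tateS {q α : L} (hq : ‖q‖ < 1) (hα₀ : α ≠ 0)
    (hα : ∀ k : ℕ, α ≠ q ^ (k + 1)) :
    Multipliable fun k : ℕ =>
      ((1 - α * q ^ (k + 1)) / (1 - α⁻¹ * q ^ (k + 1))) ^ (k + 1) := by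
  have denominator_ne_zero (k : ℕ) : 1 - α⁻¹ * q ^ (k + 1) ≠ 0 := by
    rw [sub_ne_zero, ne_comm, Ne, inv_mul_eq_one₀ hα₀]
    exact hα k
  simpa only [div_pow] using
    (multipliable_one_sub_mul_pow_pow hq α).div₀ (multipliable_one_sub_mul_pow_pow hq α⁻¹)
      (tprod_one_sub_mul_pow_pow_ne_zero hq denominator_ne_zero)

theorem tateS_norm_relation_general (q : L) (hq : ‖q‖ < 1) (N : ℕ) (hN : 1 ≤ N) (μ : L)
    (hμ : IsPrimitiveRoot μ N) (ζ : Lˣ) (hζ : ∀ i k : ℕ, (ζ : L) * μ ^ i ≠ q ^ (k + 1)) :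
    (∀ i : ℕ, Multipliable (fun k : ℕ =>
        ((1 - ((ζ : L) * μ ^ i) * q ^ (k + 1)) /
          (1 - ((ζ : L) * μ ^ i)⁻¹ * q ^ (k + 1))) ^ (k + 1))) ∧
    Multipliable (fun k : ℕ =>
        ((1 - (ζ : L) ^ N * q ^ (N * (k + 1))) /
          (1 - ((ζ : L) ^ N)⁻¹ * q ^ (N * (k + 1)))) ^ (k + 1)) ∧
    (∏ i ∈ Finset.range N, tateS q ((ζ : L) * μ ^ i)) =
      ∏' k : ℕ, ((1 - (ζ : L) ^ N * q ^ (N * (k + 1))) /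
          (1 - ((ζ : L) ^ N)⁻¹ * q ^ (N * (k + 1)))) ^ (k + 1) := by
  have multipliable_factor (i : ℕ) :=
    multipliable_tateS hq (mul_ne_zero ζ.ne_zero (pow_ne_zero i (hμ.ne_zero (by lia)))) (hζ i)
  have prod_factor (k : ℕ) :
      ∏ i ∈ Finset.range N, ((1 - ζ * μ ^ i * q ^ (k + 1)) /
          (1 - (ζ * μ ^ i)⁻¹ * q ^ (k + 1))) ^ (k + 1) =
        ((1 - (ζ : L) ^ N * q ^ (N * (k + 1))) /
          (1 - ((ζ : L) ^ N)⁻¹ * q ^ (N * (k + 1)))) ^ (k + 1) := by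
    rw [Finset.prod_pow, prod_range_one_sub_div_one_sub_inv hN hμ, ← pow_mul, mul_comm (k + 1) N]
  refine ⟨multipliable_factor, ?_, ?_⟩
  · exact (multipliable_prod fun i _ => multipliable_factor i).congr prod_factor
  · simp only [tateS]
    rw [← Multipliable.tprod_finsetProd fun i _ => multipliable_factor i]
    exact tprod_congr prod_factor

end TateS

/-- **Norm relation for `S`:** if `μ` is a primitive `N`-th root of unity and `|ζ| = 1`,
then `∏_{i=0}^{N-1} S(ζμ^i, q) = ∏_{k=1}^∞ ((1 - ζ^N q^{Nk})/(1 - ζ^{-N} q^{Nk}))^k`,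
both sides being convergent infinite products. -/
theorem tateS_norm_relation {L : Type*} [NormedField L] [CompleteSpace L]
    [IsUltrametricDist L] (q : L) (hq0 : 0 < ‖q‖) (hq1 : ‖q‖ < 1)
    (N : ℕ) (hN : 1 ≤ N) (μ : L) (hμ : IsPrimitiveRoot μ N)
    (ζ : Lˣ) (hζ : ‖(ζ : L)‖ = 1) :
    (∀ i : ℕ, Multipliable (fun k : ℕ =>
        ((1 - ((ζ : L) * μ ^ i) * q ^ (k + 1)) /
          (1 - ((ζ : L) * μ ^ i)⁻¹ * q ^ (k + 1))) ^ (k + 1))) ∧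
    Multipliable (fun k : ℕ =>
        ((1 - (ζ : L) ^ N * q ^ (N * (k + 1))) /
          (1 - ((ζ : L) ^ N)⁻¹ * q ^ (N * (k + 1)))) ^ (k + 1)) ∧
    (∏ i ∈ Finset.range N, tateS q ((ζ : L) * μ ^ i)) =
      ∏' k : ℕ, ((1 - (ζ : L) ^ N * q ^ (N * (k + 1))) /
          (1 - ((ζ : L) ^ N)⁻¹ * q ^ (N * (k + 1)))) ^ (k + 1) :=
  tateS_norm_relation_general q hq1 N hN μ hμ ζ fun i => ne_pow_succ_of_norm_eq_one hq1 <| by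
    rw [norm_mul, hζ, norm_pow, (hμ.isOfFinOrder (by lia)).norm_eq_one, one_pow, one_mul]
end

section
/- Let L be a field complete with respect to a nonarchimedean absolute value |·|, let π₀ ∈ L with 0 < |π₀| < 1, let r ≥ 2 be an integer and set q = π₀^r. Then for every integer i with 0 < i < r, one has the identity θ(π₀^i, q)^i · S(π₀^i, q)^r = ∏_{n=1}^∞ (1 − π₀^{nr−r+i})^{nr−r+i} · (1 − π₀^{nr−i})^{−(nr−i)} (a convergent infinite product, all factors being nonzero), and moreover this common value M_i has absolute value |M_i| = 1. -/
/-!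
Put `A n = 1 - q ^ n * u` and `B n = 1 - q ^ (n + 1) * u⁻¹`. Then `θ(u) = ∏ A n * ∏ B n`, and,
the factor `A 0` of `S(u)` having exponent `0`, `S(u) = ∏ A n ^ n * ∏ (B n)⁻¹ ^ (n + 1)`. Collecting
exponents in `θ(u) ^ i * S(u) ^ r` gives `∏ A n ^ (n * r + i) / B n ^ ((n + 1) * r - i)`.
The growing exponents do not affect convergence, because in an ultrametric field
`‖a ^ k - 1‖ ≤ ‖a - 1‖` as soon as `‖a‖ ≤ 1`. For `q = π₀ ^ r` and `u = π₀ ^ i` with `0 < i < r`,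
the `A n` and `B n` are of the form `1 - π₀ ^ k` with `k > 0`, hence have norm `1`.
-/

section UltrametricRing

variable {R : Type*} [SeminormedRing R] [NormOneClass R] [IsUltrametricDist R] {a : R}

theorem norm_eq_one_of_norm_sub_one_lt_one (ha : ‖a - 1‖ < 1) : ‖a‖ = 1 := by
  have hmax : ‖a - 1 + 1‖ = max ‖a - 1‖ ‖(1 : R)‖ :=
    IsUltrametricDist.norm_add_eq_max_of_norm_ne_norm (by simpa only [norm_one] using ha.ne)
  rwa [sub_add_cancel, norm_one, max_eq_right ha.le] at hmax

theorem norm_one_sub_pow (ha : ‖a‖ < 1) {k : ℕ} (hk : k ≠ 0) : ‖1 - a ^ k‖ = 1 := by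
  refine norm_eq_one_of_norm_sub_one_lt_one ?_
  rw [sub_sub_cancel_left, norm_neg]
  exact (norm_pow_le a k).trans_lt (pow_lt_one₀ (norm_nonneg a) ha hk)

theorem norm_pow_sub_one_le (ha : ‖a‖ ≤ 1) (k : ℕ) : ‖a ^ k - 1‖ ≤ ‖a - 1‖ := by
  induction k with
  | zero => simp
  | succ k ih =>
    have hpow : ‖a ^ k‖ ≤ 1 := (norm_pow_le a k).trans (pow_le_one₀ (norm_nonneg a) ha)
    calc ‖a ^ (k + 1) - 1‖ = ‖a ^ k * (a - 1) + (a ^ k - 1)‖ := by rw [pow_succ]; noncomm_ring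
      _ ≤ max ‖a ^ k * (a - 1)‖ ‖a ^ k - 1‖ := IsUltrametricDist.norm_add_le_max _ _
      _ ≤ ‖a - 1‖ := max_le ((norm_mul_le _ _).trans
          (mul_le_of_le_one_left (norm_nonneg _) hpow)) ih

end UltrametricRing

theorem norm_inv_sub_one {K : Type*} [NormedDivisionRing K] [IsUltrametricDist K] {a : K}
    (ha : ‖a - 1‖ < 1) : ‖a⁻¹ - 1‖ = ‖a - 1‖ := by
  have ha1 : ‖a‖ = 1 := norm_eq_one_of_norm_sub_one_lt_one ha
  have ha0 : a ≠ 0 := norm_ne_zero_iff.mp (ha1 ▸ one_ne_zero)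
  calc ‖a⁻¹ - 1‖ = ‖a⁻¹ * (1 - a)‖ := by rw [mul_sub, mul_one, inv_mul_cancel₀ ha0]
    _ = ‖a - 1‖ := by rw [norm_mul, norm_inv, ha1, inv_one, one_mul, norm_sub_rev]

theorem pow_right_injective_of_norm_ne_one {K : Type*} [NormedDivisionRing K] {x : K}
    (hx0 : x ≠ 0) (hx1 : ‖x‖ ≠ 1) : Function.Injective fun n : ℕ => x ^ n := fun m n hmn =>
  pow_right_injective₀ (norm_pos_iff.mpr hx0) hx1
    (by simpa only [norm_pow] using congrArg norm hmn)

section InfiniteProduct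

variable {ι : Type*}

theorem eventually_norm_sub_one_lt_one {R : Type*} [SeminormedRing R] {f : ι → R}
    (hf : Summable fun j => ‖f j - 1‖) : ∀ᶠ j in Filter.cofinite, ‖f j - 1‖ < 1 :=
  hf.tendsto_cofinite_zero.eventually_lt_const one_pos

theorem multipliable_of_summable_norm_sub_one {R : Type*} [NormedCommRing R] [NormOneClass R]
    [CompleteSpace R] {f : ι → R} (hf : Summable fun j => ‖f j - 1‖) : Multipliable f := by
  simpa only [add_sub_cancel] using multipliable_one_add_of_summable hf

theorem multipliable_pow_of_summable_norm_sub_one {R : Type*} [NormedCommRing R] [NormOneClass R]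
    [CompleteSpace R] [IsUltrametricDist R] {f : ι → R} (hf : Summable fun j => ‖f j - 1‖)
    (e : ι → ℕ) : Multipliable fun j => f j ^ e j := by
  refine multipliable_of_summable_norm_sub_one (hf.of_norm_bounded_eventually ?_)
  filter_upwards [eventually_norm_sub_one_lt_one hf] with j hj
  rw [norm_norm]
  exact norm_pow_sub_one_le (norm_eq_one_of_norm_sub_one_lt_one hj).le (e j)

theorem summable_norm_inv_sub_one {K : Type*} [NormedDivisionRing K] [IsUltrametricDist K]
    {f : ι → K} (hf : Summable fun j => ‖f j - 1‖) : Summable fun j => ‖(f j)⁻¹ - 1‖ := by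
  refine hf.of_norm_bounded_eventually ?_
  filter_upwards [eventually_norm_sub_one_lt_one hf] with j hj
  rw [norm_norm, norm_inv_sub_one hj]

theorem multipliable_inv_pow_of_summable_norm_sub_one {K : Type*} [NormedField K]
    [CompleteSpace K] [IsUltrametricDist K] {f : ι → K} (hf : Summable fun j => ‖f j - 1‖)
    (e : ι → ℕ) : Multipliable fun j => (f j)⁻¹ ^ e j :=
  multipliable_pow_of_summable_norm_sub_one (f := fun j => (f j)⁻¹)
    (summable_norm_inv_sub_one hf) e

theorem norm_eq_one_of_hasProd {K : Type*} [NormedField K] {f : ι → K} {a : K}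
    (hf : HasProd f a) (h : ∀ j, ‖f j‖ = 1) : ‖a‖ = 1 :=
  hf.norm.unique (by simpa only [h] using hasProd_one)

end InfiniteProduct

theorem mul_pow_mul_pow_mul_inv_pow_pow {K : Type*} [Field K] (a : K) {b : K} (hb : b ≠ 0)
    {i r m n : ℕ} (him : i ≤ m * r) :
    (a * b) ^ i * (a ^ n * b⁻¹ ^ m) ^ r = a ^ (n * r + i) / b ^ (m * r - i) := by
  rw [pow_sub₀ b hb him, div_eq_mul_inv, mul_inv, inv_inv, ← inv_pow]
  ring

section Tate

variable {L : Type*} [NormedField L] {q : L}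

theorem summable_norm_one_sub_geometric_sub_one (hq : ‖q‖ < 1) (x : L) :
    Summable fun n : ℕ => ‖(1 - q ^ n * x) - 1‖ := by
  simpa only [sub_sub_cancel_left, norm_neg, norm_mul, norm_pow] using
    (summable_geometric_of_lt_one (norm_nonneg q) hq).mul_right ‖x‖

theorem summable_norm_one_sub_geometric_succ_sub_one (hq : ‖q‖ < 1) (x : L) :
    Summable fun n : ℕ => ‖(1 - q ^ (n + 1) * x) - 1‖ := by
  simpa only [pow_succ, mul_assoc] using summable_norm_one_sub_geometric_sub_one hq (q * x)

variable [CompleteSpace L]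

theorem tateTheta_eq_tprod_mul_tprod (hq : ‖q‖ < 1) (u : L) :
    tateTheta q u = (∏' n : ℕ, (1 - q ^ n * u)) * ∏' n : ℕ, (1 - q ^ (n + 1) * u⁻¹) := by
  have hsucc (x : L) : Multipliable fun n : ℕ => 1 - q ^ (n + 1) * x :=
    multipliable_of_summable_norm_sub_one (summable_norm_one_sub_geometric_succ_sub_one hq x)
  rw [tateTheta, (hsucc u).tprod_mul (hsucc u⁻¹),
    tprod_eq_zero_mul' (f := fun n => 1 - q ^ n * u) (hsucc u), pow_zero, one_mul, mul_assoc]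

variable [IsUltrametricDist L]

theorem tateS_eq_tprod_mul_tprod (hq : ‖q‖ < 1) (u : L) :
    tateS q u =
      (∏' n : ℕ, (1 - q ^ n * u) ^ n) * ∏' n : ℕ, (1 - q ^ (n + 1) * u⁻¹)⁻¹ ^ (n + 1) := by
  have hnum : Multipliable fun n : ℕ => (1 - q ^ (n + 1) * u) ^ (n + 1) :=
    multipliable_pow_of_summable_norm_sub_one
      (summable_norm_one_sub_geometric_succ_sub_one hq u) fun n => n + 1
  have hden : Multipliable fun n : ℕ => (1 - q ^ (n + 1) * u⁻¹)⁻¹ ^ (n + 1) :=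
    multipliable_inv_pow_of_summable_norm_sub_one
      (summable_norm_one_sub_geometric_succ_sub_one hq u⁻¹) fun n => n + 1
  rw [tateS, tprod_eq_zero_mul' (f := fun n => (1 - q ^ n * u) ^ n) hnum, pow_zero, one_mul,
    ← hnum.tprod_mul hden]
  refine tprod_congr fun n => ?_
  rw [div_eq_mul_inv, mul_pow, mul_comm u, mul_comm u⁻¹]

theorem hasProd_tateTheta_pow_mul_tateS_pow {u : L} (hq : ‖q‖ < 1)
    (hu : ∀ n : ℕ, u ≠ q ^ (n + 1)) {i r : ℕ} (hir : i ≤ r) :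
    HasProd (fun n : ℕ => (1 - q ^ n * u) ^ (n * r + i) /
        (1 - q ^ (n + 1) * u⁻¹) ^ ((n + 1) * r - i))
      (tateTheta q u ^ i * tateS q u ^ r) := by
  have hA := summable_norm_one_sub_geometric_sub_one hq u
  have hB := summable_norm_one_sub_geometric_succ_sub_one hq u⁻¹
  have hθ : HasProd (fun n : ℕ => (1 - q ^ n * u) * (1 - q ^ (n + 1) * u⁻¹)) (tateTheta q u) := by
    rw [tateTheta_eq_tprod_mul_tprod hq]
    exact (multipliable_of_summable_norm_sub_one hA).hasProd.mul
      (multipliable_of_summable_norm_sub_one hB).hasProd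
  have hS : HasProd (fun n : ℕ => (1 - q ^ n * u) ^ n * (1 - q ^ (n + 1) * u⁻¹)⁻¹ ^ (n + 1))
      (tateS q u) := by
    rw [tateS_eq_tprod_mul_tprod hq]
    exact (multipliable_pow_of_summable_norm_sub_one hA fun n => n).hasProd.mul
      (multipliable_inv_pow_of_summable_norm_sub_one hB fun n => n + 1).hasProd
  refine ((hθ.pow i).mul (hS.pow r)).congr_fun fun n => Eq.symm ?_
  have hB0 : 1 - q ^ (n + 1) * u⁻¹ ≠ 0 := fun h =>
    hu n (eq_of_mul_inv_eq_one (sub_eq_zero.mp h).symm).symm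
  have hle : i ≤ (n + 1) * r := hir.trans (Nat.le_mul_of_pos_left r n.succ_pos)
  exact mul_pow_mul_pow_mul_inv_pow_pow _ hB0 hle

theorem hasProd_tateTheta_pow_mul_tateS_pow_of_pow {x : L} (hx0 : 0 < ‖x‖) (hx1 : ‖x‖ < 1)
    {i r : ℕ} (hir : i < r) :
    HasProd (fun n : ℕ => (1 - x ^ ((n + 1) * r - r + i)) ^ ((n + 1) * r - r + i) /
        (1 - x ^ ((n + 1) * r - i)) ^ ((n + 1) * r - i))
      (tateTheta (x ^ r) (x ^ i) ^ i * tateS (x ^ r) (x ^ i) ^ r) := by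
  have hx : x ≠ 0 := norm_pos_iff.mp hx0
  have hle (n : ℕ) : r ≤ (n + 1) * r := Nat.le_mul_of_pos_left r n.succ_pos
  have hq : ‖x ^ r‖ < 1 := by
    rw [norm_pow]
    exact pow_lt_one₀ hx0.le hx1 (Nat.ne_zero_of_lt hir)
  have hu (n : ℕ) : x ^ i ≠ (x ^ r) ^ (n + 1) := by
    rw [← pow_mul']
    exact (pow_right_injective_of_norm_ne_one hx hx1.ne).ne (hir.trans_le (hle n)).ne
  refine (hasProd_tateTheta_pow_mul_tateS_pow hq hu hir.le).congr_fun fun n => ?_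
  have hexp : (n + 1) * r - r + i = n * r + i := by rw [Nat.succ_mul, Nat.add_sub_cancel]
  rw [hexp, pow_add x, pow_mul' x, pow_sub₀ x hx (hir.le.trans (hle n)), pow_mul' x]

end Tate

/-- **The unit `M_i`:** for `q = π₀^r` and `0 < i < r` one has
`θ(π₀^i,q)^i · S(π₀^i,q)^r = ∏_{n=1}^∞ (1-π₀^{nr-r+i})^{nr-r+i}·(1-π₀^{nr-i})^{-(nr-i)}`,
a convergent infinite product with nonzero factors, and the common value has
absolute value `1`. -/
theorem tate_M_formula {L : Type*} [NormedField L] [CompleteSpace L]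
    [IsUltrametricDist L] (π₀ : L) (hπ0 : 0 < ‖π₀‖) (hπ1 : ‖π₀‖ < 1)
    (r : ℕ) (hr : 2 ≤ r) (i : ℕ) (hi0 : 0 < i) (hir : i < r) :
    (∀ n : ℕ, 1 ≤ n → (1 - π₀ ^ (n * r - r + i)) ≠ 0 ∧ (1 - π₀ ^ (n * r - i)) ≠ 0) ∧
    Multipliable (fun n : ℕ =>
      (1 - π₀ ^ ((n + 1) * r - r + i)) ^ ((n + 1) * r - r + i) /
        (1 - π₀ ^ ((n + 1) * r - i)) ^ ((n + 1) * r - i)) ∧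
    tateTheta (π₀ ^ r) (π₀ ^ i) ^ i * tateS (π₀ ^ r) (π₀ ^ i) ^ r =
      ∏' n : ℕ, ((1 - π₀ ^ ((n + 1) * r - r + i)) ^ ((n + 1) * r - r + i) /
        (1 - π₀ ^ ((n + 1) * r - i)) ^ ((n + 1) * r - i)) ∧
    ‖tateTheta (π₀ ^ r) (π₀ ^ i) ^ i * tateS (π₀ ^ r) (π₀ ^ i) ^ r‖ = 1 := by
  have hnum (n : ℕ) : ‖1 - π₀ ^ (n * r - r + i)‖ = 1 := norm_one_sub_pow hπ1 (by omega)
  have hden {n : ℕ} (hn : 1 ≤ n) : ‖1 - π₀ ^ (n * r - i)‖ = 1 :=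
    norm_one_sub_pow hπ1 (Nat.sub_ne_zero_of_lt (hir.trans_le (Nat.le_mul_of_pos_left r hn)))
  have hM := hasProd_tateTheta_pow_mul_tateS_pow_of_pow hπ0 hπ1 hir
  refine ⟨fun n hn => ⟨?_, ?_⟩, hM.multipliable, hM.tprod_eq.symm,
    norm_eq_one_of_hasProd hM fun n => ?_⟩
  · exact norm_ne_zero_iff.mp (hnum n ▸ one_ne_zero)
  · exact norm_ne_zero_iff.mp (hden hn ▸ one_ne_zero)
  · rw [norm_div, norm_pow, norm_pow, hnum, hden n.succ_pos, one_pow, one_pow, div_one]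
end

section
/- Let F be a field containing a primitive m-th root of unity ζ (m ≥ 1). Then for every x ∈ Fˣ with x^m ≠ 1, the distribution relation m · Σ_{i=1}^{m} [ζ^i x] = [x^m] holds in the rationalized pre-Bloch group ℚ ⊗_ℤ P(F). (Note that x^m ≠ 1 guarantees ζ^i x ∈ F∖{0,1} for every i and x^m ∈ F∖{0,1}.) -/
open scoped TensorProduct

variable (F : Type*) [Field F]

/-- The five-term (scissors congruence) elements
`[x] - [y] + [y/x] - [(1-x⁻¹)/(1-y⁻¹)] + [(1-x)/(1-y)]` in the free abelian group
on `F ∖ {0,1}`. -/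
def fiveTermSet : Set (FreeAbelianGroup {t : F // t ≠ 0 ∧ t ≠ 1}) :=
  { z | ∃ x y : {t : F // t ≠ 0 ∧ t ≠ 1}, x ≠ y ∧
      ∃ (h1 : (y : F) / (x : F) ≠ 0 ∧ (y : F) / (x : F) ≠ 1)
        (h2 : (1 - (x : F)⁻¹) / (1 - (y : F)⁻¹) ≠ 0 ∧
              (1 - (x : F)⁻¹) / (1 - (y : F)⁻¹) ≠ 1)
        (h3 : (1 - (x : F)) / (1 - (y : F)) ≠ 0 ∧ (1 - (x : F)) / (1 - (y : F)) ≠ 1),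
      z = FreeAbelianGroup.of x - FreeAbelianGroup.of y
          + FreeAbelianGroup.of (⟨_, h1⟩ : {t : F // t ≠ 0 ∧ t ≠ 1})
          - FreeAbelianGroup.of (⟨_, h2⟩ : {t : F // t ≠ 0 ∧ t ≠ 1})
          + FreeAbelianGroup.of (⟨_, h3⟩ : {t : F // t ≠ 0 ∧ t ≠ 1}) }

/-- The pre-Bloch group `P(F)`: the free abelian group on `F ∖ {0,1}` modulo the
five-term (scissors congruence) relations. -/
abbrev PreBloch := FreeAbelianGroup {t : F // t ≠ 0 ∧ t ≠ 1} ⧸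
  AddSubgroup.closure (fiveTermSet F)

/-- The class `[x]` in the rationalized pre-Bloch group `P(F)_ℚ = ℚ ⊗_ℤ P(F)`. -/
noncomputable def preBlochClassQ (x : F) (h0 : x ≠ 0) (h1 : x ≠ 1) :
    ℚ ⊗[ℤ] PreBloch F :=
  (1 : ℚ) ⊗ₜ[ℤ] (QuotientAddGroup.mk (FreeAbelianGroup.of ⟨x, h0, h1⟩))

/-!
Write `k` for the field. The group `ℚ ⊗ P(k(X))` is filtered by the degrees of the factors of `a`,
`b` and `c` in the brackets `[-a/b]` with `a + b + c = 0`. For an irreducible `π` of degree `d + 1`,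
the brackets whose only factor of degree `d + 1` is a `π` in `c` define, modulo level `d`, a
symmetric 2-cocycle on `(k[X]/π)ˣ`. Over `ℚ` such a cocycle is a coboundary, so these brackets are
determined by the residue at `π` of their Bloch–Wigner symbol `(1 - x) ∧ x`. The five-term relation
reduces every bracket of level `d + 1` to such brackets and to the `[π/π']`, and it follows that an
element of level `d + 1` that is killed by the Bloch–Wigner map lies in level `d`. By descent, the
kernel of the Bloch–Wigner map is contained in the span of the brackets of constants, on which the
specializations at any two points of `k` agree. The defect of the distribution relation for the
indeterminate `X` lies in this kernel. Its specialization at `X = x` is the defect for `x`, and the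
one at `X = 0` vanishes.
-/

lemma exists_ne_of_four_le_card {α : Type*} (hα : 4 ≤ ENat.card α) (a b c : α) :
    ∃ x : α, x ≠ a ∧ x ≠ b ∧ x ≠ c := by
  by_contra! h
  have h_univ : Set.univ ⊆ ({a, b, c} : Set α) := fun x _ => by
    rw [Set.mem_insert_iff, Set.mem_insert_iff, Set.mem_singleton_iff]
    exact or_iff_not_imp_left.2 fun ha => or_iff_not_imp_left.2 (h x ha)
  have h_three : ENat.card α ≤ 3 := by
    rw [← Set.encard_univ]
    grw [h_univ, Set.encard_insert_le, Set.encard_insert_le, Set.encard_singleton]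
    norm_num
  exact absurd (hα.trans h_three) (by norm_num)

section Bracket

variable {L : Type*} [Field L]

/-- The rationalized pre-Bloch group `P(L)_ℚ`. -/
abbrev PreBlochQ (L : Type*) [Field L] : Type _ := ℚ ⊗[ℤ] PreBloch L

open Classical in
/-- The class `[x]` in `P(L)_ℚ`, with the value `0` at the excluded points `0` and `1`, so that
degenerate instances of the relations below hold as well. -/
noncomputable def bracket (x : L) : PreBlochQ L :=
  if h : x ≠ 0 ∧ x ≠ 1 then preBlochClassQ L x h.1 h.2 else 0

lemma preBlochClassQ_eq_bracket (x : L) (h0 : x ≠ 0) (h1 : x ≠ 1) :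
    preBlochClassQ L x h0 h1 = bracket x := by
  rw [bracket, dif_pos ⟨h0, h1⟩]

@[simp] lemma bracket_zero : bracket (0 : L) = 0 := by simp [bracket]

@[simp] lemma bracket_one : bracket (1 : L) = 0 := by simp [bracket]

lemma span_range_bracket : Submodule.span ℚ (Set.range (bracket : L → PreBlochQ L)) = ⊤ := by
  refine Submodule.eq_top_iff'.2 fun z => ?_
  induction z using TensorProduct.induction_on with
  | zero => exact zero_mem _
  | add z w hz hw => exact add_mem hz hw
  | tmul q p =>
    induction p using QuotientAddGroup.induction_on with
    | H p =>
      rw [← mul_one q, ← smul_eq_mul, ← TensorProduct.smul_tmul']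
      refine Submodule.smul_mem _ q ?_
      induction p using FreeAbelianGroup.induction_on with
      | zero => simp
      | of x =>
        exact Submodule.subset_span ⟨x, (preBlochClassQ_eq_bracket x.1 x.2.1 x.2.2).symm⟩
      | neg x hx => simpa [TensorProduct.tmul_neg] using hx
      | add x y hx hy => simpa [TensorProduct.tmul_add] using add_mem hx hy

lemma one_sub_inv_div_one_sub_inv {x y : L} (hx0 : x ≠ 0) (hy0 : y ≠ 0) (hy1 : y ≠ 1) :
    (1 - x⁻¹) / (1 - y⁻¹) = (1 - x) / (1 - y) * (y / x) := by
  have : 1 - y⁻¹ ≠ 0 := by rwa [Ne, sub_eq_zero, eq_comm, inv_eq_one]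
  grind

lemma bracket_five_term {x y : L} (hx0 : x ≠ 0) (hx1 : x ≠ 1) (hy0 : y ≠ 0) (hy1 : y ≠ 1)
    (hxy : x ≠ y) :
    bracket x - bracket y + bracket (y / x) - bracket ((1 - x) / (1 - y) * (y / x)) +
      bracket ((1 - x) / (1 - y)) = 0 := by
  have hx1' : 1 - x ≠ 0 := sub_ne_zero.2 hx1.symm
  have hy1' : 1 - y ≠ 0 := sub_ne_zero.2 hy1.symm
  have h_div : y / x ≠ 0 ∧ y / x ≠ 1 :=
    ⟨div_ne_zero hy0 hx0, by rwa [Ne, div_eq_one_iff_eq hx0, eq_comm]⟩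
  have h_one_sub : (1 - x) / (1 - y) ≠ 0 ∧ (1 - x) / (1 - y) ≠ 1 :=
    ⟨div_ne_zero hx1' hy1', by rwa [Ne, div_eq_one_iff_eq hy1', sub_right_inj]⟩
  have h_eq := one_sub_inv_div_one_sub_inv hx0 hy0 hy1
  have h_inv : (1 - x⁻¹) / (1 - y⁻¹) ≠ 0 ∧ (1 - x⁻¹) / (1 - y⁻¹) ≠ 1 := by
    refine ⟨h_eq ▸ mul_ne_zero h_one_sub.1 h_div.1, fun h => hxy ?_⟩
    grind
  rw [← h_eq, ← preBlochClassQ_eq_bracket x hx0 hx1, ← preBlochClassQ_eq_bracket y hy0 hy1,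
    ← preBlochClassQ_eq_bracket _ h_div.1 h_div.2, ← preBlochClassQ_eq_bracket _ h_inv.1 h_inv.2,
    ← preBlochClassQ_eq_bracket _ h_one_sub.1 h_one_sub.2]
  simp only [preBlochClassQ, ← TensorProduct.tmul_sub, ← TensorProduct.tmul_add,
    ← QuotientAddGroup.mk_sub, ← QuotientAddGroup.mk_add]
  refine (congrArg _ ((QuotientAddGroup.eq_zero_iff _).2 ?_)).trans (TensorProduct.tmul_zero _ _)
  exact AddSubgroup.subset_closure
    ⟨⟨x, hx0, hx1⟩, ⟨y, hy0, hy1⟩, by simpa using hxy, h_div, h_inv, h_one_sub, rfl⟩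

lemma bracket_add_bracket_inv_mul {a b : L} (ha0 : a ≠ 0) (ha1 : a ≠ 1) (hb0 : b ≠ 0)
    (hb1 : b ≠ 1) (hab : a * b ≠ 1) :
    bracket (a * b) + bracket (a * b)⁻¹ =
      (bracket a + bracket a⁻¹) + (bracket b + bracket b⁻¹) := by
  -- The unique `x`, `y` with `y / x = a` and `(1 - x) / (1 - y) = b`.
  obtain ⟨x, hx⟩ : ∃ x, x = (b - 1) / (a * b - 1) := ⟨_, rfl⟩
  obtain ⟨y, hy⟩ : ∃ y, y = a * x := ⟨_, rfl⟩
  have hx0 : x ≠ 0 := by grind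
  have hx1 : x ≠ 1 := by grind
  have hy0 : y ≠ 0 := by grind
  have hy1 : y ≠ 1 := by grind
  have hxy : x ≠ y := by grind
  have h_div : y / x = a := by grind
  have h_one_sub : (1 - x) / (1 - y) = b := by grind
  have five_xy := bracket_five_term hx0 hx1 hy0 hy1 hxy
  have five_yx := bracket_five_term hy0 hy1 hx0 hx1 hxy.symm
  rw [← inv_div (1 - x), ← inv_div y, ← mul_inv, h_div, h_one_sub, mul_comm b] at five_yx
  rw [h_div, h_one_sub, mul_comm b] at five_xy
  linear_combination (norm := module) -five_xy - five_yx

lemma bracket_inv (hL : 4 ≤ ENat.card L) (b : L) : bracket b⁻¹ = -bracket b := by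
  rcases eq_or_ne b 0 with rfl | hb0
  · simp
  rcases eq_or_ne b 1 with rfl | hb1
  · simp
  obtain ⟨a, ha0, ha1, hab⟩ := exists_ne_of_four_le_card hL 0 1 b⁻¹
  have hab : a * b ≠ 1 := by rwa [Ne, mul_eq_one_iff_eq_inv₀ hb0]
  have h_mul := bracket_add_bracket_inv_mul ha0 ha1 hb0 hb1 hab
  have h_div := bracket_add_bracket_inv_mul (mul_ne_zero ha0 hb0) hab (inv_ne_zero hb0)
    (by simpa using hb1) (by rwa [mul_inv_cancel_right₀ hb0])
  rw [mul_inv_cancel_right₀ hb0, inv_inv] at h_div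
  have h_two : (2 : ℚ) • (bracket b⁻¹ + bracket b) = 0 := by
    linear_combination (norm := module) -h_mul - h_div
  exact eq_neg_of_add_eq_zero_left ((smul_eq_zero.1 h_two).resolve_left two_ne_zero)

lemma bracket_add_bracket_one_sub_eq {x y : L} (hx0 : x ≠ 0) (hx1 : x ≠ 1) (hy0 : y ≠ 0)
    (hy1 : y ≠ 1) : bracket x + bracket (1 - x) = bracket y + bracket (1 - y) := by
  rcases eq_or_ne x y with rfl | hxy
  · rfl
  have five_xy := bracket_five_term hx0 hx1 hy0 hy1 hxy
  have five_one_sub := bracket_five_term (x := 1 - y) (y := 1 - x) (by grind) (by grind)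
    (by grind) (by grind) (by grind)
  rw [sub_sub_cancel, sub_sub_cancel, mul_comm] at five_one_sub
  linear_combination (norm := module) five_xy - five_one_sub

lemma bracket_one_sub (hL : 4 ≤ ENat.card L) (x : L) : bracket (1 - x) = -bracket x := by
  rcases eq_or_ne x 0 with rfl | hx0
  · simp
  rcases eq_or_ne x 1 with rfl | hx1
  · simp
  have h_inv := bracket_add_bracket_one_sub_eq hx0 hx1 (inv_ne_zero hx0) (by simpa using hx1)
  have h_one_sub_inv := bracket_add_bracket_one_sub_eq hx0 hx1
    (y := (1 - x⁻¹)⁻¹) (by grind) (by simpa using hx0)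
  rw [show 1 - (1 - x⁻¹)⁻¹ = (1 - x)⁻¹ by grind] at h_one_sub_inv
  simp only [bracket_inv hL] at h_inv h_one_sub_inv
  have h_three : (3 : ℚ) • (bracket (1 - x) + bracket x) = 0 := by
    linear_combination (norm := module) h_inv + h_one_sub_inv
  exact eq_neg_of_add_eq_zero_left ((smul_eq_zero.1 h_three).resolve_left three_ne_zero)

end Bracket

section Dilogarithm

variable {L V : Type*} [Field L] [AddCommGroup V]

/-- Gauss's pentagramma mirificum: the cyclic form of the arguments of the five-term relation.
Starting from `(x, y)`, it reads `1 - y, x, (1 - x)/(1 - y), 1 - (1 - x)y/((1 - y)x), y/x`. -/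
def IsPentagram (z : Fin 5 → L) : Prop :=
  ∀ i, z i * z (i + 2) = 1 - z (i + 1)

/-- A function that satisfies the functional equations of the Bloch–Wigner dilogarithm. Such
functions factor through the pre-Bloch group, and the cyclic shape of the five-term relation makes
them easy to recognize. -/
structure IsDilogarithm (g : L → V) : Prop where
  apply_zero : g 0 = 0
  apply_one_sub : ∀ x, g (1 - x) = -g x
  sum_pentagram : ∀ z : Fin 5 → L, IsPentagram z → (∀ i, z i ≠ 0) → ∑ i, g (z i) = 0

lemma sum_fin_five_rotate (f : Fin 5 → V) (i : Fin 5) :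
    ∑ j, f j = f i + f (i + 1) + f (i + 2) + f (i + 3) + f (i + 4) := by
  rw [← Equiv.sum_comp (Equiv.addLeft i), Fin.sum_univ_five]
  simp

lemma IsPentagram.one_sub {z : Fin 5 → L} (hz : IsPentagram z) (i : Fin 5) :
    1 - z i = z (i + 4) * z (i + 1) := by
  have h := hz (i + 4)
  rw [add_assoc, add_assoc] at h
  simpa using h.symm

lemma IsDilogarithm.apply_one {g : L → V} (hg : IsDilogarithm g) : g 1 = 0 := by
  simpa [hg.apply_zero] using hg.apply_one_sub 0

lemma IsDilogarithm.sum_eq_zero {g : L → V} (hg : IsDilogarithm g) {z : Fin 5 → L}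
    (hz : IsPentagram z) : ∑ i, g (z i) = 0 := by
  by_cases h_ne : ∀ i, z i ≠ 0
  · exact hg.sum_pentagram z hz h_ne
  push Not at h_ne
  obtain ⟨i, hi⟩ := h_ne
  have h_next : z (i + 1) = 1 := by
    linear_combination hz i - z (i + 2) * hi
  have h_prev : z (i + 4) = 1 := by
    have h : z (i + 3) * z i = 1 - z (i + 4) := by simpa [add_assoc] using hz (i + 3)
    linear_combination h - z (i + 3) * hi
  have h_opposite : z (i + 3) = 1 - z (i + 2) := by
    have h := hz (i + 1)
    rwa [add_assoc, add_assoc, h_next, one_mul] at h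
  rw [sum_fin_five_rotate _ i, hi, h_next, h_prev, h_opposite, hg.apply_zero, hg.apply_one,
    hg.apply_one_sub]
  abel

lemma isPentagram_fiveTerm {x y : L} (hx : x ≠ 0) (hy : y ≠ 1) :
    IsPentagram ![1 - y, x, (1 - x) / (1 - y), 1 - (1 - x) / (1 - y) * (y / x), y / x] := by
  intro i
  fin_cases i <;> simp <;> grind

lemma IsDilogarithm.fiveTerm {g : L → V} (hg : IsDilogarithm g) {x y : L} (hx : x ≠ 0)
    (hy : y ≠ 1) :
    g x - g y + g (y / x) - g ((1 - x) / (1 - y) * (y / x)) + g ((1 - x) / (1 - y)) = 0 := by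
  have h := hg.sum_eq_zero (isPentagram_fiveTerm hx hy)
  simp only [Fin.sum_univ_five, Matrix.cons_val, hg.apply_one_sub] at h
  rw [← h]
  abel

lemma isDilogarithm_bracket (hL : 4 ≤ ENat.card L) :
    IsDilogarithm (bracket : L → PreBlochQ L) where
  apply_zero := bracket_zero
  apply_one_sub := bracket_one_sub hL
  sum_pentagram z hz h_ne := by
    have h02 : z 0 * z 2 = 1 - z 1 := hz 0
    have h24 : z 2 * z 4 = 1 - z 3 := hz 2
    have h41 : z 4 * z 1 = 1 - z 0 := hz 4
    have h1 := h_ne 1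
    have five := bracket_five_term (x := z 1) (y := 1 - z 0) h1 (by grind) (by grind) (by grind)
      (by grind)
    rw [sub_sub_cancel, show (1 - z 0) / z 1 = z 4 by grind, show (1 - z 1) / z 0 = z 2 by grind,
      h24, bracket_one_sub hL, bracket_one_sub hL] at five
    rw [Fin.sum_univ_five, ← five]
    abel

lemma IsDilogarithm.closure_fiveTermSet_le_ker {g : L → V} (hg : IsDilogarithm g) :
    AddSubgroup.closure (fiveTermSet L) ≤
      (FreeAbelianGroup.lift fun t : {t : L // t ≠ 0 ∧ t ≠ 1} => g t).ker := by
  refine (AddSubgroup.closure_le _).2 ?_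
  rintro _ ⟨x, y, -, -, -, -, rfl⟩
  simpa only [SetLike.mem_coe, AddMonoidHom.mem_ker, map_add, map_sub,
    FreeAbelianGroup.lift_apply_of, one_sub_inv_div_one_sub_inv x.2.1 y.2.1 y.2.2]
    using hg.fiveTerm x.2.1 y.2.2

variable [Module ℚ V]

/-- The universal property of `P(L)_ℚ`: the linear map with `[x] ↦ g x`. -/
noncomputable def IsDilogarithm.lift {g : L → V} (hg : IsDilogarithm g) : PreBlochQ L →ₗ[ℚ] V :=
  LinearMap.liftBaseChange ℚ
    (QuotientAddGroup.lift _ _ hg.closure_fiveTermSet_le_ker).toIntLinearMap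

@[simp] lemma IsDilogarithm.lift_bracket {g : L → V} (hg : IsDilogarithm g) (x : L) :
    hg.lift (bracket x) = g x := by
  rcases eq_or_ne x 0 with rfl | h0
  · rw [bracket_zero, map_zero, hg.apply_zero]
  rcases eq_or_ne x 1 with rfl | h1
  · rw [bracket_one, map_zero, hg.apply_one]
  · rw [← preBlochClassQ_eq_bracket x h0 h1]
    simp [preBlochClassQ, IsDilogarithm.lift]

end Dilogarithm

section Specialization

variable {K k : Type*} [Field K] [Field k] (A : ValuationSubring K) (ρ : A →+* k)

open Classical in
/-- The candidate specialization map `P(K)_ℚ → P(k)_ℚ` on brackets along a place `K → k ∪ {∞}`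
given by a valuation ring `A` and its residue homomorphism `ρ`: it sends `[f]` to `[ρ f]`, which is
read as `0` when `f` has a pole. -/
noncomputable def specializeBracket (f : K) : PreBlochQ k :=
  if h : f ∈ A then bracket (ρ ⟨f, h⟩) else 0

variable {A}

lemma specializeBracket_of_mem {f : K} (hf : f ∈ A) :
    specializeBracket A ρ f = bracket (ρ ⟨f, hf⟩) :=
  dif_pos hf

lemma specializeBracket_of_notMem {f : K} (hf : f ∉ A) : specializeBracket A ρ f = 0 :=
  dif_neg hf

lemma inv_mem_of_notMem {f : K} (hf : f ∉ A) : f⁻¹ ∈ A :=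
  (A.mem_or_inv_mem f).resolve_left hf

lemma one_sub_mem_iff {f : K} : 1 - f ∈ A ↔ f ∈ A :=
  ⟨fun h => by simpa using sub_mem (one_mem A) h, fun h => sub_mem (one_mem A) h⟩

lemma IsPentagram.exists_adjacent_notMem {z : Fin 5 → K} (hz : IsPentagram z)
    (h_pole : ∃ i, z i ∉ A) : ∃ i, z i ∉ A ∧ z (i + 1) ∉ A := by
  obtain ⟨i, hi⟩ := h_pole
  by_cases h_next : z (i + 1) ∈ A
  · refine ⟨i + 4, fun h_prev => hi (one_sub_mem_iff.1 ?_), ?_⟩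
    · exact hz.one_sub i ▸ mul_mem h_prev h_next
    · rwa [add_assoc, show (4 + 1 : Fin 5) = 0 from rfl, add_zero]
  · exact ⟨i, hi, h_next⟩

variable [IsLocalHom ρ]

lemma residue_inv_eq_zero {f : K} (hf : f ∉ A) : ρ ⟨f⁻¹, inv_mem_of_notMem hf⟩ = 0 := by
  by_contra h
  obtain ⟨g, hg⟩ := (isUnit_of_map_unit ρ _ (Ne.isUnit h)).exists_right_inv
  have hg' : f⁻¹ * (g : K) = 1 := congrArg Subtype.val hg
  have hgf : (g : K) = f := by grind
  exact hf (hgf ▸ g.2)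

lemma specializeBracket_add_of_notMem {f h : K} (hf : f ∉ A) (hfh : f * h ∈ A) :
    specializeBracket A ρ f + specializeBracket A ρ h = 0 := by
  have hf0 : f ≠ 0 := fun h0 => hf (h0 ▸ zero_mem A)
  obtain ⟨a, ha, rfl⟩ : ∃ a : A, ρ a = 0 ∧ (a : K) = h :=
    ⟨⟨f⁻¹, inv_mem_of_notMem hf⟩ * ⟨f * h, hfh⟩, by
      rw [map_mul, residue_inv_eq_zero ρ hf, zero_mul], by simp [inv_mul_cancel_left₀ hf0]⟩
  rw [specializeBracket_of_notMem ρ hf, specializeBracket_of_mem ρ a.2, Subtype.coe_eta, ha,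
    bracket_zero, add_zero]

lemma specializeBracket_add_eq_zero (hk : 4 ≤ ENat.card k) {f h : K} {u : A} (hfh : f * h = u)
    (hu : ρ u = 1) : specializeBracket A ρ f + specializeBracket A ρ h = 0 := by
  by_cases hf : f ∈ A
  · by_cases hh : h ∈ A
    · have h_inv : ρ ⟨h, hh⟩ = (ρ ⟨f, hf⟩)⁻¹ := by
        refine eq_inv_of_mul_eq_one_right ?_
        rw [← map_mul, ← hu]
        exact congrArg ρ (Subtype.ext hfh)
      rw [specializeBracket_of_mem ρ hf, specializeBracket_of_mem ρ hh, h_inv, bracket_inv hk,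
        add_neg_cancel]
    · rw [add_comm]
      exact specializeBracket_add_of_notMem ρ hh (by rw [mul_comm, hfh]; exact u.2)
  · exact specializeBracket_add_of_notMem ρ hf (hfh ▸ u.2)

lemma IsPentagram.sum_specializeBracket_of_notMem (hk : 4 ≤ ENat.card k) {z : Fin 5 → K}
    (hz : IsPentagram z) {i : Fin 5} (hi : z i ∉ A) (hi' : z (i + 1) ∉ A) :
    ∑ j, specializeBracket A ρ (z j) = 0 := by
  let u : A := (⟨_, inv_mem_of_notMem hi⟩ - 1) * (⟨_, inv_mem_of_notMem hi'⟩ - 1)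
  have hu : (u : K) = ((z i)⁻¹ - 1) * ((z (i + 1))⁻¹ - 1) := rfl
  have hρu : ρ u = 1 := by
    simp [u, residue_inv_eq_zero ρ hi, residue_inv_eq_zero ρ hi']
  have h_neighbours : z (i + 2) * z (i + 4) = u := by grind [hz i, hz.one_sub i]
  have h_opposite : z (i + 3) = (1 - u : A) := by
    have h := hz (i + 2)
    rw [add_assoc, add_assoc] at h
    push_cast
    rw [← h_neighbours]
    exact eq_sub_of_add_eq' (eq_sub_iff_add_eq.1 h)
  have h_pair := specializeBracket_add_eq_zero ρ hk h_neighbours hρu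
  rw [sum_fin_five_rotate _ i, specializeBracket_of_notMem ρ hi, specializeBracket_of_notMem ρ hi',
    h_opposite, specializeBracket_of_mem ρ (1 - u).2, Subtype.coe_eta, map_sub, map_one, hρu,
    sub_self, bracket_zero, zero_add, zero_add, add_zero, h_pair]

lemma isDilogarithm_specializeBracket (hk : 4 ≤ ENat.card k) :
    IsDilogarithm (specializeBracket A ρ) where
  apply_zero := by
    rw [specializeBracket_of_mem ρ (zero_mem A)]
    exact (congrArg bracket (map_zero ρ)).trans bracket_zero
  apply_one_sub f := by
    by_cases hf : f ∈ A
    · rw [specializeBracket_of_mem ρ hf, specializeBracket_of_mem ρ (one_sub_mem_iff.2 hf),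
        ← bracket_one_sub hk, ← map_one ρ, ← map_sub]
      rfl
    · rw [specializeBracket_of_notMem ρ hf, neg_zero,
        specializeBracket_of_notMem ρ (one_sub_mem_iff.not.2 hf)]
  sum_pentagram z hz _ := by
    by_cases h_pole : ∃ i, z i ∉ A
    · obtain ⟨i, hi, hi'⟩ := hz.exists_adjacent_notMem h_pole
      exact hz.sum_specializeBracket_of_notMem ρ hk hi hi'
    · push Not at h_pole
      simp only [fun i => specializeBracket_of_mem ρ (h_pole i)]
      refine (isDilogarithm_bracket hk).sum_eq_zero fun i => ?_
      rw [← map_mul, ← map_one ρ, ← map_sub]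
      exact congrArg ρ (Subtype.ext (hz i))

end Specialization

section RatFunc

open Polynomial
open scoped RatFunc

variable {k : Type*} [Field k] (c : k)

/-- The valuation ring of the rational functions without a pole at `c`. -/
def regularAt : ValuationSubring k⟮X⟯ where
  carrier := {f | f.denom.eval c ≠ 0}
  one_mem' := by simp
  zero_mem' := by simp
  mul_mem' {f g} hf hg h := by
    have := eval_eq_zero_of_dvd_of_eval_eq_zero (RatFunc.denom_mul_dvd f g) h
    simp_all
  add_mem' {f g} hf hg h := by
    have := eval_eq_zero_of_dvd_of_eval_eq_zero (RatFunc.denom_add_dvd f g) h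
    simp_all
  neg_mem' {f} hf h := by
    have h_dvd : (-f).denom ∣ f.denom :=
      (RatFunc.denom_dvd f.denom_ne_zero).2 ⟨-f.num, by rw [map_neg, neg_div, f.num_div_denom]⟩
    exact hf (eval_eq_zero_of_dvd_of_eval_eq_zero h_dvd h)
  mem_or_inv_mem' f := by
    rcases eq_or_ne f 0 with rfl | hf
    · simp
    refine or_iff_not_imp_left.2 fun h_denom h_inv => ?_
    have h_num : f.num.eval c = 0 :=
      eval_eq_zero_of_dvd_of_eval_eq_zero (RatFunc.denom_inv_dvd hf) h_inv
    exact f.isCoprime_num_denom.map (evalRingHom c) |>.ne_zero_or_ne_zero.elim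
      (fun h => h h_num) (fun h => h (not_not.1 h_denom))

/-- Evaluation at `c`. -/
noncomputable def evalAt : regularAt c →+* k where
  toFun f := f.1.eval (RingHom.id k) c
  map_one' := by simp
  map_zero' := by simp
  map_mul' f g := RatFunc.eval_mul _ _ f.2 g.2
  map_add' f g := RatFunc.eval_add _ _ f.2 g.2

instance : IsLocalHom (evalAt c) where
  map_nonunit f hf := by
    have h_num : f.1.num.eval c ≠ 0 := fun h => hf.ne_zero (by simp [evalAt, RatFunc.eval, h])
    have hf0 : f.1 ≠ 0 := fun h0 => h_num (by simp [h0])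
    have h_inv : f.1⁻¹ ∈ regularAt c := fun h =>
      h_num (eval_eq_zero_of_dvd_of_eval_eq_zero (RatFunc.denom_inv_dvd hf0) h)
    exact IsUnit.of_mul_eq_one ⟨f.1⁻¹, h_inv⟩ (Subtype.ext (mul_inv_cancel₀ hf0))

/-- `s` is the specialization homomorphism `[f] ↦ [f(c)]`; its values on the brackets of polynomials
are all that is ever used. -/
def IsEvaluation (c : k) (s : PreBlochQ k⟮X⟯ →ₗ[ℚ] PreBlochQ k) : Prop :=
  ∀ p : k[X], s (bracket (algebraMap k[X] k⟮X⟯ p)) = bracket (p.eval c)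

lemma exists_evaluation (hk : 4 ≤ ENat.card k) (c : k) :
    ∃ s : PreBlochQ k⟮X⟯ →ₗ[ℚ] PreBlochQ k, IsEvaluation c s := by
  have h_mem (p : k[X]) : (algebraMap k[X] k⟮X⟯ p).denom.eval c ≠ 0 := by simp
  refine ⟨(isDilogarithm_specializeBracket (evalAt c) hk).lift, fun p => ?_⟩
  rw [IsDilogarithm.lift_bracket, specializeBracket_of_mem _ (h_mem p)]
  simp [evalAt, RatFunc.eval_algebraMap, eval₂_id]

end RatFunc

section BlochWigner

variable {K : Type*} [Field K]

/-- The rationalized multiplicative group of `K`, written additively. -/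
abbrev UnitsQ (K : Type*) [Field K] : Type _ := ℚ ⊗[ℤ] Additive Kˣ

open Classical in
/-- The class of `x` in the rationalized multiplicative group, with the value `0` at `x = 0`. -/
noncomputable def logQ (x : K) : UnitsQ K :=
  if h : x ≠ 0 then 1 ⊗ₜ Additive.ofMul (Units.mk0 x h) else 0

lemma logQ_of_ne_zero {x : K} (hx : x ≠ 0) : logQ x = 1 ⊗ₜ Additive.ofMul (Units.mk0 x hx) := by
  rw [logQ, dif_pos hx]

@[simp] lemma logQ_zero : logQ (0 : K) = 0 := by simp [logQ]

lemma logQ_mul {x y : K} (hx : x ≠ 0) (hy : y ≠ 0) : logQ (x * y) = logQ x + logQ y := by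
  rw [logQ_of_ne_zero hx, logQ_of_ne_zero hy, logQ_of_ne_zero (mul_ne_zero hx hy),
    ← TensorProduct.tmul_add, ← ofMul_mul, Units.mk0_mul]

@[simp] lemma logQ_one : logQ (1 : K) = 0 := by
  simpa using logQ_mul (one_ne_zero (α := K)) one_ne_zero

lemma logQ_pow (x : K) (n : ℕ) : logQ (x ^ n) = n • logQ x := by
  rcases eq_or_ne x 0 with rfl | hx
  · rcases eq_or_ne n 0 with rfl | hn <;> simp [*]
  induction n with
  | zero => simp
  | succ n ih => rw [pow_succ, logQ_mul (pow_ne_zero n hx) hx, ih, succ_nsmul]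

lemma logQ_prod {ι : Type*} (s : Finset ι) (f : ι → K) (hf : ∀ i ∈ s, f i ≠ 0) :
    logQ (∏ i ∈ s, f i) = ∑ i ∈ s, logQ (f i) := by
  classical
  induction s using Finset.induction_on with
  | empty => simp
  | insert i s hi ih =>
    rw [Finset.forall_mem_insert] at hf
    rw [Finset.prod_insert hi, Finset.sum_insert hi,
      logQ_mul hf.1 (Finset.prod_ne_zero_iff.2 hf.2), ih hf.2]

lemma logQ_eq_zero_of_pow_eq_one {x : K} {n : ℕ} (hn : n ≠ 0) (hx : x ^ n = 1) : logQ x = 0 := by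
  have h : (n : ℚ) • logQ x = 0 := by rw [Nat.cast_smul_eq_nsmul, ← logQ_pow, hx, logQ_one]
  exact (smul_eq_zero.1 h).resolve_left (Nat.cast_ne_zero.2 hn)

@[simp] lemma logQ_neg (x : K) : logQ (-x) = logQ x := by
  rcases eq_or_ne x 0 with rfl | hx
  · simp
  · rw [neg_eq_neg_one_mul, logQ_mul (by simp) hx,
      logQ_eq_zero_of_pow_eq_one two_ne_zero neg_one_sq, zero_add]

lemma logQ_div {x y : K} (hx : x ≠ 0) (hy : y ≠ 0) : logQ (x / y) = logQ x - logQ y := by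
  rw [eq_sub_iff_add_eq, ← logQ_mul (div_ne_zero hx hy) hy, div_mul_cancel₀ _ hy]

variable {V : Type*} [AddCommGroup V] [Module ℚ V]

lemma exists_lift_logQ (t : K → V) (ht : ∀ x y, x ≠ 0 → y ≠ 0 → t (x * y) = t x + t y) :
    ∃ T : UnitsQ K →ₗ[ℚ] V, ∀ x, x ≠ 0 → T (logQ x) = t x := by
  let onUnits : Additive Kˣ →+ V :=
    AddMonoidHom.mk' (fun x => t (x.toMul : K)) fun x y => ht _ _ x.toMul.ne_zero y.toMul.ne_zero
  refine ⟨LinearMap.liftBaseChange ℚ onUnits.toIntLinearMap, fun x hx => ?_⟩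
  simp [logQ_of_ne_zero hx, onUnits]

lemma isDilogarithm_wedge : IsDilogarithm fun x : K =>
    logQ (1 - x) ⊗ₜ[ℚ] logQ x - logQ x ⊗ₜ[ℚ] logQ (1 - x) where
  apply_zero := by simp
  apply_one_sub x := by rw [sub_sub_cancel, neg_sub]
  sum_pentagram z hz h_ne := by
    have h_log (i) : logQ (1 - z i) = logQ (z (i + 4)) + logQ (z (i + 1)) := by
      rw [hz.one_sub, logQ_mul (h_ne _) (h_ne _)]
    simp only [h_log, TensorProduct.add_tmul, TensorProduct.tmul_add, Fin.sum_univ_five,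
      Fin.reduceAdd]
    abel

/-- The Bloch–Wigner map `[x] ↦ (1 - x) ∧ x`, where `u ∧ v` is encoded as `u ⊗ v - v ⊗ u`. -/
noncomputable def blochWigner : PreBlochQ K →ₗ[ℚ] UnitsQ K ⊗[ℚ] UnitsQ K :=
  isDilogarithm_wedge.lift

@[simp] lemma blochWigner_bracket (x : K) :
    blochWigner (bracket x) = logQ (1 - x) ⊗ₜ logQ x - logQ x ⊗ₜ logQ (1 - x) :=
  isDilogarithm_wedge.lift_bracket x

end BlochWigner

section SymBracket

variable {L : Type*} [Field L]

lemma bracket_neg_mul_div_mul (hL : 4 ≤ ENat.card L) {a₁ a₂ b₁ b₂ c f p u v : L} (ha₁ : a₁ ≠ 0)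
    (ha₂ : a₂ ≠ 0) (hb₁ : b₁ ≠ 0) (hb₂ : b₂ ≠ 0) (hf : f ≠ 0) (hv : v ≠ 0)
    (h_sum : a₁ * a₂ + b₁ * b₂ + f * c = 0) (hp : a₁ * u + b₁ * v = f * p) :
    bracket (-(a₁ * a₂) / (b₁ * b₂)) = bracket (-(a₁ * u) / (b₁ * v)) - bracket (b₂ * u / (a₂ * v))
      + bracket (-(c * u) / (a₂ * p)) - bracket (-(c * v) / (b₂ * p)) := by
  rcases eq_or_ne p 0 with rfl | hp0
  · rw [show -(a₁ * u) / (b₁ * v) = 1 by grind,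
      show b₂ * u / (a₂ * v) = (-(a₁ * a₂) / (b₁ * b₂))⁻¹ by grind, bracket_inv hL]
    simp
  have hy : -(a₁ * u) / (b₁ * v) ≠ 1 := by grind
  have h_div : -(a₁ * u) / (b₁ * v) / (-(a₁ * a₂) / (b₁ * b₂)) = b₂ * u / (a₂ * v) := by
    field_simp
  have h_one_sub_x : 1 - -(a₁ * a₂) / (b₁ * b₂) = -(f * c) / (b₁ * b₂) := by
    rw [← eq_neg_of_add_eq_zero_left h_sum]; field_simp; ring
  have h_one_sub_y : 1 - -(a₁ * u) / (b₁ * v) = f * p / (b₁ * v) := by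
    rw [← hp]; field_simp; ring
  have h_one_sub : -(f * c) / (b₁ * b₂) / (f * p / (b₁ * v)) = -(c * v) / (b₂ * p) := by
    field_simp
  have h_mul : -(c * v) / (b₂ * p) * (b₂ * u / (a₂ * v)) = -(c * u) / (a₂ * p) := by
    field_simp
  have h_five := (isDilogarithm_bracket hL).fiveTerm (x := -(a₁ * a₂) / (b₁ * b₂)) (by simp [*]) hy
  rw [h_div, h_one_sub_x, h_one_sub_y, h_one_sub, h_mul] at h_five
  linear_combination (norm := module) h_five

variable {R : Type*} [CommRing R] [Algebra R L]

variable (L) in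
/-- The bracket `[-a/b]`, viewed as a function of the triple `a + b + c = 0`. In this form the
six-fold symmetry of the bracket says that it is an alternating function of `(a, b, c)`. -/
noncomputable def symBracket (a b : R) : PreBlochQ L :=
  bracket (-algebraMap R L a / algebraMap R L b)

@[simp] lemma symBracket_zero_left (b : R) : symBracket L 0 b = 0 := by simp [symBracket]

@[simp] lemma symBracket_zero_right (a : R) : symBracket L a 0 = 0 := by simp [symBracket]

lemma symBracket_of_add_eq_zero {a b : R} (h : a + b = 0) : symBracket L a b = 0 := by
  rw [symBracket, eq_neg_of_add_eq_zero_left h, map_neg, neg_neg]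
  rcases eq_or_ne (algebraMap R L b) 0 with hb | hb <;> simp [hb]

lemma symBracket_swap (hL : 4 ≤ ENat.card L) (a b : R) : symBracket L b a = -symBracket L a b := by
  rw [symBracket, symBracket, ← bracket_inv hL, inv_div, div_neg, neg_div]

lemma symBracket_rotate (hL : 4 ≤ ENat.card L) {a b c : R} (h : a + b + c = 0) :
    symBracket L b c = symBracket L a b := by
  have h_map : algebraMap R L a + algebraMap R L b + algebraMap R L c = 0 := by simp [← map_add, h]
  rcases eq_or_ne (algebraMap R L b) 0 with hb | hb
  · simp [symBracket, hb]
  · rw [symBracket, symBracket, ← neg_neg (bracket (-algebraMap R L a / _)), ← bracket_one_sub hL,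
      ← bracket_inv hL]
    congr 1
    grind

variable [FaithfulSMul R L]

lemma symBracket_mul_left {f : R} (hf : f ≠ 0) (a b : R) :
    symBracket L (f * a) (f * b) = symBracket L a b := by
  have hf' : algebraMap R L f ≠ 0 := by simpa using hf
  rw [symBracket, symBracket, map_mul, map_mul, ← mul_neg, mul_div_mul_left _ _ hf']

/-- The five-term relation for a triple of products. Among the triples on the right-hand side, the
first two have third entries `-f * p` and (when `b₂ * u - a₂ * v = f * q`) `f * q`, while the last
two have third entries `b₁ * q` and `-a₁ * q`. -/
lemma symBracket_mul_mul (hL : 4 ≤ ENat.card L) {a₁ a₂ b₁ b₂ c f p u v : R} (ha₁ : a₁ ≠ 0)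
    (ha₂ : a₂ ≠ 0) (hb₁ : b₁ ≠ 0) (hb₂ : b₂ ≠ 0) (hf : f ≠ 0) (hv : v ≠ 0)
    (h_sum : a₁ * a₂ + b₁ * b₂ + f * c = 0) (hp : a₁ * u + b₁ * v = f * p) :
    symBracket L (a₁ * a₂) (b₁ * b₂) = symBracket L (a₁ * u) (b₁ * v)
      - symBracket L (-(b₂ * u)) (a₂ * v) + symBracket L (c * u) (a₂ * p)
      - symBracket L (c * v) (b₂ * p) := by
  have h_inj := FaithfulSMul.algebraMap_injective R L
  have h_sum' := congrArg (algebraMap R L) h_sum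
  have hp' := congrArg (algebraMap R L) hp
  rw [← map_ne_zero_iff _ h_inj] at ha₁ ha₂ hb₁ hb₂ hf hv
  simp only [map_add, map_mul, map_zero] at h_sum' hp'
  simpa only [symBracket, map_mul, map_neg, neg_neg] using
    bracket_neg_mul_div_mul hL ha₁ ha₂ hb₁ hb₂ hf hv h_sum' hp'

variable {V : Type*} [AddCommGroup V] [Module ℚ V]

lemma lift_blochWigner_symBracket (B : UnitsQ L →ₗ[ℚ] UnitsQ L →ₗ[ℚ] V) {a b c : R} (ha : a ≠ 0)
    (hb : b ≠ 0) (hc : c ≠ 0) (h : a + b + c = 0) :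
    TensorProduct.lift B (blochWigner (symBracket L a b)) =
      B (logQ (algebraMap R L a)) (logQ (algebraMap R L b))
        - B (logQ (algebraMap R L b)) (logQ (algebraMap R L a))
        + B (logQ (algebraMap R L b)) (logQ (algebraMap R L c))
        - B (logQ (algebraMap R L c)) (logQ (algebraMap R L b))
        + B (logQ (algebraMap R L c)) (logQ (algebraMap R L a))
        - B (logQ (algebraMap R L a)) (logQ (algebraMap R L c)) := by
  have h_map : algebraMap R L a + algebraMap R L b + algebraMap R L c = 0 := by simp [← map_add, h]
  rw [← map_ne_zero_iff _ (FaithfulSMul.algebraMap_injective R L)] at ha hb hc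
  rw [symBracket, blochWigner_bracket,
    show 1 - -algebraMap R L a / algebraMap R L b = -algebraMap R L c / algebraMap R L b by grind,
    logQ_div (neg_ne_zero.2 hc) hb, logQ_div (neg_ne_zero.2 ha) hb, logQ_neg, logQ_neg]
  simp only [map_sub, TensorProduct.lift.tmul, LinearMap.sub_apply]
  abel

end SymBracket

section Cocycle

variable {V E : Type*} [AddCommGroup V] [CommGroup E]

/-- Normalized symmetric 2-cocycles of `E` with values in `V`, for the trivial action. -/
structure IsSymmCocycle (G : E → E → V) : Prop where
  symm (a b : E) : G a b = G b a
  one_left (a : E) : G 1 a = 0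
  assoc (a b c : E) : G a b + G (a * b) c = G b c + G a (b * c)

/-- The abelian extension of `E` by `V` defined by a symmetric 2-cocycle `G`: the set `V × E` with
`(v, a) + (w, b) = (v + w + G a b, a * b)`. -/
@[ext]
structure CocycleExtension (G : E → E → V) where
  fiber : V
  base : E

namespace CocycleExtension

variable {G : E → E → V}

instance : Add (CocycleExtension G) :=
  ⟨fun x y => ⟨x.fiber + y.fiber + G x.base y.base, x.base * y.base⟩⟩

instance : Zero (CocycleExtension G) := ⟨⟨0, 1⟩⟩

instance : Neg (CocycleExtension G) := ⟨fun x => ⟨-x.fiber - G x.base⁻¹ x.base, x.base⁻¹⟩⟩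

lemma add_def (x y : CocycleExtension G) :
    x + y = ⟨x.fiber + y.fiber + G x.base y.base, x.base * y.base⟩ := rfl

lemma zero_def : (0 : CocycleExtension G) = ⟨0, 1⟩ := rfl

lemma neg_def (x : CocycleExtension G) : -x = ⟨-x.fiber - G x.base⁻¹ x.base, x.base⁻¹⟩ := rfl

/-- The group structure of the extension. It cannot be an instance, since it depends on the cocycle
identities. -/
abbrev addCommGroup (hG : IsSymmCocycle G) : AddCommGroup (CocycleExtension G) :=
  { AddGroup.ofLeftAxioms
      (fun x y z => by
        simp only [add_def, mk.injEq, mul_assoc, and_true]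
        linear_combination (norm := abel) hG.assoc x.base y.base z.base)
      (fun x => by simp [add_def, zero_def, hG.one_left])
      (fun x => by
        simp only [add_def, zero_def, neg_def, inv_mul_cancel, mk.injEq, and_true]
        abel) with
    add_comm := fun x y => by
      simp only [add_def, hG.symm x.base, add_comm x.fiber, mul_comm x.base] }

end CocycleExtension

lemma IsSymmCocycle.exists_eq_coboundary [Module ℚ V] {G : E → E → V} (hG : IsSymmCocycle G) :
    ∃ θ : E → V, ∀ a b, G a b = θ a + θ b - θ (a * b) := by
  let _ := CocycleExtension.addCommGroup hG
  let inclusion : V →+ CocycleExtension G := AddMonoidHom.mk' (fun v => ⟨v, 1⟩) fun v w => by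
    simp [CocycleExtension.add_def, hG.one_left]
  have h_inj : Function.Injective inclusion := fun v w h => congrArg CocycleExtension.fiber h
  let _ : DivisibleBy V ℤ :=
    { div := fun v n => (n : ℚ)⁻¹ • v
      div_zero := fun v => by simp
      div_cancel := fun {n} v hn => by
        rw [← Int.cast_smul_eq_zsmul ℚ, smul_inv_smul₀ (Int.cast_ne_zero.2 hn)] }
  obtain ⟨retraction, h_retraction⟩ :=
    (Module.Baer.of_divisible V).extension_property_addMonoidHom inclusion h_inj (AddMonoidHom.id V)
  refine ⟨fun a => retraction ⟨0, a⟩, fun a b => ?_⟩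
  have h_add : (⟨0, a⟩ : CocycleExtension G) + ⟨0, b⟩ = inclusion (G a b) + ⟨0, a * b⟩ := by
    simp [CocycleExtension.add_def, inclusion, hG.one_left]
  rw [← map_add, h_add, map_add, add_sub_cancel_right]
  exact (DFunLike.congr_fun h_retraction (G a b)).symm

end Cocycle

section UnitsQ

open Polynomial UniqueFactorizationMonoid
open scoped RatFunc

variable {k : Type*} [Field k]

lemma logQ_algebraMap_mul {p q : k[X]} (hp : p ≠ 0) (hq : q ≠ 0) :
    logQ (algebraMap _ k⟮X⟯ (p * q)) = logQ (algebraMap _ k⟮X⟯ p) + logQ (algebraMap _ k⟮X⟯ q) := by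
  rw [map_mul, logQ_mul (RatFunc.algebraMap_ne_zero hp) (RatFunc.algebraMap_ne_zero hq)]

variable {V : Type*} [AddCommGroup V] [Module ℚ V]

open Classical in
lemma exists_unitsQ_hom (c : UnitsQ k →ₗ[ℚ] V) (val : k[X] → V) :
    ∃ T : UnitsQ k⟮X⟯ →ₗ[ℚ] V, (∀ a : k, T (logQ (algebraMap k[X] k⟮X⟯ (C a))) = c (logQ a)) ∧
      ∀ π : k[X], π.Monic → Irreducible π → T (logQ (algebraMap k[X] k⟮X⟯ π)) = val π := by
  let onPoly (p : k[X]) : V := c (logQ p.leadingCoeff) + ((normalizedFactors p).map val).sum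
  have onPoly_mul {p q : k[X]} (hp : p ≠ 0) (hq : q ≠ 0) :
      onPoly (p * q) = onPoly p + onPoly q := by
    simp only [onPoly, leadingCoeff_mul, normalizedFactors_mul hp hq, Multiset.map_add,
      Multiset.sum_add, logQ_mul (leadingCoeff_ne_zero.2 hp) (leadingCoeff_ne_zero.2 hq), map_add]
    abel
  let onFunc (f : k⟮X⟯) : V := onPoly f.num - onPoly f.denom
  have onFunc_mul (f g : k⟮X⟯) (hf : f ≠ 0) (hg : g ≠ 0) :
      onFunc (f * g) = onFunc f + onFunc g := by
    have h := congrArg onPoly (RatFunc.num_denom_mul f g)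
    have hnf := RatFunc.num_ne_zero hf
    have hng := RatFunc.num_ne_zero hg
    have hnfg := RatFunc.num_ne_zero (mul_ne_zero hf hg)
    rw [onPoly_mul hnfg (mul_ne_zero f.denom_ne_zero g.denom_ne_zero),
      onPoly_mul f.denom_ne_zero g.denom_ne_zero,
      onPoly_mul (mul_ne_zero hnf hng) (f * g).denom_ne_zero, onPoly_mul hnf hng] at h
    simp only [onFunc]
    linear_combination (norm := abel) h
  obtain ⟨T, hT⟩ := exists_lift_logQ onFunc onFunc_mul
  have hT_poly {p : k[X]} (hp : p ≠ 0) : T (logQ (algebraMap k[X] k⟮X⟯ p)) = onPoly p := by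
    rw [hT _ (RatFunc.algebraMap_ne_zero hp)]
    simp [onFunc, onPoly]
  refine ⟨T, fun a => ?_, fun π h_monic h_irr => ?_⟩
  · rcases eq_or_ne a 0 with rfl | ha
    · simp
    · rw [hT_poly (C_ne_zero.2 ha)]
      simp [onPoly, normalizedFactors_of_isUnit (isUnit_C.2 ha.isUnit)]
  · rw [hT_poly h_irr.ne_zero]
    simp [onPoly, normalizedFactors_irreducible h_irr, h_monic.normalize_eq_self,
      h_monic.leadingCoeff]

lemma unitsQ_hom_eq_of_natDegree_le {d : ℕ} {T : UnitsQ k⟮X⟯ →ₗ[ℚ] V} {τ : k[X] → V}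
    (h_mul : ∀ p q, p ≠ 0 → q ≠ 0 → (p * q).natDegree ≤ d → τ (p * q) = τ p + τ q)
    (h_const : ∀ a : k, a ≠ 0 → T (logQ (algebraMap k[X] k⟮X⟯ (C a))) = τ (C a))
    (h_irr : ∀ π : k[X], π.Monic → Irreducible π → π.natDegree ≤ d →
      T (logQ (algebraMap k[X] k⟮X⟯ π)) = τ π)
    {p : k[X]} (hp : p ≠ 0) (hpd : p.natDegree ≤ d) :
    T (logQ (algebraMap k[X] k⟮X⟯ p)) = τ p := by
  induction hn : p.natDegree using Nat.strong_induction_on generalizing p with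
  | _ n ih =>
    by_cases h_unit : IsUnit p
    · obtain ⟨a, ha, rfl⟩ := isUnit_iff.1 h_unit
      exact h_const a ha.ne_zero
    obtain ⟨π, hπ_monic, hπ, q, rfl⟩ := exists_monic_irreducible_factor p h_unit
    obtain ⟨hπ0, hq⟩ := mul_ne_zero_iff.1 hp
    have h_deg := natDegree_mul hπ0 hq
    have hπ_pos := hπ.natDegree_pos
    rw [logQ_algebraMap_mul hπ0 hq, map_add, h_irr π hπ_monic hπ (by omega),
      ih _ (by omega) hq (by omega) rfl, h_mul π q hπ0 hq hpd]

lemma unitsQ_hom_eq_zero_of_natDegree_le {d : ℕ} {T : UnitsQ k⟮X⟯ →ₗ[ℚ] V}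
    (h_const : ∀ a : k, T (logQ (algebraMap k[X] k⟮X⟯ (C a))) = 0)
    (h_irr : ∀ π : k[X], π.Monic → Irreducible π → π.natDegree ≤ d →
      T (logQ (algebraMap k[X] k⟮X⟯ π)) = 0)
    {p : k[X]} (hpd : p.natDegree ≤ d) : T (logQ (algebraMap k[X] k⟮X⟯ p)) = 0 := by
  rcases eq_or_ne p 0 with rfl | hp
  · simp
  · exact unitsQ_hom_eq_of_natDegree_le (τ := 0) (by simp) (by simpa using fun a _ => h_const a)
      h_irr hp hpd

end UnitsQ

section LevelSpan

open Polynomial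
open scoped RatFunc

variable {k : Type*} [Field k]

/-- `p` is a product of two polynomials of degree at most `d + 1`, of which at most `n` have degree
`d + 1`. The truncated difference `natDegree p₁ - d` is `1` if `p₁` has degree `d + 1` and `0` if
its degree is smaller. -/
def TwoFactors (d n : ℕ) (p : k[X]) : Prop :=
  ∃ p₁ p₂ : k[X], p₁.natDegree ≤ d + 1 ∧ p₂.natDegree ≤ d + 1 ∧
    (p₁.natDegree - d) + (p₂.natDegree - d) ≤ n ∧ p₁ * p₂ = p

lemma twoFactors_mul {d n : ℕ} {p q : k[X]} (hp : p.natDegree ≤ d + 1) (hq : q.natDegree ≤ d + 1)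
    (h : (p.natDegree - d) + (q.natDegree - d) ≤ n) : TwoFactors d n (p * q) :=
  ⟨p, q, hp, hq, h, rfl⟩

lemma twoFactors_zero_mul {d : ℕ} {p q : k[X]} (hp : p.natDegree ≤ d) (hq : q.natDegree ≤ d) :
    TwoFactors d 0 (p * q) :=
  twoFactors_mul (by omega) (by omega) (by omega)

lemma twoFactors_zero_of_natDegree_le {d : ℕ} {p : k[X]} (hp : p.natDegree ≤ d) :
    TwoFactors d 0 p := by
  simpa using twoFactors_zero_mul (q := 1) hp (by simp)

lemma TwoFactors.neg {d n : ℕ} {p : k[X]} (h : TwoFactors d n p) : TwoFactors d n (-p) := by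
  obtain ⟨p₁, p₂, h₁, h₂, hn, rfl⟩ := h
  exact ⟨-p₁, p₂, by simpa, h₂, by simpa, neg_mul p₁ p₂⟩

variable (k) in
/-- The `d`-th step of the filtration of `ℚ ⊗ P(k(X))`: the span of the brackets `[-a/b]` where
each of `a`, `b` and `c = -a - b` is a product of two polynomials of degree at most `d`. -/
def levelSpan (d : ℕ) : Submodule ℚ (PreBlochQ k⟮X⟯) :=
  Submodule.span ℚ {z | ∃ a b c : k[X], a + b + c = 0 ∧ TwoFactors d 0 a ∧ TwoFactors d 0 b ∧
    TwoFactors d 0 c ∧ symBracket k⟮X⟯ a b = z}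

lemma symBracket_mem_levelSpan {d : ℕ} {a b c : k[X]} (h : a + b + c = 0) (ha : TwoFactors d 0 a)
    (hb : TwoFactors d 0 b) (hc : TwoFactors d 0 c) : symBracket k⟮X⟯ a b ∈ levelSpan k d :=
  Submodule.subset_span ⟨a, b, c, h, ha, hb, hc, rfl⟩

lemma four_le_card_ratFunc (k : Type*) [Field k] : 4 ≤ ENat.card k⟮X⟯ := by
  have : Infinite k⟮X⟯ := Infinite.of_injective _ (RatFunc.algebraMap_injective k)
  simp

end LevelSpan

section ResidueLog

open Polynomial
open scoped RatFunc

variable {k : Type*} [Field k] {d : ℕ}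

/-- The monic irreducible polynomials of degree `d + 1`, which are the primes that enter the
filtration between the levels `d` and `d + 1`. -/
structure IsTopPrime (d : ℕ) (π : k[X]) : Prop where
  monic : π.Monic
  irreducible : Irreducible π
  natDegree_eq : π.natDegree = d + 1

/-- The nonzero polynomials of degree at most `d`. These represent the units modulo a polynomial of
`IsTopPrime d`. -/
structure IsSmall (d : ℕ) (p : k[X]) : Prop where
  ne_zero : p ≠ 0
  natDegree_le : p.natDegree ≤ d

lemma IsSmall.neg {p : k[X]} (hp : IsSmall d p) : IsSmall d (-p) :=
  ⟨neg_ne_zero.2 hp.ne_zero, by simpa using hp.natDegree_le⟩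

lemma isSmall_one : IsSmall d (1 : k[X]) := ⟨one_ne_zero, by simp⟩

lemma natDegree_right_le {p q : k[X]} {m : ℕ} (hp : p ≠ 0)
    (h : (p * q).natDegree ≤ p.natDegree + m) : q.natDegree ≤ m := by
  rcases eq_or_ne q 0 with rfl | hq
  · simp
  · rw [natDegree_mul hp hq] at h
    omega

namespace IsTopPrime

variable {π : k[X]}

lemma not_dvd (hπ : IsTopPrime d π) {p : k[X]} (hp : IsSmall d p) : ¬π ∣ p :=
  hπ.monic.not_dvd_of_natDegree_lt hp.ne_zero <| by
    have := hπ.natDegree_eq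
    have := hp.natDegree_le
    omega

lemma exists_eq_mul_of_dvd_sub (hπ : IsTopPrime d π) {a b c e : k[X]} (ha : IsSmall d a)
    (hb : IsSmall d b) (hc : IsSmall d c) (he : IsSmall d e) (h : π ∣ a * b - c * e) :
    ∃ q, q.natDegree ≤ d ∧ a * b - c * e = π * q := by
  obtain ⟨q, hq⟩ := h
  refine ⟨q, natDegree_right_le hπ.monic.ne_zero ?_, hq⟩
  rw [← hq, hπ.natDegree_eq]
  refine (natDegree_sub_le_of_le (natDegree_mul_le_of_le ha.natDegree_le hb.natDegree_le)
    (natDegree_mul_le_of_le hc.natDegree_le he.natDegree_le)).trans ?_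
  omega

lemma residue_relation (hπ : IsTopPrime d π) {a₁ a₂ b₁ b₂ u v : k[X]} (ha₁ : IsSmall d a₁)
    (ha₂ : IsSmall d a₂) (hb₁ : IsSmall d b₁) (hb₂ : IsSmall d b₂) (hu : IsSmall d u)
    (hv : IsSmall d v) (hab : π ∣ a₁ * a₂ - b₁ * b₂) (huv : π ∣ a₁ * u - b₁ * v) :
    symBracket k⟮X⟯ (a₁ * a₂) (-(b₁ * b₂)) - symBracket k⟮X⟯ (a₁ * u) (-(b₁ * v))
      + symBracket k⟮X⟯ (b₂ * u) (-(a₂ * v)) ∈ levelSpan k d := by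
  obtain ⟨c, hc_deg, hc⟩ := hπ.exists_eq_mul_of_dvd_sub ha₁ ha₂ hb₁ hb₂ hab
  obtain ⟨p, hp_deg, hp⟩ := hπ.exists_eq_mul_of_dvd_sub ha₁ hu hb₁ hv huv
  have h_dvd : π ∣ b₂ * u - a₂ * v := by
    refine (hπ.irreducible.prime.dvd_or_dvd ?_).resolve_left (hπ.not_dvd hb₁)
    exact ⟨a₂ * p - c * u, by linear_combination a₂ * hp - u * hc⟩
  obtain ⟨q, hq_deg, hq⟩ := hπ.exists_eq_mul_of_dvd_sub hb₂ hu ha₂ hv h_dvd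
  have h_sum_u : -c * u + a₂ * p + -b₁ * q = 0 := by
    refine mul_left_cancel₀ hπ.monic.ne_zero ?_
    linear_combination u * hc - a₂ * hp + b₁ * hq
  have h_sum_v : c * v + -b₂ * p + a₁ * q = 0 := by
    refine mul_left_cancel₀ hπ.monic.ne_zero ?_
    linear_combination b₂ * hp - v * hc - a₁ * hq
  have h_mem_u := symBracket_mem_levelSpan h_sum_u
    (twoFactors_zero_mul (by simpa using hc_deg) hu.natDegree_le)
    (twoFactors_zero_mul ha₂.natDegree_le hp_deg)
    (twoFactors_zero_mul hb₁.neg.natDegree_le hq_deg)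
  have h_mem_v := symBracket_mem_levelSpan h_sum_v (twoFactors_zero_mul hc_deg hv.natDegree_le)
    (twoFactors_zero_mul hb₂.neg.natDegree_le hp_deg)
    (twoFactors_zero_mul ha₁.natDegree_le hq_deg)
  have h_five := symBracket_mul_mul (four_le_card_ratFunc k) (a₁ := a₁) (b₁ := b₁) (b₂ := -b₂)
    (c := -c) (f := π) (p := p) (u := u) (v := -v) ha₁.ne_zero ha₂.ne_zero hb₁.ne_zero
    hb₂.neg.ne_zero hπ.monic.ne_zero hv.neg.ne_zero (by linear_combination hc)
    (by linear_combination hp)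
  simp only [mul_neg, neg_mul, neg_neg] at h_five h_mem_u h_mem_v
  rw [h_five]
  convert sub_mem h_mem_u h_mem_v using 1
  abel

/-- The representative of degree at most `d` of a unit modulo `π`. -/
noncomputable def rep (hπ : IsTopPrime d π) (α : (AdjoinRoot π)ˣ) : k[X] :=
  AdjoinRoot.modByMonicHom hπ.monic α

lemma mk_rep (hπ : IsTopPrime d π) (α : (AdjoinRoot π)ˣ) : AdjoinRoot.mk π (hπ.rep α) = α :=
  AdjoinRoot.mk_leftInverse hπ.monic α

lemma isSmall_rep (hπ : IsTopPrime d π) (α : (AdjoinRoot π)ˣ) : IsSmall d (hπ.rep α) where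
  ne_zero h := by
    have := Fact.mk hπ.irreducible
    exact α.ne_zero (by rw [← hπ.mk_rep, h, map_zero])
  natDegree_le := by
    obtain ⟨p, hp⟩ := AdjoinRoot.mk_surjective (g := π) α
    rw [rep, ← hp, AdjoinRoot.modByMonicHom_mk]
    have h_lt := natDegree_modByMonic_lt p hπ.monic hπ.irreducible.ne_one
    have := hπ.natDegree_eq
    omega

lemma exists_rep_eq (hπ : IsTopPrime d π) {p : k[X]} (hp : IsSmall d p) :
    ∃ α, hπ.rep α = p := by
  have := Fact.mk hπ.irreducible
  have h_ne : AdjoinRoot.mk π p ≠ 0 := fun h => hπ.not_dvd hp (AdjoinRoot.mk_eq_zero.1 h)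
  refine ⟨Units.mk0 _ h_ne, ?_⟩
  rw [rep, Units.val_mk0, AdjoinRoot.modByMonicHom_mk, modByMonic_eq_self_iff hπ.monic]
  refine degree_lt_degree ?_
  have := hp.natDegree_le
  have := hπ.natDegree_eq
  omega

lemma dvd_rep_mul_sub_rep_mul (hπ : IsTopPrime d π) {α β γ δ : (AdjoinRoot π)ˣ} :
    π ∣ hπ.rep α * hπ.rep β - hπ.rep γ * hπ.rep δ ↔ α * β = γ * δ := by
  rw [← AdjoinRoot.mk_eq_mk, map_mul, map_mul, mk_rep, mk_rep, mk_rep, mk_rep, ← Units.val_mul,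
    ← Units.val_mul, Units.val_inj]

@[simp] lemma rep_one (hπ : IsTopPrime d π) : hπ.rep 1 = 1 := by
  obtain ⟨α, hα⟩ := hπ.exists_rep_eq isSmall_one
  have : α = 1 := by rw [← Units.val_eq_one, ← hπ.mk_rep, hα, map_one]
  rw [← this, hα]

/-- The class modulo `levelSpan k d` of the bracket of `a * b / (c * e)`, where `a`, `b`, `c`, `e`
are the small representatives of `α`, `β`, `γ`, `δ`. -/
noncomputable def residueBracket (hπ : IsTopPrime d π) (α β γ δ : (AdjoinRoot π)ˣ) :
    PreBlochQ k⟮X⟯ ⧸ levelSpan k d :=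
  (levelSpan k d).mkQ (symBracket k⟮X⟯ (hπ.rep α * hπ.rep β) (-(hπ.rep γ * hπ.rep δ)))

lemma residueBracket_relation (hπ : IsTopPrime d π) {α₁ α₂ β₁ β₂ μ ν : (AdjoinRoot π)ˣ}
    (h_αβ : α₁ * α₂ = β₁ * β₂) (h_μν : α₁ * μ = β₁ * ν) :
    hπ.residueBracket α₁ α₂ β₁ β₂ - hπ.residueBracket α₁ μ β₁ ν + hπ.residueBracket β₂ μ α₂ ν =
      0 := by
  simp only [residueBracket, ← map_sub, ← map_add]
  rw [Submodule.mkQ_apply, Submodule.Quotient.mk_eq_zero]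
  exact hπ.residue_relation (hπ.isSmall_rep _) (hπ.isSmall_rep _) (hπ.isSmall_rep _)
    (hπ.isSmall_rep _) (hπ.isSmall_rep _) (hπ.isSmall_rep _) (hπ.dvd_rep_mul_sub_rep_mul.2 h_αβ)
    (hπ.dvd_rep_mul_sub_rep_mul.2 h_μν)

lemma residueBracket_comm_left (hπ : IsTopPrime d π) (α β γ δ : (AdjoinRoot π)ˣ) :
    hπ.residueBracket α β γ δ = hπ.residueBracket β α γ δ := by
  rw [residueBracket, mul_comm (hπ.rep α), residueBracket]

lemma isSymmCocycle_residueBracket (hπ : IsTopPrime d π) :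
    IsSymmCocycle fun α β => hπ.residueBracket α β 1 (α * β) where
  symm α β := by rw [residueBracket_comm_left, mul_comm α]
  one_left α := by
    rw [residueBracket, one_mul, symBracket_of_add_eq_zero (add_neg_cancel _), map_zero]
  assoc α β γ := by
    have h_left := hπ.residueBracket_relation (α₁ := α) (α₂ := β) (β₁ := 1) (β₂ := α * β)
      (μ := β * γ) (ν := α * (β * γ)) (by group) (by group)
    have h_right := hπ.residueBracket_relation (α₁ := γ) (α₂ := β) (β₁ := 1) (β₂ := β * γ)
      (μ := α * β) (ν := α * (β * γ)) (by rw [one_mul, mul_comm])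
      (by rw [one_mul, mul_comm, mul_assoc])
    rw [hπ.residueBracket_comm_left (β * γ), hπ.residueBracket_comm_left γ,
      hπ.residueBracket_comm_left γ] at h_right
    rw [mul_assoc]
    linear_combination (norm := abel) h_left - h_right

lemma exists_residueLog (hπ : IsTopPrime d π) : ∃ τ : k[X] → PreBlochQ k⟮X⟯ ⧸ levelSpan k d,
    τ 1 = 0 ∧ ∀ a b c e, IsSmall d a → IsSmall d b → IsSmall d c → IsSmall d e →
      π ∣ a * b - c * e →
      (levelSpan k d).mkQ (symBracket k⟮X⟯ (a * b) (-(c * e))) = τ a + τ b - τ c - τ e := by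
  have h_cocycle := hπ.isSymmCocycle_residueBracket
  obtain ⟨θ, hθ⟩ := h_cocycle.exists_eq_coboundary
  have h_rep_inj : Function.Injective hπ.rep := fun α β h => by
    rw [← Units.val_inj, ← hπ.mk_rep, h, hπ.mk_rep]
  let τ := θ ∘ Function.invFun hπ.rep
  have hτ (α) : τ (hπ.rep α) = θ α := congrArg θ (Function.leftInverse_invFun h_rep_inj α)
  refine ⟨τ, ?_, fun a b c e ha hb hc he h => ?_⟩
  · have h_one := hθ 1 1
    rw [h_cocycle.one_left, mul_one, add_sub_cancel_right] at h_one
    rw [← hπ.rep_one, hτ, ← h_one]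
  obtain ⟨α, rfl⟩ := hπ.exists_rep_eq ha
  obtain ⟨β, rfl⟩ := hπ.exists_rep_eq hb
  obtain ⟨γ, rfl⟩ := hπ.exists_rep_eq hc
  obtain ⟨ε, rfl⟩ := hπ.exists_rep_eq he
  rw [hπ.dvd_rep_mul_sub_rep_mul] at h
  have h_ε : α * γ⁻¹ * β = ε := by rw [mul_right_comm, h, mul_comm γ, mul_inv_cancel_right]
  have h_rel := hπ.residueBracket_relation (α₁ := α * γ⁻¹) (α₂ := γ) (β₁ := 1) (β₂ := α) (μ := β)
    (ν := ε) (by group) (by rw [h_ε, one_mul])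
  have h_γ := hθ (α * γ⁻¹) γ
  have h_β := hθ (α * γ⁻¹) β
  rw [inv_mul_cancel_right] at h_γ
  rw [h_ε] at h_β
  rw [hτ, hτ, hτ, hτ]
  change hπ.residueBracket α β γ ε = _
  linear_combination (norm := abel) h_rel - h_γ + h_β

end IsTopPrime

end ResidueLog

section ResiduePairing

open Polynomial
open scoped RatFunc

variable {k : Type*} [Field k] {d : ℕ} {π : k[X]}

/-- `T` computes, modulo `levelSpan k d`, the brackets `[a * b / (c * e)]` with small `a`, `b`, `c`,
`e` such that `a * b ≡ c * e` modulo `π`. The values at the other polynomials of `IsTopPrime d` are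
normalized so that the brackets `[π / π']` can be recovered as well. -/
structure IsResidueHom (d : ℕ) (π : k[X])
    (T : UnitsQ k⟮X⟯ →ₗ[ℚ] PreBlochQ k⟮X⟯ ⧸ levelSpan k d) : Prop where
  mkQ_symBracket (a b c e : k[X]) (ha : IsSmall d a) (hb : IsSmall d b) (hc : IsSmall d c)
    (he : IsSmall d e) (h : π ∣ a * b - c * e) :
    (levelSpan k d).mkQ (symBracket k⟮X⟯ (a * b) (-(c * e))) =
      T (logQ (algebraMap _ k⟮X⟯ a)) + T (logQ (algebraMap _ k⟮X⟯ b))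
        - T (logQ (algebraMap _ k⟮X⟯ c)) - T (logQ (algebraMap _ k⟮X⟯ e))
  apply_topPrime (π' : k[X]) (hπ' : IsTopPrime d π') (h : π' ≠ π) :
    T (logQ (algebraMap _ k⟮X⟯ π')) = (1 / 2 : ℚ) • (levelSpan k d).mkQ (symBracket k⟮X⟯ π (-π'))
      + T (logQ (algebraMap _ k⟮X⟯ (π' - π)))

lemma IsTopPrime.natDegree_sub_le (hπ : IsTopPrime d π) {π' : k[X]} (hπ' : IsTopPrime d π') :
    (π' - π).natDegree ≤ d :=
  Nat.lt_succ_iff.1 <| IsMonicOfDegree.natDegree_sub_lt (Nat.succ_ne_zero d)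
    ⟨hπ'.natDegree_eq, hπ'.monic⟩ ⟨hπ.natDegree_eq, hπ.monic⟩

lemma IsTopPrime.exists_isResidueHom (hπ : IsTopPrime d π) : ∃ T, IsResidueHom d π T := by
  obtain ⟨τ, hτ_one, hτ⟩ := hπ.exists_residueLog
  have hτ_mul (p q : k[X]) (hp : p ≠ 0) (hq : q ≠ 0) (hd : (p * q).natDegree ≤ d) :
      τ (p * q) = τ p + τ q := by
    have h_deg := natDegree_mul hp hq
    have h := hτ p q (p * q) 1 ⟨hp, by omega⟩ ⟨hq, by omega⟩ ⟨mul_ne_zero hp hq, hd⟩ isSmall_one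
      (by simp)
    rw [mul_one, symBracket_of_add_eq_zero (add_neg_cancel _), map_zero, hτ_one] at h
    linear_combination (norm := abel) h
  obtain ⟨c, hc⟩ := exists_lift_logQ (fun a : k => τ (C a)) fun a b ha hb => by
    rw [C_mul, hτ_mul _ _ (C_ne_zero.2 ha) (C_ne_zero.2 hb) (by rw [← C_mul, natDegree_C]; omega)]
  classical
  obtain ⟨T, hT_const, hT⟩ := exists_unitsQ_hom c fun p => if p.natDegree ≤ d then τ p else
    (1 / 2 : ℚ) • (levelSpan k d).mkQ (symBracket k⟮X⟯ π (-p)) + τ (p - π)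
  have hT_small {p : k[X]} (hp : IsSmall d p) : T (logQ (algebraMap _ k⟮X⟯ p)) = τ p := by
    refine unitsQ_hom_eq_of_natDegree_le hτ_mul (fun a ha => ?_) (fun q hq_monic hq hqd => ?_)
      hp.ne_zero hp.natDegree_le
    · rw [hT_const, hc a ha]
    · rw [hT q hq_monic hq, if_pos hqd]
  refine ⟨T, fun a b c e ha hb hc he h => ?_, fun π' hπ' h_ne => ?_⟩
  · rw [hτ a b c e ha hb hc he h, hT_small ha, hT_small hb, hT_small hc, hT_small he]
  · rw [hT π' hπ'.monic hπ'.irreducible, if_neg (by rw [hπ'.natDegree_eq]; omega),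
      hT_small ⟨sub_ne_zero.2 h_ne, hπ.natDegree_sub_le hπ'⟩]

/-- A bilinear form whose value at a polynomial of `IsTopPrime d` is a residue homomorphism, and
which ignores the polynomials of degree at most `d` in its first argument. -/
structure IsResiduePairing (d : ℕ)
    (B : UnitsQ k⟮X⟯ →ₗ[ℚ] UnitsQ k⟮X⟯ →ₗ[ℚ] PreBlochQ k⟮X⟯ ⧸ levelSpan k d) : Prop where
  apply_of_natDegree_le (p : k[X]) (hp : p.natDegree ≤ d) : B (logQ (algebraMap _ k⟮X⟯ p)) = 0
  isResidueHom (π : k[X]) (hπ : IsTopPrime d π) :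
    IsResidueHom d π (B (logQ (algebraMap _ k⟮X⟯ π)))

lemma exists_isResiduePairing (k : Type*) [Field k] (d : ℕ) :
    ∃ B, IsResiduePairing (k := k) d B := by
  have h_exists (π : k[X]) : ∃ T, IsTopPrime d π → IsResidueHom d π T :=
    (em (IsTopPrime d π)).elim (fun hπ => hπ.exists_isResidueHom.imp fun _ hT _ => hT)
      fun hπ => ⟨0, fun h => absurd h hπ⟩
  choose T hT using h_exists
  classical
  obtain ⟨B, hB_const, hB⟩ := exists_unitsQ_hom 0 fun p => if p.natDegree ≤ d then 0 else T p
  refine ⟨B, fun p hp => ?_, fun π hπ => ?_⟩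
  · exact unitsQ_hom_eq_zero_of_natDegree_le hB_const
      (fun π hπ_monic hπ hπd => by rw [hB π hπ_monic hπ, if_pos hπd]) hp
  · rw [hB π hπ.monic hπ.irreducible, if_neg (by rw [hπ.natDegree_eq]; omega)]
    exact hT π hπ

/-- `N` contains `levelSpan k d` and the two kinds of brackets to which the other generators of
`levelSpan k (d + 1)` are reduced. -/
structure IsResidueClosed (d : ℕ) (N : Submodule ℚ (PreBlochQ k⟮X⟯)) : Prop where
  levelSpan_le : levelSpan k d ≤ N
  symBracket_mem (a b c π : k[X]) (ha : TwoFactors d 0 a) (hb : TwoFactors d 0 b)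
    (hc : c.natDegree ≤ d) (hπ : IsTopPrime d π) (h : a + b + π * c = 0) : symBracket k⟮X⟯ a b ∈ N
  symBracket_topPrime_mem (π π' : k[X]) (hπ : IsTopPrime d π) (hπ' : IsTopPrime d π') :
    symBracket k⟮X⟯ π (-π') ∈ N

namespace IsResiduePairing

variable {B : UnitsQ k⟮X⟯ →ₗ[ℚ] UnitsQ k⟮X⟯ →ₗ[ℚ] PreBlochQ k⟮X⟯ ⧸ levelSpan k d}

lemma apply_of_twoFactors (hB : IsResiduePairing d B) {p : k[X]} (hp : TwoFactors d 0 p) :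
    B (logQ (algebraMap _ k⟮X⟯ p)) = 0 := by
  rcases eq_or_ne p 0 with rfl | hp0
  · simp
  obtain ⟨p₁, p₂, -, -, h_deg, rfl⟩ := hp
  obtain ⟨hp₁, hp₂⟩ := mul_ne_zero_iff.1 hp0
  rw [logQ_algebraMap_mul hp₁ hp₂, map_add, hB.apply_of_natDegree_le p₁ (by omega),
    hB.apply_of_natDegree_le p₂ (by omega), add_zero]

lemma levelSpan_le_eqLocus (hB : IsResiduePairing d B) :
    levelSpan k d ≤
      LinearMap.eqLocus (TensorProduct.lift B ∘ₗ blochWigner) (levelSpan k d).mkQ := by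
  refine Submodule.span_le.2 ?_
  rintro _ ⟨a, b, c, h, ha, hb, hc, rfl⟩
  rw [SetLike.mem_coe, LinearMap.mem_eqLocus, LinearMap.comp_apply, Submodule.mkQ_apply,
    (Submodule.Quotient.mk_eq_zero _).2 (symBracket_mem_levelSpan h ha hb hc)]
  rcases eq_or_ne a 0 with rfl | ha0
  · simp
  rcases eq_or_ne b 0 with rfl | hb0
  · simp
  rcases eq_or_ne c 0 with rfl | hc0
  · rw [symBracket_of_add_eq_zero (by simpa using h), map_zero, map_zero]
  · rw [lift_blochWigner_symBracket B ha0 hb0 hc0 h]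
    simp [hB.apply_of_twoFactors ha, hB.apply_of_twoFactors hb, hB.apply_of_twoFactors hc]

lemma symBracket_mem_eqLocus (hB : IsResiduePairing d B) (a b c π : k[X]) (ha : TwoFactors d 0 a)
    (hb : TwoFactors d 0 b) (hc : c.natDegree ≤ d) (hπ : IsTopPrime d π) (h : a + b + π * c = 0) :
    symBracket k⟮X⟯ a b ∈
      LinearMap.eqLocus (TensorProduct.lift B ∘ₗ blochWigner) (levelSpan k d).mkQ := by
  rcases eq_or_ne a 0 with rfl | ha0
  · simp
  rcases eq_or_ne b 0 with rfl | hb0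
  · simp
  rcases eq_or_ne c 0 with rfl | hc0
  · simp [symBracket_of_add_eq_zero (show a + b = 0 by simpa using h)]
  have hBa := hB.apply_of_twoFactors ha
  have hBb := hB.apply_of_twoFactors hb
  have hBπc : B (logQ (algebraMap _ k⟮X⟯ (π * c))) = B (logQ (algebraMap _ k⟮X⟯ π)) := by
    rw [logQ_algebraMap_mul hπ.monic.ne_zero hc0, map_add, hB.apply_of_natDegree_le c hc, add_zero]
  rw [LinearMap.mem_eqLocus, LinearMap.comp_apply,
    lift_blochWigner_symBracket B ha0 hb0 (mul_ne_zero hπ.monic.ne_zero hc0) h, hBa, hBb, hBπc]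
  obtain ⟨a₁, a₂, -, -, ha_deg, rfl⟩ := ha
  obtain ⟨b₁, b₂, -, -, hb_deg, rfl⟩ := hb
  obtain ⟨ha₁, ha₂⟩ := mul_ne_zero_iff.1 ha0
  obtain ⟨hb₁, hb₂⟩ := mul_ne_zero_iff.1 hb0
  have h_residue := (hB.isResidueHom π hπ).mkQ_symBracket a₁ a₂ (-b₁) b₂ ⟨ha₁, by omega⟩
    ⟨ha₂, by omega⟩ (IsSmall.neg ⟨hb₁, by omega⟩) ⟨hb₂, by omega⟩
    ⟨-c, by linear_combination h⟩
  rw [neg_mul, neg_neg, map_neg (algebraMap _ _), logQ_neg] at h_residue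
  rw [h_residue, logQ_algebraMap_mul ha₁ ha₂, logQ_algebraMap_mul hb₁ hb₂]
  simp only [map_add, LinearMap.zero_apply]
  abel

lemma symBracket_topPrime_mem_eqLocus (hB : IsResiduePairing d B) (π π' : k[X])
    (hπ : IsTopPrime d π) (hπ' : IsTopPrime d π') :
    symBracket k⟮X⟯ π (-π') ∈
      LinearMap.eqLocus (TensorProduct.lift B ∘ₗ blochWigner) (levelSpan k d).mkQ := by
  rcases eq_or_ne π' π with rfl | h_ne
  · simp [symBracket_of_add_eq_zero (add_neg_cancel π')]
  have h_swap : symBracket k⟮X⟯ π' (-π) = -symBracket k⟮X⟯ π (-π') := by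
    rw [← symBracket_swap (four_le_card_ratFunc k), symBracket, symBracket]
    simp
  have h_eval := (hB.isResidueHom π hπ).apply_topPrime π' hπ' h_ne
  have h_eval' := (hB.isResidueHom π' hπ').apply_topPrime π hπ h_ne.symm
  rw [h_swap, ← neg_sub π' π, map_neg (algebraMap _ _) (π' - π), logQ_neg] at h_eval'
  rw [LinearMap.mem_eqLocus, LinearMap.comp_apply,
    lift_blochWigner_symBracket B hπ.monic.ne_zero (neg_ne_zero.2 hπ'.monic.ne_zero)
      (sub_ne_zero.2 h_ne) (by ring), map_neg (algebraMap _ _), logQ_neg, h_eval, h_eval',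
    hB.apply_of_natDegree_le _ (hπ.natDegree_sub_le hπ'), map_neg, LinearMap.zero_apply,
    LinearMap.zero_apply]
  module

lemma isResidueClosed_eqLocus (hB : IsResiduePairing d B) : IsResidueClosed d
    (LinearMap.eqLocus (TensorProduct.lift B ∘ₗ blochWigner) (levelSpan k d).mkQ) where
  levelSpan_le := hB.levelSpan_le_eqLocus
  symBracket_mem := hB.symBracket_mem_eqLocus
  symBracket_topPrime_mem := hB.symBracket_topPrime_mem_eqLocus

end IsResiduePairing

end ResiduePairing

section Descent

open Polynomial
open scoped RatFunc

variable {k : Type*} [Field k] {d n i j l : ℕ} {a b c p : k[X]}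

lemma TwoFactors.mono (h : TwoFactors d i p) (hij : i ≤ j) : TwoFactors d j p := by
  obtain ⟨p₁, p₂, h₁, h₂, hi, rfl⟩ := h
  exact twoFactors_mul h₁ h₂ (hi.trans hij)

lemma TwoFactors.natDegree_le (h : TwoFactors d 1 p) : p.natDegree ≤ 2 * d + 1 := by
  obtain ⟨p₁, p₂, h₁, h₂, hi, rfl⟩ := h
  exact natDegree_mul_le.trans (by omega)

lemma TwoFactors.of_succ (h : TwoFactors (d + 1) 0 p) : TwoFactors d 2 p := by
  obtain ⟨p₁, p₂, h₁, h₂, hi, rfl⟩ := h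
  exact twoFactors_mul (by omega) (by omega) (by omega)

lemma TwoFactors.exists_eq_mul_of_dvd {f : k[X]} (h : TwoFactors d i p) (hf : Irreducible f)
    (hfp : f ∣ p) : ∃ q, TwoFactors d i q ∧ f * q = p := by
  have natDegree_le (q : k[X]) : q.natDegree ≤ (f * q).natDegree := by
    rcases eq_or_ne q 0 with rfl | hq
    · simp
    · rw [natDegree_mul hf.ne_zero hq]
      exact Nat.le_add_left _ _
  obtain ⟨p₁, p₂, h₁, h₂, hi, rfl⟩ := h
  rcases hf.prime.dvd_or_dvd hfp with ⟨q, rfl⟩ | ⟨q, rfl⟩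
  · have := natDegree_le q
    exact ⟨q * p₂, twoFactors_mul (by omega) h₂ (by omega), by ring⟩
  · have := natDegree_le q
    exact ⟨p₁ * q, twoFactors_mul h₁ (by omega) (by omega), by ring⟩

lemma exists_natDegree_lt_dvd_mul_add {f : k[X]} (hf : Irreducible f) (hfa : ¬f ∣ a) (b : k[X]) :
    ∃ u, u.natDegree < f.natDegree ∧ f ∣ a * u + b := by
  obtain ⟨r, s, hrs⟩ := hf.coprime_iff_not_dvd.2 hfa
  have h_div := EuclideanDomain.div_add_mod (-(s * b)) f
  refine ⟨-(s * b) % f, natDegree_mod_lt _ hf.natDegree_pos.ne',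
    b * r - a * (-(s * b) / f), ?_⟩
  linear_combination a * h_div - b * hrs

lemma exists_fiveTerm_cofactors {f a₁ a₂ b₁ b₂ c : k[X]} (hf : Irreducible f) (hfa₁ : ¬f ∣ a₁)
    (h_sum : a₁ * a₂ + b₁ * b₂ + f * c = 0) :
    ∃ u p r : k[X], u.natDegree < f.natDegree ∧ a₁ * u + b₁ = f * p ∧ b₂ * u - a₂ = f * r ∧
      c * u + a₂ * p + b₁ * r = 0 ∧ c + b₂ * p - a₁ * r = 0 := by
  obtain ⟨u, hu, p, hp⟩ := exists_natDegree_lt_dvd_mul_add hf hfa₁ b₁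
  obtain ⟨r, hr⟩ : f ∣ b₂ * u - a₂ :=
    (hf.prime.dvd_or_dvd ⟨b₂ * p + c, by linear_combination b₂ * hp - h_sum⟩).resolve_left hfa₁
  refine ⟨u, p, r, hu, hp, hr, mul_left_cancel₀ hf.ne_zero ?_, mul_left_cancel₀ hf.ne_zero ?_⟩
  · linear_combination u * h_sum - a₂ * hp - b₁ * hr
  · linear_combination h_sum - b₂ * hp + a₁ * hr

/-- `p` is the product of a polynomial of `IsTopPrime d` and a second factor, and precisely `n` of
these two have degree `d + 1`. -/
def HasTopPrime (d n : ℕ) (p : k[X]) : Prop :=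
  ∃ π q, IsTopPrime d π ∧ q.natDegree ≤ d + 1 ∧ q.natDegree - d + 1 = n ∧ π * q = p

lemma HasTopPrime.le_two (h : HasTopPrime d n p) : n ≤ 2 := by
  obtain ⟨π, q, -, hq, hn, -⟩ := h
  omega

lemma HasTopPrime.natDegree_eq (h : HasTopPrime d 2 p) : p.natDegree = 2 * d + 2 := by
  obtain ⟨π, q, hπ, hq, hn, rfl⟩ := h
  have hq₀ : q ≠ 0 := by
    rintro rfl
    simp at hn
  rw [natDegree_mul hπ.irreducible.ne_zero hq₀, hπ.natDegree_eq]
  omega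

lemma hasTopPrime_mul {q : k[X]} (hp : Irreducible p) (hp_deg : p.natDegree = d + 1)
    (hq : q.natDegree ≤ d + 1) : HasTopPrime d (q.natDegree - d + 1) (p * q) := by
  have hu : p.leadingCoeff ≠ 0 := leadingCoeff_ne_zero.2 hp.ne_zero
  have hu_unit : IsUnit (C p.leadingCoeff⁻¹) := isUnit_C.2 (inv_ne_zero hu).isUnit
  refine ⟨p * C p.leadingCoeff⁻¹, C p.leadingCoeff * q,
    ⟨monic_mul_leadingCoeff_inv hp.ne_zero, (irreducible_mul_isUnit hu_unit).2 hp, ?_⟩, ?_, ?_, ?_⟩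
  · rw [natDegree_mul_C (inv_ne_zero hu), hp_deg]
  · rwa [natDegree_C_mul hu]
  · rw [natDegree_C_mul hu]
  · have h_cancel : C p.leadingCoeff⁻¹ * C p.leadingCoeff = (1 : k[X]) := by
      rw [← C_mul, inv_mul_cancel₀ hu, C_1]
    linear_combination p * q * h_cancel

/-- `p` is a product `f * g * q` with `f * g` a reducible polynomial of degree `d + 1`, and at most
`n` of the two factors `f * g` and `q` have degree `d + 1`. -/
def HasReducibleFactor (d n : ℕ) (p : k[X]) : Prop :=
  ∃ f g q, Irreducible f ∧ 0 < g.natDegree ∧ f.natDegree + g.natDegree = d + 1 ∧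
    q.natDegree ≤ d + 1 ∧ q.natDegree - d < n ∧ f * g * q = p

lemma hasReducibleFactor_mul {q : k[X]} (hp : ¬Irreducible p) (hp_deg : p.natDegree = d + 1)
    (hq : q.natDegree ≤ d + 1) (hn : q.natDegree - d < n) : HasReducibleFactor d n (p * q) := by
  have hp_unit : ¬IsUnit p := not_isUnit_of_natDegree_pos p (by omega)
  have hp₀ : p ≠ 0 := ne_zero_of_natDegree_gt (n := d) (by omega)
  obtain ⟨f, hf, g, rfl⟩ := WfDvdMonoid.exists_irreducible_factor hp_unit hp₀
  have hg₀ : g ≠ 0 := right_ne_zero_of_mul hp₀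
  rw [natDegree_mul hf.ne_zero hg₀] at hp_deg
  refine ⟨f, g, q, hf, Nat.pos_of_ne_zero fun hg => hp ?_, hp_deg, hq, hn, rfl⟩
  exact (irreducible_mul_isUnit (isUnit_iff_degree_eq_zero.2 (by
    rw [degree_eq_natDegree hg₀, hg, Nat.cast_zero]))).2 hf

lemma TwoFactors.trichotomy (h : TwoFactors d (n + 1) p) :
    TwoFactors d n p ∨ HasTopPrime d (n + 1) p ∨ HasReducibleFactor d (n + 1) p := by
  obtain ⟨p₁, p₂, h₁, h₂, hn, rfl⟩ := h
  wlog h_deg : p₂.natDegree ≤ p₁.natDegree generalizing p₁ p₂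
  · rw [mul_comm p₁]
    exact this p₂ p₁ h₂ h₁ (by omega) (by omega)
  by_cases h_count : (p₁.natDegree - d) + (p₂.natDegree - d) ≤ n
  · exact .inl (twoFactors_mul h₁ h₂ h_count)
  by_cases hp₁ : Irreducible p₁
  · have := hasTopPrime_mul (d := d) hp₁ (by omega) h₂
    rw [show p₂.natDegree - d + 1 = n + 1 by omega] at this
    exact .inr (.inl this)
  · exact .inr (.inr (hasReducibleFactor_mul hp₁ (by omega) h₂ (by omega)))

/-- `a + b + c = 0`, and each of `a`, `b`, `c` is a product of two polynomials of degree at most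
`d + 1`, of which at most `i`, `j` and `l`, respectively, have degree `d + 1`. -/
structure FactoredTriple (d i j l : ℕ) (a b c : k[X]) : Prop where
  sum_eq_zero : a + b + c = 0
  fst : TwoFactors d i a
  snd : TwoFactors d j b
  trd : TwoFactors d l c

namespace FactoredTriple

lemma rotate (t : FactoredTriple d i j l a b c) : FactoredTriple d j l i b c a :=
  ⟨by rw [← t.sum_eq_zero]; ring, t.snd, t.trd, t.fst⟩

lemma symBracket_rotate (t : FactoredTriple d i j l a b c) :
    symBracket k⟮X⟯ b c = symBracket k⟮X⟯ a b :=
  _root_.symBracket_rotate (four_le_card_ratFunc k) t.sum_eq_zero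

lemma not_hasTopPrime_two (t : FactoredTriple d i j l a b c) (hj : j ≤ 1) (hl : l ≤ 1) :
    ¬HasTopPrime d 2 a := by
  intro ha
  have h_deg : a.natDegree ≤ 2 * d + 1 := by
    rw [show a = -(b + c) by linear_combination t.sum_eq_zero, natDegree_neg]
    exact natDegree_add_le_of_degree_le (t.snd.mono hj).natDegree_le (t.trd.mono hl).natDegree_le
  have := ha.natDegree_eq
  omega

end FactoredTriple

/-- `N` contains the brackets of all factored triples with fewer than `n` factors of degree
`d + 1`. -/
def ClosedBelow (d n : ℕ) (N : Submodule ℚ (PreBlochQ k⟮X⟯)) : Prop :=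
  ∀ ⦃i j l : ℕ⦄ ⦃a b c : k[X]⦄, FactoredTriple d i j l a b c → i + j + l < n →
    symBracket k⟮X⟯ a b ∈ N

namespace ClosedBelow

variable {N : Submodule ℚ (PreBlochQ k⟮X⟯)}

lemma symBracket_mul_mem (hN : ClosedBelow d n N) {a₁ a₂ b₁ b₂ c₁ c₂ : k[X]}
    (h : a₁ * a₂ + b₁ * b₂ + c₁ * c₂ = 0)
    (ha₁ : a₁.natDegree ≤ d + 1) (ha₂ : a₂.natDegree ≤ d + 1)
    (hb₁ : b₁.natDegree ≤ d + 1) (hb₂ : b₂.natDegree ≤ d + 1)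
    (hc₁ : c₁.natDegree ≤ d + 1) (hc₂ : c₂.natDegree ≤ d + 1)
    (hn : (a₁.natDegree - d) + (a₂.natDegree - d) + ((b₁.natDegree - d) + (b₂.natDegree - d)) +
      ((c₁.natDegree - d) + (c₂.natDegree - d)) < n) :
    symBracket k⟮X⟯ (a₁ * a₂) (b₁ * b₂) ∈ N :=
  hN ⟨h, twoFactors_mul ha₁ ha₂ le_rfl, twoFactors_mul hb₁ hb₂ le_rfl,
    twoFactors_mul hc₁ hc₂ le_rfl⟩ hn

lemma symBracket_mem_of_dvd (hN : ClosedBelow d (i + j + l) N)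
    (t : FactoredTriple d i j l a b c) {f g q : k[X]} (hf : Irreducible f)
    (hfg : f.natDegree + g.natDegree = d + 1) (hq : q.natDegree ≤ d + 1)
    (hl : q.natDegree - d < l) (hc : f * g * q = c) (hfb : f ∣ b) :
    symBracket k⟮X⟯ a b ∈ N := by
  have hfc : f ∣ c := ⟨g * q, by rw [← hc, mul_assoc]⟩
  have hfa : f ∣ a := by
    rw [show a = -(b + c) by linear_combination t.sum_eq_zero]
    exact (dvd_add hfb hfc).neg_right
  obtain ⟨a', ha', rfl⟩ := t.fst.exists_eq_mul_of_dvd hf hfa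
  obtain ⟨b', hb', rfl⟩ := t.snd.exists_eq_mul_of_dvd hf hfb
  have hf_deg := hf.natDegree_pos
  have h_sum : a' + b' + g * q = 0 :=
    mul_left_cancel₀ hf.ne_zero (by linear_combination t.sum_eq_zero + hc)
  rw [symBracket_mul_left hf.ne_zero]
  exact hN ⟨h_sum, ha', hb', twoFactors_mul (by omega) hq le_rfl⟩ (by omega)

lemma symBracket_mem_of_not_dvd (hN : ClosedBelow d (i + j + l) N)
    (t : FactoredTriple d i j l a b c) {f g q : k[X]} (hf : Irreducible f)
    (hg : 0 < g.natDegree) (hfg : f.natDegree + g.natDegree = d + 1) (hq : q.natDegree ≤ d + 1)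
    (hl : q.natDegree - d < l) (hc : f * g * q = c) (ha₀ : a ≠ 0) (hfb : ¬f ∣ b) :
    symBracket k⟮X⟯ a b ∈ N := by
  obtain ⟨a₁, a₂, ha₁, ha₂, hi, rfl⟩ := t.fst
  obtain ⟨b₁, b₂, hb₁, hb₂, hj, rfl⟩ := t.snd
  have h_sum : a₁ * a₂ + b₁ * b₂ + f * (g * q) = 0 := by linear_combination t.sum_eq_zero + hc
  have hfa₁ : ¬f ∣ a₁ := by
    rintro ⟨w, rfl⟩
    exact hfb ⟨-w * a₂ - g * q, by linear_combination h_sum⟩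
  have hb₀ : b₁ * b₂ ≠ 0 := fun hb => hfb (hb ▸ dvd_zero f)
  obtain ⟨u, p, r, hu, hp, hr, h_sum_u, h_sum_v⟩ := exists_fiveTerm_cofactors hf hfa₁ h_sum
  have hp_deg : p.natDegree ≤ d := natDegree_right_le hf.ne_zero <| by
    rw [← hp]
    exact natDegree_add_le_of_degree_le (natDegree_mul_le.trans (by omega)) (by omega)
  have hr_deg : r.natDegree ≤ d := natDegree_right_le hf.ne_zero <| by
    rw [← hr]
    refine (natDegree_sub_le_of_le (natDegree_mul_le.trans le_rfl) le_rfl).trans ?_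
    omega
  have hgu_deg : (g * u).natDegree ≤ d := natDegree_mul_le.trans (by omega)
  have hf_neg := natDegree_neg f
  have ha₁_neg := natDegree_neg a₁
  have hb₂_neg := natDegree_neg b₂
  have h_one := natDegree_one (R := k)
  rw [symBracket_mul_mul (four_le_card_ratFunc k) (f := f) (u := u) (v := 1) (c := g * q) (p := p)
    (left_ne_zero_of_mul ha₀) (right_ne_zero_of_mul ha₀) (left_ne_zero_of_mul hb₀)
    (right_ne_zero_of_mul hb₀) hf.ne_zero one_ne_zero h_sum
    (by linear_combination hp), ← neg_mul b₂, mul_right_comm g,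
    mul_one (g * q)]
  refine N.sub_mem (N.add_mem (N.sub_mem ?_ ?_) ?_) ?_
  · exact hN.symBracket_mul_mem (c₁ := -f) (c₂ := p) (by linear_combination hp)
      (by omega) (by omega) (by omega) (by omega) (by omega) (by omega) (by omega)
  · exact hN.symBracket_mul_mem (c₁ := f) (c₂ := r) (by linear_combination -hr)
      (by omega) (by omega) (by omega) (by omega) (by omega) (by omega) (by omega)
  · exact hN.symBracket_mul_mem (c₁ := b₁) (c₂ := r) (by linear_combination h_sum_u)
      (by omega) (by omega) (by omega) (by omega) (by omega) (by omega) (by omega)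
  · exact hN.symBracket_mul_mem (c₁ := -a₁) (c₂ := r) (by linear_combination h_sum_v)
      (by omega) (by omega) (by omega) (by omega) (by omega) (by omega) (by omega)

lemma symBracket_mem_of_hasReducibleFactor (hN : ClosedBelow d (i + j + l) N)
    (t : FactoredTriple d i j l a b c) (hc : HasReducibleFactor d l c) :
    symBracket k⟮X⟯ a b ∈ N := by
  obtain ⟨f, g, q, hf, hg, hfg, hq, hl, hc⟩ := hc
  rcases eq_or_ne a 0 with rfl | ha
  · simp
  by_cases hfb : f ∣ b
  · exact hN.symBracket_mem_of_dvd t hf hfg hq hl hc hfb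
  · exact hN.symBracket_mem_of_not_dvd t hf hg hfg hq hl hc ha hfb

lemma eq_zero_or_hasTopPrime (hN : ClosedBelow d (i + j + l) N)
    (t : FactoredTriple d i j l a b c) (h_mem : symBracket k⟮X⟯ a b ∉ N) :
    l = 0 ∨ HasTopPrime d l c := by
  rcases Nat.eq_zero_or_pos l with rfl | hl
  · exact .inl rfl
  obtain ⟨l, rfl⟩ := Nat.exists_eq_add_of_lt hl
  rw [zero_add] at *
  rcases t.trd.trichotomy with hc | hc | hc
  · exact absurd (hN ⟨t.sum_eq_zero, t.fst, t.snd, hc⟩ (by omega)) h_mem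
  · exact .inr hc
  · exact absurd (hN.symBracket_mem_of_hasReducibleFactor t hc) h_mem

lemma symBracket_mem_of_hasTopPrime (hN : ClosedBelow d (i + i + l) N) (hN' : IsResidueClosed d N)
    (t : FactoredTriple d i i l a b c) (ha : HasTopPrime d i a) (hb : HasTopPrime d i b) :
    symBracket k⟮X⟯ a b ∈ N := by
  rcases eq_or_ne a 0 with rfl | ha₀
  · simp
  rcases eq_or_ne b 0 with rfl | hb₀
  · simp
  have h_sum := t.sum_eq_zero
  obtain ⟨π, a₂, hπ, ha₂, hai, rfl⟩ := ha
  obtain ⟨π', b₂, hπ', hb₂, hbi, rfl⟩ := hb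
  obtain ⟨c₁, c₂, hc₁, hc₂, hcl, rfl⟩ := t.trd
  have hp_deg : (π - π').natDegree ≤ d := hπ'.natDegree_sub_le hπ
  have hq_deg : (a₂ + b₂).natDegree ≤ max a₂.natDegree b₂.natDegree := natDegree_add_le a₂ b₂
  have hπ_deg := hπ.natDegree_eq
  have hπ'_deg := hπ'.natDegree_eq
  have hπ_neg := natDegree_neg π
  have hb₂_neg := natDegree_neg b₂
  have hc₂_neg := natDegree_neg c₂
  have h_one := natDegree_one (R := k)
  have h_neg_one := natDegree_neg (1 : k[X])
  rw [symBracket_mul_mul (four_le_card_ratFunc k) (f := 1) (u := 1) (v := -1) (c := c₁ * c₂)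
    (p := π - π') (left_ne_zero_of_mul ha₀) (right_ne_zero_of_mul ha₀) (left_ne_zero_of_mul hb₀)
    (right_ne_zero_of_mul hb₀) one_ne_zero (neg_ne_zero.2 one_ne_zero)
    (by linear_combination h_sum) (by ring), mul_one π, mul_neg_one π', ← neg_mul b₂,
    mul_one (c₁ * c₂), mul_neg_one (c₁ * c₂), ← mul_neg c₁]
  refine N.sub_mem (N.add_mem (N.sub_mem (hN'.symBracket_topPrime_mem π π' hπ hπ') ?_) ?_) ?_
  · exact hN.symBracket_mul_mem (c₁ := a₂ + b₂) (c₂ := 1) (by ring)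
      (by omega) (by omega) (by omega) (by omega) (by omega) (by omega) (by omega)
  · exact hN.symBracket_mul_mem (c₁ := π') (c₂ := a₂ + b₂) (by linear_combination h_sum)
      (by omega) (by omega) (by omega) (by omega) (by omega) (by omega) (by omega)
  · exact hN.symBracket_mul_mem (c₁ := -π) (c₂ := a₂ + b₂) (by linear_combination -h_sum)
      (by omega) (by omega) (by omega) (by omega) (by omega) (by omega) (by omega)

lemma eq_zero_of_hasTopPrime (hN : ClosedBelow d (i + j + l) N) (hN' : IsResidueClosed d N)
    (t : FactoredTriple d i j l a b c) (h_mem : symBracket k⟮X⟯ a b ∉ N)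
    (ha : i = 0 ∨ HasTopPrime d i a) (hb : j = 0 ∨ HasTopPrime d j b) (hij : i = j) : i = 0 := by
  subst hij
  by_contra hi
  exact h_mem (hN.symBracket_mem_of_hasTopPrime hN' t (ha.resolve_left hi) (hb.resolve_left hi))

end ClosedBelow

lemma IsResidueClosed.symBracket_mem_of_sum_le_one {N : Submodule ℚ (PreBlochQ k⟮X⟯)}
    (hN : IsResidueClosed d N) (t : FactoredTriple d 0 0 l a b c) (hl : l ≤ 1)
    (hc : l = 0 ∨ HasTopPrime d l c) : symBracket k⟮X⟯ a b ∈ N := by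
  rcases hc with rfl | ⟨π, q, hπ, hq, hql, rfl⟩
  · exact hN.levelSpan_le (symBracket_mem_levelSpan t.sum_eq_zero t.fst t.snd t.trd)
  · exact hN.symBracket_mem a b q π t.fst t.snd (by omega) hπ t.sum_eq_zero

lemma ClosedBelow.symBracket_mem {N : Submodule ℚ (PreBlochQ k⟮X⟯)}
    (hN : ClosedBelow d (i + j + l) N) (hN' : IsResidueClosed d N)
    (t : FactoredTriple d i j l a b c) : symBracket k⟮X⟯ a b ∈ N := by
  by_contra h_ab
  have h_bc : symBracket k⟮X⟯ b c ∉ N := by rwa [t.symBracket_rotate]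
  have h_ca : symBracket k⟮X⟯ c a ∉ N := by rwa [t.rotate.symBracket_rotate]
  have hN_bc : ClosedBelow d (j + l + i) N := by rwa [show j + l + i = i + j + l by ring]
  have hN_ca : ClosedBelow d (l + i + j) N := by rwa [show l + i + j = i + j + l by ring]
  have ha := hN_bc.eq_zero_or_hasTopPrime t.rotate h_bc
  have hb := hN_ca.eq_zero_or_hasTopPrime t.rotate.rotate h_ca
  have hc := hN.eq_zero_or_hasTopPrime t h_ab
  have hij := hN.eq_zero_of_hasTopPrime hN' t h_ab ha hb
  have hjl := hN_bc.eq_zero_of_hasTopPrime hN' t.rotate h_bc hb hc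
  have hli := hN_ca.eq_zero_of_hasTopPrime hN' t.rotate.rotate h_ca hc ha
  have hi_le : i ≤ 2 := ha.elim (by omega) HasTopPrime.le_two
  have hj_le : j ≤ 2 := hb.elim (by omega) HasTopPrime.le_two
  have hl_le : l ≤ 2 := hc.elim (by omega) HasTopPrime.le_two
  have hi_ne : i ≠ 2 := fun hi => t.not_hasTopPrime_two (by omega) (by omega)
    (hi ▸ ha.resolve_left (by omega))
  have hj_ne : j ≠ 2 := fun hj => t.rotate.not_hasTopPrime_two (by omega) (by omega)
    (hj ▸ hb.resolve_left (by omega))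
  have hl_ne : l ≠ 2 := fun hl => t.rotate.rotate.not_hasTopPrime_two (by omega) (by omega)
    (hl ▸ hc.resolve_left (by omega))
  obtain ⟨rfl, rfl⟩ | ⟨rfl, rfl⟩ | ⟨rfl, rfl⟩ : i = 0 ∧ j = 0 ∨ j = 0 ∧ l = 0 ∨ l = 0 ∧ i = 0 := by
    omega
  · exact h_ab (hN'.symBracket_mem_of_sum_le_one t (by omega) hc)
  · exact h_bc (hN'.symBracket_mem_of_sum_le_one t.rotate (by omega) ha)
  · exact h_ca (hN'.symBracket_mem_of_sum_le_one t.rotate.rotate (by omega) hb)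

lemma IsResidueClosed.closedBelow {N : Submodule ℚ (PreBlochQ k⟮X⟯)} (hN : IsResidueClosed d N)
    (n : ℕ) : ClosedBelow d n N := by
  induction n with
  | zero => exact fun _ _ _ _ _ _ _ h => absurd h (Nat.not_lt_zero _)
  | succ n ih =>
    intro i j l a b c t h
    exact ClosedBelow.symBracket_mem (fun _ _ _ _ _ _ t' h' => ih t' (by omega)) hN t

theorem IsResidueClosed.levelSpan_succ_le {N : Submodule ℚ (PreBlochQ k⟮X⟯)}
    (hN : IsResidueClosed d N) : levelSpan k (d + 1) ≤ N := by
  refine Submodule.span_le.2 ?_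
  rintro _ ⟨a, b, c, h, ha, hb, hc, rfl⟩
  exact hN.closedBelow 7 ⟨h, ha.of_succ, hb.of_succ, hc.of_succ⟩ (by omega)

end Descent

section Rigidity

open Polynomial
open scoped RatFunc

variable {k : Type*} [Field k] {d : ℕ}

lemma mem_levelSpan_of_blochWigner_eq_zero {z : PreBlochQ k⟮X⟯} (hz : z ∈ levelSpan k (d + 1))
    (h : blochWigner z = 0) : z ∈ levelSpan k d := by
  obtain ⟨B, hB⟩ := exists_isResiduePairing k d
  have h_eq := LinearMap.mem_eqLocus.1 (hB.isResidueClosed_eqLocus.levelSpan_succ_le hz)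
  rw [LinearMap.comp_apply, h, map_zero] at h_eq
  exact (Submodule.Quotient.mk_eq_zero _).1 h_eq.symm

lemma levelSpan_mono : Monotone (levelSpan k) := by
  refine monotone_nat_of_le_succ fun d => Submodule.span_mono ?_
  have le_succ {p : k[X]} (hp : TwoFactors d 0 p) : TwoFactors (d + 1) 0 p := by
    obtain ⟨p₁, p₂, -, -, h_deg, rfl⟩ := hp
    exact twoFactors_zero_mul (by omega) (by omega)
  rintro _ ⟨a, b, c, h, ha, hb, hc, rfl⟩
  exact ⟨a, b, c, h, le_succ ha, le_succ hb, le_succ hc, rfl⟩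

lemma exists_bracket_mem_levelSpan (f : k⟮X⟯) : ∃ d, bracket f ∈ levelSpan k d := by
  set d := max f.num.natDegree f.denom.natDegree
  have h_num : f.num.natDegree ≤ d := le_max_left _ _
  have h_denom : f.denom.natDegree ≤ d := le_max_right _ _
  have h_bracket : symBracket k⟮X⟯ (-f.num) f.denom = bracket f := by
    rw [symBracket, map_neg, neg_neg, f.num_div_denom]
  rw [← h_bracket]
  exact ⟨d, symBracket_mem_levelSpan (c := f.num - f.denom) (by ring)
    (twoFactors_zero_of_natDegree_le h_num).neg (twoFactors_zero_of_natDegree_le h_denom)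
    (twoFactors_zero_of_natDegree_le ((natDegree_sub_le_of_le h_num h_denom).trans
      (max_self d).le))⟩

theorem iSup_levelSpan : ⨆ d, levelSpan k d = ⊤ := by
  rw [eq_top_iff, ← span_range_bracket, Submodule.span_le]
  rintro _ ⟨f, rfl⟩
  obtain ⟨d, hd⟩ := exists_bracket_mem_levelSpan f
  exact Submodule.mem_iSup_of_mem d hd

theorem ker_blochWigner_le_levelSpan_zero : LinearMap.ker blochWigner ≤ levelSpan k 0 := by
  intro z hz
  obtain ⟨d, hd⟩ : ∃ d, z ∈ levelSpan k d := by
    rw [← Submodule.mem_iSup_of_directed _ levelSpan_mono.directed_le, iSup_levelSpan]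
    exact Submodule.mem_top
  induction d with
  | zero => exact hd
  | succ d ih => exact ih (mem_levelSpan_of_blochWigner_eq_zero hd hz)

lemma TwoFactors.exists_eq_C {p : k[X]} (hp : TwoFactors 0 0 p) : ∃ α, p = C α := by
  obtain ⟨p₁, p₂, -, -, h_deg, rfl⟩ := hp
  rw [eq_C_of_natDegree_eq_zero (p := p₁) (by omega),
    eq_C_of_natDegree_eq_zero (p := p₂) (by omega), ← C_mul]
  exact ⟨_, rfl⟩

lemma symBracket_C (α β : k) :
    symBracket k⟮X⟯ (C α) (C β) = bracket (algebraMap k[X] k⟮X⟯ (C (-α / β))) := by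
  simp [symBracket]

variable {x y : k} {s t : PreBlochQ k⟮X⟯ →ₗ[ℚ] PreBlochQ k}

lemma levelSpan_zero_le_eqLocus (hs : IsEvaluation x s) (ht : IsEvaluation y t) :
    levelSpan k 0 ≤ LinearMap.eqLocus s t := by
  refine Submodule.span_le.2 ?_
  rintro _ ⟨a, b, c, -, ha, hb, -, rfl⟩
  obtain ⟨α, rfl⟩ := ha.exists_eq_C
  obtain ⟨β, rfl⟩ := hb.exists_eq_C
  rw [SetLike.mem_coe, LinearMap.mem_eqLocus, symBracket_C, hs, ht, eval_C, eval_C]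

theorem evaluation_eq_of_blochWigner_eq_zero (hs : IsEvaluation x s) (ht : IsEvaluation y t)
    {z : PreBlochQ k⟮X⟯} (hz : blochWigner z = 0) : s z = t z :=
  levelSpan_zero_le_eqLocus hs ht (ker_blochWigner_le_levelSpan_zero hz)

end Rigidity

section Distribution

open Polynomial
open scoped RatFunc

variable {L : Type*} [Field L] {m : ℕ} {ζ : L}

/-- The difference of the two sides of the distribution relation at `t`. -/
noncomputable def distributionDefect (ζ : L) (m : ℕ) (t : L) : PreBlochQ L :=
  m • (∑ i ∈ Finset.Icc 1 m, bracket (ζ ^ i * t)) - bracket (t ^ m)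

lemma prod_Icc_one_sub_pow_mul (hζ : IsPrimitiveRoot ζ m) (hm : 0 < m) (t : L) :
    ∏ i ∈ Finset.Icc 1 m, (1 - ζ ^ i * t) = 1 - t ^ m := by
  have h_range := congrArg (eval 1) (X_pow_sub_C_eq_prod hζ hm (a := t ^ m) (α := ζ * t)
    (by rw [mul_pow, hζ.pow_eq_one, one_mul]))
  rw [← Finset.Ico_add_one_right_eq_Icc, Finset.prod_Ico_eq_prod_range]
  simp only [eval_sub, eval_pow, eval_X, one_pow, eval_C, eval_prod] at h_range
  rw [h_range]
  refine Finset.prod_congr rfl fun i _ => ?_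
  ring

lemma blochWigner_distributionDefect (hζ : IsPrimitiveRoot ζ m) (hm : 0 < m) {t : L} (ht : t ≠ 0)
    (htm : t ^ m ≠ 1) : blochWigner (distributionDefect ζ m t) = 0 := by
  have hζ₀ : ζ ≠ 0 := hζ.ne_zero hm.ne'
  have h_log (i : ℕ) : logQ (ζ ^ i * t) = logQ t := by
    rw [logQ_mul (pow_ne_zero i hζ₀) ht, logQ_pow, logQ_eq_zero_of_pow_eq_one hm.ne' hζ.pow_eq_one,
      smul_zero, zero_add]
  have h_prod := prod_Icc_one_sub_pow_mul hζ hm t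
  have h_ne : ∏ i ∈ Finset.Icc 1 m, (1 - ζ ^ i * t) ≠ 0 := by
    rwa [h_prod, sub_ne_zero, ne_comm]
  have h_sum : ∑ i ∈ Finset.Icc 1 m, logQ (1 - ζ ^ i * t) = logQ (1 - t ^ m) := by
    rw [← h_prod, logQ_prod _ _ fun i hi => Finset.prod_ne_zero_iff.1 h_ne i hi]
  simp only [distributionDefect, ← Nat.cast_smul_eq_nsmul ℚ, map_sub, map_smul, map_sum,
    blochWigner_bracket, h_log, Finset.sum_sub_distrib, ← TensorProduct.sum_tmul,
    ← TensorProduct.tmul_sum, h_sum, logQ_pow, TensorProduct.tmul_smul,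
    ← TensorProduct.smul_tmul', smul_sub, sub_self]

lemma distributionDefect_zero (ζ : L) (hm : 0 < m) : distributionDefect ζ m 0 = 0 := by
  simp [distributionDefect, hm.ne']

lemma distributionDefect_of_one (t : L) : distributionDefect 1 1 t = 0 := by
  simp [distributionDefect]

lemma IsEvaluation.apply_distributionDefect {x : L} {s : PreBlochQ L⟮X⟯ →ₗ[ℚ] PreBlochQ L}
    (hs : IsEvaluation x s) (ζ : L) (m : ℕ) :
    s (distributionDefect (algebraMap L[X] L⟮X⟯ (C ζ)) m (algebraMap L[X] L⟮X⟯ X)) =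
      distributionDefect ζ m x := by
  simp only [distributionDefect, map_sub, map_nsmul, map_sum, ← map_pow, ← map_mul, hs _, eval_mul,
    eval_C, eval_pow, eval_X]

lemma four_le_card_of_isPrimitiveRoot (hζ : IsPrimitiveRoot ζ m) (hm : 1 < m) {x : L} (hx : x ≠ 0)
    (hxm : x ^ m ≠ 1) : 4 ≤ ENat.card L := by
  have hζ₀ : ζ ≠ 0 := hζ.ne_zero (by omega)
  have hζ₁ : ζ ≠ 1 := hζ.ne_one hm
  have hx₁ : x ≠ 1 := fun h => hxm (by rw [h, one_pow])
  have hxζ : x ≠ ζ := fun h => hxm (by rw [h, hζ.pow_eq_one])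
  calc 4 = Set.encard {0, 1, ζ, x} := by
        rw [Set.encard_insert_of_notMem (by simp [hζ₀.symm, hx.symm]),
          Set.encard_insert_of_notMem (by simp [hζ₁.symm, hx₁.symm]), Set.encard_pair hxζ.symm]
        norm_num
    _ ≤ ENat.card L := Set.encard_le_card

theorem distributionDefect_eq_zero (hζ : IsPrimitiveRoot ζ m) (hm : 0 < m) {x : L} (hx : x ≠ 0)
    (hxm : x ^ m ≠ 1) : distributionDefect ζ m x = 0 := by
  obtain rfl | hm₁ : m = 1 ∨ 1 < m := by omega
  · rw [IsPrimitiveRoot.one_right_iff.1 hζ, distributionDefect_of_one]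
  have hL := four_le_card_of_isPrimitiveRoot hζ hm₁ hx hxm
  obtain ⟨s, hs⟩ := exists_evaluation hL x
  obtain ⟨s₀, hs₀⟩ := exists_evaluation hL 0
  have h_inj := RatFunc.algebraMap_injective L
  have hζX : IsPrimitiveRoot (algebraMap L[X] L⟮X⟯ (C ζ)) m :=
    (hζ.map_of_injective C_injective).map_of_injective h_inj
  have hX : algebraMap L[X] L⟮X⟯ X ^ m ≠ 1 := by
    rw [← map_pow, Ne, FaithfulSMul.algebraMap_eq_one_iff]
    exact fun h => by simpa [hm.ne'] using congrArg natDegree h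
  have h_eq := evaluation_eq_of_blochWigner_eq_zero hs hs₀
    (blochWigner_distributionDefect hζX hm (RatFunc.algebraMap_ne_zero X_ne_zero) hX)
  rwa [hs.apply_distributionDefect, hs₀.apply_distributionDefect, distributionDefect_zero ζ hm]
    at h_eq

end Distribution

/-- **Distribution relation in the pre-Bloch group:** if `ζ` is a primitive `m`-th root
of unity then `m · Σ_{i=1}^{m} [ζ^i x] = [x^m]` in `ℚ ⊗_ℤ P(F)`, for `x ∈ Fˣ` with
`x^m ≠ 1`. -/
theorem preBloch_distribution_relation (m : ℕ) (hm : 1 ≤ m) (ζ : F)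
    (hζ : IsPrimitiveRoot ζ m) (x : F) (hx0 : x ≠ 0) (hxm : x ^ m ≠ 1) :
    m • (∑ i ∈ Finset.Icc 1 m, preBlochClassQ F (ζ ^ i * x)
        (mul_ne_zero (pow_ne_zero i (hζ.ne_zero (by omega))) hx0)
        (by
          intro h
          apply hxm
          have h2 : (ζ ^ i * x) ^ m = 1 := by rw [h, one_pow]
          rwa [mul_pow, ← pow_mul, mul_comm i m, pow_mul, hζ.pow_eq_one, one_pow,
            one_mul] at h2)) =
      preBlochClassQ F (x ^ m) (pow_ne_zero m hx0) hxm := by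
  simp only [preBlochClassQ_eq_bracket]
  exact sub_eq_zero.1 (distributionDefect_eq_zero hζ hm hx0 hxm)
end

section
/- Let F be a field and let ζ₁, ζ₂ ∈ Fˣ be roots of unity with ζ₁^{m₁} = 1, ζ₂^{m₂} = 1 (m₁, m₂ ≥ 1), ζ₁ ≠ 1, ζ₂ ≠ 1 and ζ₁ ≠ ζ₂. Then in the Milnor K-group K₂^M(F) one has m₁·m₂·{ (1 − ζ₁⁻¹ζ₂)/(1 − ζ₂), (1 − ζ₂⁻¹ζ₁)/(1 − ζ₁) } = 0. -/
open scoped TensorProduct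

variable (F : Type*) [Field F]

/-- The Steinberg elements `a ⊗ (1-a)` (for `a ∈ F ∖ {0,1}`) in `Fˣ ⊗_ℤ Fˣ`. -/
def steinbergSet : Set (TensorProduct ℤ (Additive Fˣ) (Additive Fˣ)) :=
  { z | ∃ (a : F) (h0 : a ≠ 0) (h1 : a ≠ 1),
      z = Additive.ofMul (Units.mk0 a h0) ⊗ₜ[ℤ]
            Additive.ofMul (Units.mk0 (1 - a) (sub_ne_zero.mpr (Ne.symm h1))) }

/-- The Milnor K-group `K₂ᴹ(F)`: the quotient of `Fˣ ⊗_ℤ Fˣ` by the subgroup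
generated by the Steinberg elements `a ⊗ (1-a)`. -/
abbrev MilnorK2 := TensorProduct ℤ (Additive Fˣ) (Additive Fˣ) ⧸
  AddSubgroup.closure (steinbergSet F)

/-- The symbol `{a, b}` in `K₂ᴹ(F)`, for nonzero `a, b ∈ F`. -/
noncomputable def milnorSymbol (a b : F) (ha : a ≠ 0) (hb : b ≠ 0) : MilnorK2 F :=
  QuotientAddGroup.mk
    (Additive.ofMul (Units.mk0 a ha) ⊗ₜ[ℤ] Additive.ofMul (Units.mk0 b hb))

section Aux

variable {F}

lemma aux_num₁ {ζ₁ ζ₂ : Fˣ} (hne : ζ₁ ≠ ζ₂) : 1 - ((ζ₁ : F))⁻¹ * (ζ₂ : F) ≠ 0 := by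
  rw [sub_ne_zero]
  intro h
  apply hne
  apply Units.ext
  have h' : (ζ₁ : F) * 1 = (ζ₁ : F) * ((ζ₁ : F)⁻¹ * (ζ₂ : F)) := by rw [← h]
  rwa [mul_one, ← mul_assoc, mul_inv_cancel₀ (Units.ne_zero ζ₁), one_mul] at h'

lemma aux_den {ζ : Fˣ} (hζ : ζ ≠ 1) : 1 - (ζ : F) ≠ 0 := by
  rw [sub_ne_zero]
  intro h
  exact hζ (Units.ext (by rw [← h, Units.val_one]))

end Aux

/-!
Since `n • {a, b} = {a ^ n, b} = {a, b ^ n}`, multiplying the entries of a symbol by roots of unity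
of order dividing `n` does not change its `n`-th multiple. Multiplied by `ζ₁` and `ζ₂`, the entries
of the symbol in the theorem become `(ζ₁ - ζ₂) / (1 - ζ₂)` and `(ζ₂ - ζ₁) / (1 - ζ₁)`, whose
inverses add up to `1`; as `{a⁻¹, b⁻¹} = {a, b}`, the new symbol vanishes by the Steinberg relation.
-/

section Bilinear

variable {R M N P : Type*} [CommSemiring R] [AddCommMonoid M] [AddCommMonoid N] [AddCommMonoid P]
  [Module R M] [Module R N] [Module R P]

lemma smul_bilin_apply_congr (f : M →ₗ[R] N →ₗ[R] P) {r : R} {u u' : M} {v v' : N}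
    (hu : r • u = r • u') (hv : r • v = r • v') : r • f u v = r • f u' v' :=
  calc r • f u v = f (r • u) v := (f.map_smul₂ r u v).symm
    _ = f u' (r • v) := by rw [hu, f.map_smul₂, map_smul]
    _ = r • f u' v' := by rw [hv, map_smul]

end Bilinear

section Symbol

variable {F} {a b : F}

variable (F) in
/-- The symbol as a `ℤ`-bilinear map on `Fˣ`, written additively; its values are those of
`milnorSymbol`, but here the library's lemmas on linear maps apply. -/
noncomputable def milnorSymbolBilin : Additive Fˣ →ₗ[ℤ] Additive Fˣ →ₗ[ℤ] MilnorK2 F :=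
  (TensorProduct.mk ℤ (Additive Fˣ) (Additive Fˣ)).compr₂
    (QuotientAddGroup.mk' (AddSubgroup.closure (steinbergSet F))).toIntLinearMap

lemma milnorSymbol_eq_milnorSymbolBilin (ha : a ≠ 0) (hb : b ≠ 0) :
    milnorSymbol F a b ha hb =
      milnorSymbolBilin F (.ofMul (Units.mk0 a ha)) (.ofMul (Units.mk0 b hb)) :=
  rfl

lemma milnorSymbol_inv_inv (ha : a ≠ 0) (hb : b ≠ 0) :
    milnorSymbol F a⁻¹ b⁻¹ (inv_ne_zero ha) (inv_ne_zero hb) = milnorSymbol F a b ha hb := by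
  have mk0_inv {c : F} (hc : c ≠ 0) : Units.mk0 c⁻¹ (inv_ne_zero hc) = (Units.mk0 c hc)⁻¹ :=
    Units.ext rfl
  simp only [milnorSymbol_eq_milnorSymbolBilin, mk0_inv ha, mk0_inv hb, ofMul_inv, map_neg,
    LinearMap.neg_apply, neg_neg]

lemma milnorSymbol_eq_zero_of_add_eq_one (ha : a ≠ 0) (hb : b ≠ 0) (hab : a + b = 1) :
    milnorSymbol F a b ha hb = 0 := by
  obtain rfl : b = 1 - a := eq_sub_of_add_eq' hab
  exact (QuotientAddGroup.eq_zero_iff _).mpr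
    (AddSubgroup.subset_closure ⟨a, ha, (sub_ne_zero.mp hb).symm, rfl⟩)

lemma milnorSymbol_eq_zero_of_inv_add_inv_eq_one (ha : a ≠ 0) (hb : b ≠ 0)
    (hab : a⁻¹ + b⁻¹ = 1) : milnorSymbol F a b ha hb = 0 := by
  rw [← milnorSymbol_inv_inv]
  exact milnorSymbol_eq_zero_of_add_eq_one _ _ hab

lemma nsmul_milnorSymbol_mul_mul_of_pow_eq_one {n : ℕ} {ζ₁ ζ₂ : Fˣ} (hζ₁ : ζ₁ ^ n = 1)
    (hζ₂ : ζ₂ ^ n = 1) (ha : a ≠ 0) (hb : b ≠ 0) :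
    n • milnorSymbol F (ζ₁ * a) (ζ₂ * b) (mul_ne_zero ζ₁.ne_zero ha) (mul_ne_zero ζ₂.ne_zero hb) =
      n • milnorSymbol F a b ha hb := by
  have zsmul_ofMul_mul {ζ : Fˣ} (hζ : ζ ^ n = 1) {c : F} (hc : c ≠ 0) :
      (n : ℤ) • Additive.ofMul (Units.mk0 (ζ * c) (mul_ne_zero ζ.ne_zero hc)) =
        (n : ℤ) • Additive.ofMul (Units.mk0 c hc) := by
    rw [natCast_zsmul, natCast_zsmul, ← ofMul_pow, ← ofMul_pow, Units.mk0_mul, Units.mk0_val,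
      mul_pow, hζ, one_mul]
  simpa only [milnorSymbol_eq_milnorSymbolBilin, natCast_zsmul] using
    smul_bilin_apply_congr (milnorSymbolBilin F) (zsmul_ofMul_mul hζ₁ ha) (zsmul_ofMul_mul hζ₂ hb)

end Symbol

section Field

variable {F} {x y : F}

lemma mul_one_sub_inv_mul_div_one_sub (hx : x ≠ 0) :
    x * ((1 - x⁻¹ * y) / (1 - y)) = (x - y) / (1 - y) := by
  rw [← mul_div_assoc, mul_sub, mul_one, mul_inv_cancel_left₀ hx]

lemma one_sub_div_sub_add_one_sub_div_sub (hxy : x ≠ y) :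
    (1 - y) / (x - y) + (1 - x) / (y - x) = 1 := by
  have hsub : x - y ≠ 0 := sub_ne_zero.mpr hxy
  rw [← neg_sub x y, div_neg, ← sub_eq_add_neg, ← sub_div, sub_sub_sub_cancel_left, div_self hsub]

end Field

theorem milnorK2_torsion_symbol_general (n : ℕ) (ζ₁ ζ₂ : Fˣ) (hζ₁ : ζ₁ ^ n = 1)
    (hζ₂ : ζ₂ ^ n = 1) (h₁ : ζ₁ ≠ 1) (h₂ : ζ₂ ≠ 1) (hne : ζ₁ ≠ ζ₂) :
    n • milnorSymbol F
        ((1 - (ζ₁ : F)⁻¹ * (ζ₂ : F)) / (1 - (ζ₂ : F)))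
        ((1 - (ζ₂ : F)⁻¹ * (ζ₁ : F)) / (1 - (ζ₁ : F)))
        (div_ne_zero (aux_num₁ hne) (aux_den h₂))
        (div_ne_zero (aux_num₁ hne.symm) (aux_den h₁)) = 0 := by
  rw [← nsmul_milnorSymbol_mul_mul_of_pow_eq_one hζ₁ hζ₂,
    milnorSymbol_eq_zero_of_inv_add_inv_eq_one, smul_zero]
  rw [mul_one_sub_inv_mul_div_one_sub ζ₁.ne_zero, mul_one_sub_inv_mul_div_one_sub ζ₂.ne_zero,
    inv_div, inv_div]
  exact one_sub_div_sub_add_one_sub_div_sub (Units.val_injective.ne hne)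

/-- **Vanishing of the torsion symbol in `K₂ᴹ(F)`:** for roots of unity
`ζ₁, ζ₂ ∈ Fˣ` with `ζ₁^{m₁} = ζ₂^{m₂} = 1`, `ζ₁ ≠ 1`, `ζ₂ ≠ 1` and `ζ₁ ≠ ζ₂`, one has
`m₁·m₂·{ (1 - ζ₁⁻¹ζ₂)/(1 - ζ₂), (1 - ζ₂⁻¹ζ₁)/(1 - ζ₁) } = 0`. -/
theorem milnorK2_torsion_symbol (m₁ m₂ : ℕ) (hm₁ : 1 ≤ m₁) (hm₂ : 1 ≤ m₂)
    (ζ₁ ζ₂ : Fˣ) (hζ₁ : ζ₁ ^ m₁ = 1) (hζ₂ : ζ₂ ^ m₂ = 1)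
    (h₁ : ζ₁ ≠ 1) (h₂ : ζ₂ ≠ 1) (hne : ζ₁ ≠ ζ₂) :
    (m₁ * m₂) • milnorSymbol F
        ((1 - ((ζ₁ : F))⁻¹ * (ζ₂ : F)) / (1 - (ζ₂ : F)))
        ((1 - ((ζ₂ : F))⁻¹ * (ζ₁ : F)) / (1 - (ζ₁ : F)))
        (div_ne_zero (aux_num₁ hne) (aux_den h₂))
        (div_ne_zero (aux_num₁ (Ne.symm hne)) (aux_den h₁)) = 0 := by
  exact milnorK2_torsion_symbol_general F (m₁ * m₂) ζ₁ ζ₂ (by rw [pow_mul, hζ₁, one_pow])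
    (by rw [pow_mul', hζ₂, one_pow]) h₁ h₂ hne
end

section
/- Let R be a discrete valuation ring with uniformizer π, let R[[s]] be the ring of formal power series over R, and let B be the localization of R[[s]] at the multiplicative submonoid generated by π·s (so B = R[[s]][π⁻¹, s⁻¹]). Then the map R[[s]]ˣ × ℤ × ℤ → Bˣ sending (v, a, b) to v·π^a·s^b is an isomorphism of groups; in particular every unit of B can be written uniquely in this form. -/
open PowerSeries

/-!
In the domain `R⟦X⟧` both `C π` and `X` are prime, because the quotients `(R ⧸ π)⟦X⟧` and `R` are
domains, and they are not associated. For non-associated primes `p`, `q` of a domain `A`, an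
element of `A` becomes a unit in `A[(p * q)⁻¹]` exactly when it divides a power of `p * q`, and by
primality such a divisor is a unit of `A` times a monomial in `p` and `q`. Uniqueness of the
exponents is uniqueness of the prime powers in such a monomial, after clearing denominators.
-/

section PrimePowers

variable {M : Type*} [CommMonoidWithZero M] [IsCancelMulZero M] {p q : M}

theorem exists_eq_units_mul_pow_mul_pow_of_dvd (hp : Prime p) (hq : Prime q) {x : M} {m n : ℕ}
    (hx : x ∣ p ^ m * q ^ n) : ∃ (v : Mˣ) (i j : ℕ), x = v * p ^ i * q ^ j := by
  obtain ⟨y, hxy⟩ := hx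
  obtain ⟨j, -, b, c, -, hbc, rfl, -⟩ := mul_eq_mul_prime_pow hq hxy.symm
  obtain ⟨i, -, hb⟩ := (dvd_prime_pow hp m).1 ⟨c, hbc⟩
  obtain ⟨v, rfl⟩ := hb.symm
  exact ⟨v, i, j, by rw [mul_comm (v : M)]⟩

theorem le_of_prime_pow_mul_eq_pow_mul (hp : Prime p) {x y : M} (hy : ¬p ∣ y) {i j : ℕ}
    (h : p ^ i * x = p ^ j * y) : i ≤ j :=
  (pow_dvd_pow_iff hp.ne_zero hp.not_isUnit).1
    (hp.pow_dvd_of_dvd_mul_right i hy (h ▸ dvd_mul_right _ _))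

theorem eq_of_prime_pow_mul_eq_pow_mul (hp : Prime p) {x y : M} (hx : ¬p ∣ x) (hy : ¬p ∣ y)
    {i j : ℕ} (h : p ^ i * x = p ^ j * y) : i = j :=
  (le_of_prime_pow_mul_eq_pow_mul hp hy h).antisymm (le_of_prime_pow_mul_eq_pow_mul hp hx h.symm)

theorem not_dvd_units_mul_pow_of_not_associated (hp : Prime p) (hq : Prime q)
    (hpq : ¬Associated p q) (v : Mˣ) (n : ℕ) : ¬p ∣ v * q ^ n := fun h ↦
  hpq (hp.associated_of_dvd hq (hp.dvd_of_dvd_pow (Units.dvd_mul_left.1 h)))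

theorem units_mul_pow_mul_pow_inj (hp : Prime p) (hq : Prime q) (hpq : ¬Associated p q)
    {v w : Mˣ} {i j k l : ℕ} :
    (v : M) * p ^ i * q ^ j = w * p ^ k * q ^ l ↔ v = w ∧ i = k ∧ j = l := by
  refine ⟨fun h ↦ ?_, by rintro ⟨rfl, rfl, rfl⟩; rfl⟩
  obtain rfl : i = k := eq_of_prime_pow_mul_eq_pow_mul hp
    (not_dvd_units_mul_pow_of_not_associated hp hq hpq v j)
    (not_dvd_units_mul_pow_of_not_associated hp hq hpq w l)
    (by simpa only [mul_assoc, mul_left_comm] using h)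
  obtain rfl : j = l := eq_of_prime_pow_mul_eq_pow_mul hq
    (not_dvd_units_mul_pow_of_not_associated hq hp (hpq ∘ .symm) v i)
    (not_dvd_units_mul_pow_of_not_associated hq hp (hpq ∘ .symm) w i)
    (by simpa only [mul_comm, mul_left_comm] using h)
  refine ⟨Units.ext ?_, rfl, rfl⟩
  exact mul_right_cancel₀ (pow_ne_zero i hp.ne_zero)
    (mul_right_cancel₀ (pow_ne_zero j hq.ne_zero) h)

end PrimePowers

section UnitsMulZPow

variable (A : Type*) {B : Type*} [CommSemiring A] [CommSemiring B] [Algebra A B]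

/-- The homomorphism `(v, a, b) ↦ v * P ^ a * Q ^ b` into the units of an `A`-algebra, where `v`
is a unit of `A` and `P`, `Q` are units of the algebra. The exponents are written multiplicatively
so that source and target are both multiplicative groups. -/
noncomputable def unitsMulZPowHom (P Q : Bˣ) : Aˣ × Multiplicative ℤ × Multiplicative ℤ →* Bˣ :=
  (Units.map (algebraMap A B : A →* B)).coprod ((zpowersHom Bˣ P).coprod (zpowersHom Bˣ Q))

variable {A}

theorem unitsMulZPowHom_apply (P Q : Bˣ) (v : Aˣ) (a b : ℤ) :
    unitsMulZPowHom A P Q (v, Multiplicative.ofAdd a, Multiplicative.ofAdd b) =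
      Units.map (algebraMap A B : A →* B) v * P ^ a * Q ^ b := by
  simp [unitsMulZPowHom, mul_assoc]

theorem unitsMulZPowHom_apply_natCast_sub (P Q : Bˣ) (v : Aˣ) (i j k l : ℕ) :
    unitsMulZPowHom A P Q (v, Multiplicative.ofAdd (i - k : ℤ), Multiplicative.ofAdd (j - l : ℤ)) =
      Units.map (algebraMap A B : A →* B) v * P ^ i * Q ^ j / (P ^ k * Q ^ l) := by
  rw [unitsMulZPowHom_apply, zpow_natCast_sub_natCast, zpow_natCast_sub_natCast, mul_assoc,
    div_mul_div_comm, ← mul_div_assoc, mul_assoc]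

variable [IsCancelMulZero A] {p q : A} {P Q : Bˣ}

theorem unitsMulZPowHom_injective (hp : Prime p) (hq : Prime q) (hpq : ¬Associated p q)
    (hAB : Function.Injective (algebraMap A B)) (hP : (P : B) = algebraMap A B p)
    (hQ : (Q : B) = algebraMap A B q) : Function.Injective (unitsMulZPowHom A P Q) := by
  rw [injective_iff_map_eq_one]
  rintro ⟨v, a, b⟩ h
  obtain ⟨i, k, rfl⟩ : ∃ i k : ℕ, a = Multiplicative.ofAdd (i - k : ℤ) :=
    ⟨_, _, (congrArg Multiplicative.ofAdd (Int.toNat_sub_toNat_neg a.toAdd)).symm⟩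
  obtain ⟨j, l, rfl⟩ : ∃ j l : ℕ, b = Multiplicative.ofAdd (j - l : ℤ) :=
    ⟨_, _, (congrArg Multiplicative.ofAdd (Int.toNat_sub_toNat_neg b.toAdd)).symm⟩
  have cleared : Units.map (algebraMap A B : A →* B) v * P ^ i * Q ^ j = P ^ k * Q ^ l := by
    rwa [unitsMulZPowHom_apply_natCast_sub, div_eq_one] at h
  have cleared_in_A : (v : A) * p ^ i * q ^ j = (1 : Aˣ) * p ^ k * q ^ l :=
    hAB (by simpa [hP, hQ] using congrArg Units.val cleared)
  obtain ⟨rfl, rfl, rfl⟩ := (units_mul_pow_mul_pow_inj hp hq hpq).1 cleared_in_A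
  simp only [sub_self, ofAdd_zero, Prod.mk_one_one]

theorem unitsMulZPowHom_surjective [IsLocalization.Away (p * q) B] (hp : Prime p) (hq : Prime q)
    (hP : (P : B) = algebraMap A B p) (hQ : (Q : B) = algebraMap A B q) :
    Function.Surjective (unitsMulZPowHom A P Q) := by
  intro u
  obtain ⟨n, x, hx⟩ := IsLocalization.Away.surj (p * q) (u : B)
  have x_isUnit : IsUnit (algebraMap A B x) :=
    hx ▸ u.isUnit.mul (IsLocalization.Away.algebraMap_pow_isUnit (p * q) n)
  obtain ⟨m, x_dvd⟩ := (IsLocalization.Away.algebraMap_isUnit_iff (p * q)).1 x_isUnit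
  obtain ⟨v, i, j, rfl⟩ := exists_eq_units_mul_pow_mul_pow_of_dvd hp hq (mul_pow p q m ▸ x_dvd)
  have cleared : u * (P ^ n * Q ^ n) = Units.map (algebraMap A B : A →* B) v * P ^ i * Q ^ j :=
    Units.ext (by simpa [hP, hQ, mul_pow] using hx)
  refine ⟨(v, Multiplicative.ofAdd (i - n : ℤ), Multiplicative.ofAdd (j - n : ℤ)), ?_⟩
  rw [unitsMulZPowHom_apply_natCast_sub, ← cleared, mul_div_cancel_right]

end UnitsMulZPow

section PowerSeries

theorem powerSeries_C_dvd_iff {R : Type*} [CommSemiring R] {r : R} {f : R⟦X⟧} :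
    C r ∣ f ↔ ∀ n, r ∣ coeff n f := by
  refine ⟨?_, fun h ↦ ?_⟩
  · rintro ⟨g, rfl⟩ n
    exact ⟨coeff n g, coeff_C_mul n g r⟩
  · choose g hg using h
    exact ⟨mk g, by ext n; rw [coeff_C_mul, coeff_mk, hg]⟩

theorem powerSeries_not_associated_C_X {R : Type*} [CommSemiring R] {r : R} (hr : r ≠ 0) :
    ¬Associated (C r : R⟦X⟧) X := fun h ↦
  hr (by simpa using X_dvd_iff.1 h.symm.dvd)

variable {R : Type*} [CommRing R] {π : R}

theorem powerSeries_C_dvd_iff_map_mk_eq_zero {f : R⟦X⟧} :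
    C π ∣ f ↔ map (Ideal.Quotient.mk (Ideal.span {π})) f = 0 := by
  simp only [powerSeries_C_dvd_iff, PowerSeries.ext_iff, coeff_map, map_zero,
    Ideal.Quotient.eq_zero_iff_dvd]

theorem powerSeries_prime_C (hπ : Prime π) : Prime (C π : R⟦X⟧) := by
  have : (Ideal.span {π}).IsPrime := (Ideal.span_singleton_prime hπ.ne_zero).2 hπ
  refine ⟨fun h ↦ hπ.ne_zero ?_, fun h ↦ hπ.not_isUnit ?_, fun f g ↦ ?_⟩
  · simpa using congrArg constantCoeff h
  · simpa using h.map (constantCoeff (R := R))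
  · simp only [powerSeries_C_dvd_iff_map_mk_eq_zero, map_mul, mul_eq_zero, imp_self]

theorem units_of_localized_power_series_general [IsDomain R] (hπ : Prime π) (B : Type*)
    [CommRing B] [Algebra R⟦X⟧ B] [IsLocalization.Away (C π * X : R⟦X⟧) B] :
    ∃ (hπu : IsUnit (algebraMap R⟦X⟧ B (C π))) (hsu : IsUnit (algebraMap R⟦X⟧ B X))
      (e : R⟦X⟧ˣ × Multiplicative ℤ × Multiplicative ℤ ≃* Bˣ), ∀ (v : R⟦X⟧ˣ) (a b : ℤ),
        e (v, Multiplicative.ofAdd a, Multiplicative.ofAdd b) =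
          Units.map (algebraMap R⟦X⟧ B : R⟦X⟧ →* B) v * hπu.unit ^ a * hsu.unit ^ b := by
  have hC : Prime (C π : R⟦X⟧) := powerSeries_prime_C hπ
  have hX : Prime (X : R⟦X⟧) := X_prime
  have hCX : ¬Associated (C π : R⟦X⟧) X := powerSeries_not_associated_C_X hπ.ne_zero
  have hinj : Function.Injective (algebraMap R⟦X⟧ B) := IsLocalization.injective B
    (powers_le_nonZeroDivisors_of_noZeroDivisors (mul_ne_zero hC.ne_zero hX.ne_zero))
  have hπu : IsUnit (algebraMap R⟦X⟧ B (C π)) :=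
    IsLocalization.Away.isUnit_of_dvd (C π * X) (dvd_mul_right _ _)
  have hsu : IsUnit (algebraMap R⟦X⟧ B X) :=
    IsLocalization.Away.isUnit_of_dvd (C π * X) (dvd_mul_left _ _)
  exact ⟨hπu, hsu, .ofBijective (unitsMulZPowHom R⟦X⟧ hπu.unit hsu.unit)
    ⟨unitsMulZPowHom_injective hC hX hCX hinj hπu.unit_spec hsu.unit_spec,
      unitsMulZPowHom_surjective hC hX hπu.unit_spec hsu.unit_spec⟩,
    unitsMulZPowHom_apply hπu.unit hsu.unit⟩

end PowerSeries

/-- **Units of `R[[s]][π⁻¹, s⁻¹]`:** for a discrete valuation ring `R` with uniformizer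
`π`, every unit of the localization `B` of `R[[s]]` away from `π·s` is uniquely of the
form `v·π^a·s^b` with `v ∈ R[[s]]ˣ` and `a, b ∈ ℤ`; more precisely `(v, a, b) ↦ v·π^a·s^b`
is an isomorphism of groups `R[[s]]ˣ × ℤ × ℤ ≃ Bˣ`. -/
theorem units_of_localized_power_series (R : Type*) [CommRing R] [IsDomain R]
    [IsDiscreteValuationRing R] (π : R)
    (hπ : IsLocalRing.maximalIdeal R = Ideal.span {π}) :
    ∃ (hπu : IsUnit (algebraMap (PowerSeries R)
          (Localization (Submonoid.powers ((PowerSeries.C π) * PowerSeries.X)))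
          (PowerSeries.C π)))
      (hsu : IsUnit (algebraMap (PowerSeries R)
          (Localization (Submonoid.powers ((PowerSeries.C π) * PowerSeries.X)))
          PowerSeries.X))
      (e : (PowerSeries R)ˣ × Multiplicative ℤ × Multiplicative ℤ ≃*
          (Localization (Submonoid.powers ((PowerSeries.C π) * PowerSeries.X)))ˣ),
      ∀ (v : (PowerSeries R)ˣ) (a b : ℤ),
        e (v, Multiplicative.ofAdd a, Multiplicative.ofAdd b) =
          Units.map (algebraMap (PowerSeries R)
              (Localization (Submonoid.powers ((PowerSeries.C π) * PowerSeries.X)))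
              : PowerSeries R →* _) v * hπu.unit ^ a * hsu.unit ^ b := by
  exact units_of_localized_power_series_general
    ((IsDiscreteValuationRing.irreducible_iff_uniformizer π).2 hπ).prime _
end

section
/- Let O be a discrete valuation ring with maximal ideal 𝔪 and normalized additive valuation v, and let p be a prime number lying in 𝔪 with e := v(p) < ∞. Let k ≥ 0 and l ≥ 0 be integers with e ≤ l + 1. Then for every x ∈ 𝔪^{l+1} one has (1 + x)^{p^k} ∈ 1 + 𝔪^{ek+l+1}; equivalently, (1 + 𝔪^{l+1})^{p^k} ⊆ 1 + 𝔪^{ek+l+1}. -/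
/-!
Write `a ^ n - b ^ n = (∑ i < n, a ^ i * b ^ (n - 1 - i)) * (a - b)`. When `a ≡ b` modulo an
ideal `I`, the sum is congruent to `n * b ^ (n - 1)`, so it lies in `I` as soon as `n` does. Each
`n`-th power therefore gains a factor `I`, and no binomial coefficients have to be estimated.
-/

section PowSubPow

variable {R : Type*} [CommRing R] {I J : Ideal R} {n : ℕ} {a b : R}

theorem geom_sum₂_mem_of_sub_mem (hn : (n : R) ∈ I) (hab : a - b ∈ I) :
    ∑ i ∈ Finset.range n, a ^ i * b ^ (n - 1 - i) ∈ I := by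
  have hab' : Ideal.Quotient.mk I a = Ideal.Quotient.mk I b := Ideal.Quotient.eq.mpr hab
  have hn' : (n : R ⧸ I) = 0 := by
    rw [← map_natCast (Ideal.Quotient.mk I), Ideal.Quotient.eq_zero_iff_mem.mpr hn]
  rw [← Ideal.Quotient.eq_zero_iff_mem, RingHom.map_geom_sum₂, hab', geom_sum₂_self, hn',
    zero_mul]

theorem pow_sub_pow_mem_mul (hn : (n : R) ∈ I) (hJI : J ≤ I) (hab : a - b ∈ J) :
    a ^ n - b ^ n ∈ I * J := by
  rw [← geom_sum₂_mul]
  exact Ideal.mul_mem_mul (geom_sum₂_mem_of_sub_mem hn (hJI hab)) hab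

theorem pow_pow_sub_pow_pow_mem (hn : (n : R) ∈ I) (hJI : J ≤ I) (hab : a - b ∈ J) (k : ℕ) :
    a ^ n ^ k - b ^ n ^ k ∈ I ^ k * J := by
  induction k with
  | zero => simpa using hab
  | succ k ih =>
    rw [pow_succ n, pow_mul, pow_mul, pow_succ' I, mul_assoc]
    exact pow_sub_pow_mem_mul hn (Ideal.mul_le_right.trans hJI) ih

theorem pow_p_pow_principal_units_general {e l : ℕ} (hn : (n : R) ∈ I ^ e) (hel : e ≤ l + 1)
    {x : R} (hx : x ∈ I ^ (l + 1)) (k : ℕ) :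
    (1 + x) ^ n ^ k - 1 ∈ I ^ (e * k + l + 1) := by
  have hx' : (1 + x) - 1 ∈ I ^ (l + 1) := by rwa [add_sub_cancel_left]
  have hpow := pow_pow_sub_pow_pow_mem hn (Ideal.pow_le_pow_right hel) hx' k
  rwa [one_pow, ← pow_mul, ← pow_add, ← add_assoc] at hpow

end PowSubPow

/-- **p-th power map on principal units:** let `O` be a discrete valuation ring with
maximal ideal `𝔪`, and let `p` be a prime lying in `𝔪` with normalized valuation
`e = v(p)` (expressed by `p ∈ 𝔪^e`, `p ∉ 𝔪^{e+1}`).  If `e ≤ l + 1`, then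
`(1 + 𝔪^{l+1})^{p^k} ⊆ 1 + 𝔪^{ek+l+1}`: for every `x ∈ 𝔪^{l+1}` one has
`(1 + x)^{p^k} ∈ 1 + 𝔪^{ek+l+1}`. -/
theorem pow_p_pow_principal_units (O : Type*) [CommRing O] [IsDomain O]
    [IsDiscreteValuationRing O] (p : ℕ) (hp : p.Prime)
    (hpm : (p : O) ∈ IsLocalRing.maximalIdeal O)
    (e : ℕ) (hpe : (p : O) ∈ IsLocalRing.maximalIdeal O ^ e)
    (hpe' : (p : O) ∉ IsLocalRing.maximalIdeal O ^ (e + 1))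
    (k l : ℕ) (hel : e ≤ l + 1) :
    ∀ x ∈ IsLocalRing.maximalIdeal O ^ (l + 1),
      (1 + x) ^ p ^ k - 1 ∈ IsLocalRing.maximalIdeal O ^ (e * k + l + 1) := by
  intro x hx
  exact pow_p_pow_principal_units_general hpe hel hx k
end

section
/- Let O be a complete discrete valuation ring of characteristic 0 with maximal ideal 𝔪, normalized valuation v, and residue field of characteristic p; set e := v(p). Let k ≥ 0 and l ≥ 1 be integers with l > e/(p−1), and set i := ek + l. Then every element of 1 + 𝔪^{i} is a p^k-th power of an element of 1 + 𝔪^{l}: for every y ∈ 𝔪^{i} there exists x ∈ 𝔪^{l} with (1 + x)^{p^k} = 1 + y. -/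
/-!
In a discrete valuation ring with maximal ideal `I`, an element of valuation `e` divides every
element of `I ^ e`. If `p` has this property and `e < (p - 1) * m`, then for `x ∈ I` and `z ∈ I ^ m`
the binomial expansion gives `(1 + x + z) ^ p ≡ (1 + x) ^ p + p z` modulo `p I ^ (m + 1)`:
the middle binomial coefficients are divisible by `p`, and `z ^ p ∈ I ^ (p m)` lies in
`I ^ (e + m + 1)`. Hence an error in `p I ^ m` can be removed modulo `p I ^ (m + 1)` by a correction
`z ∈ I ^ m`, and completeness yields exact `p`-th roots. Iterating `k` times gives `p ^ k`-th roots.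
Errors are measured by `p I ^ m` rather than `I ^ (e + m)`, so that `p` never has to be cancelled.
-/

theorem maximalIdeal_pow_le_span_singleton {R : Type*} [CommRing R] [IsDomain R] [IsLocalRing R]
    [IsPrincipalIdealRing R] {x : R} {n : ℕ} (hx : x ∉ IsLocalRing.maximalIdeal R ^ (n + 1)) :
    IsLocalRing.maximalIdeal R ^ n ≤ Ideal.span {x} := by
  have span_ne_bot : Ideal.span {x} ≠ ⊥ := by
    rw [Ne, Ideal.span_singleton_eq_bot]
    rintro rfl
    exact hx (zero_mem _)
  obtain ⟨j, hj⟩ := exists_maximalIdeal_pow_eq_of_principal R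
    (IsPrincipalIdealRing.principal _) (Ideal.span {x}) span_ne_bot
  have j_le : j ≤ n := by
    by_contra! n_lt
    exact hx (Ideal.pow_le_pow_right n_lt (hj ▸ Ideal.mem_span_singleton_self x))
  exact hj ▸ Ideal.pow_le_pow_right j_le

section CommRing

variable {R : Type*} [CommRing R] {I : Ideal R}

theorem natCast_mul_sq_dvd_add_pow_prime_sub {p : ℕ} (hp : p.Prime) (a z : R) :
    (p : R) * z ^ 2 ∣ (a + z) ^ p - (a ^ p + p * a ^ (p - 1) * z + z ^ p) := by
  obtain ⟨q, rfl⟩ : ∃ q, p = q + 2 := Nat.exists_eq_add_of_le' hp.two_le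
  have pred_eq : q + 2 - 1 = q + 1 := rfl
  have expansion : (a + z) ^ (q + 2) - (a ^ (q + 2) + (q + 2 : ℕ) * a ^ (q + 1) * z + z ^ (q + 2)) =
      ∑ j ∈ Finset.range q, z ^ (j + 2) * a ^ (q - j) * ((q + 2).choose (j + 2) : R) := by
    rw [add_comm a z, add_pow, Finset.sum_range_succ, Finset.sum_range_succ',
      Finset.sum_range_succ']
    simp only [pred_eq, Nat.add_sub_add_right, Nat.sub_zero, Nat.sub_self, zero_add, pow_zero,
      pow_one, Nat.choose_zero_right, Nat.choose_one_right, Nat.choose_self, Nat.cast_one]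
    ring
  rw [pred_eq, expansion]
  refine Finset.dvd_sum fun j hj ↦ ?_
  have prime_dvd_choose : ((q + 2 : ℕ) : R) ∣ ((q + 2).choose (j + 2) : R) :=
    Nat.cast_dvd_cast <| hp.dvd_choose_self (by omega) (by simpa using hj)
  have sq_dvd : z ^ 2 ∣ z ^ (j + 2) * a ^ (q - j) := (pow_dvd_pow z (by omega)).mul_right _
  rw [mul_comm ((q + 2 : ℕ) : R)]
  exact mul_dvd_mul sq_dvd prime_dvd_choose

theorem pow_mem_mul_pow_succ {J : Ideal R} {n e m : ℕ} {z : R} (hI : I ^ e ≤ J)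
    (hm : e < (n - 1) * m) (hz : z ∈ I ^ m) : z ^ n ∈ J * I ^ (m + 1) := by
  have exponent_le : e + (m + 1) ≤ m * n := by
    cases n with
    | zero => simp at hm
    | succ q =>
      rw [Nat.add_sub_cancel] at hm
      linarith
  have pow_mem : z ^ n ∈ I ^ (m * n) := pow_mul I m n ▸ Ideal.pow_mem_pow hz n
  have pow_mem_mul : z ^ n ∈ I ^ e * I ^ (m + 1) :=
    pow_add I e (m + 1) ▸ Ideal.pow_le_pow_right exponent_le pow_mem
  exact Ideal.mul_mono_left hI pow_mem_mul

theorem one_add_add_pow_prime_sub_mem {p e m : ℕ} {x z : R} (hp : p.Prime)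
    (hI : I ^ e ≤ Ideal.span {(p : R)}) (hm : e < (p - 1) * m) (hx : x ∈ I) (hz : z ∈ I ^ m) :
    (1 + x + z) ^ p - ((1 + x) ^ p + p * z) ∈ Ideal.span {(p : R)} * I ^ (m + 1) := by
  have m_pos : 0 < m := Nat.pos_of_mul_pos_left (Nat.zero_lt_of_lt hm)
  obtain ⟨r, hr⟩ := natCast_mul_sq_dvd_add_pow_prime_sub hp (1 + x) z
  have pow_sub_one_mem : (1 + x) ^ (p - 1) - 1 ∈ I :=
    Ideal.mem_of_dvd I (by simpa using sub_one_dvd_pow_sub_one (1 + x) (p - 1)) hx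
  have linear_mem : z * ((1 + x) ^ (p - 1) - 1) ∈ I ^ (m + 1) :=
    pow_succ I m ▸ Ideal.mul_mem_mul hz pow_sub_one_mem
  have sq_mem : z ^ 2 ∈ I ^ (m + 1) :=
    Ideal.pow_le_pow_right (by omega) (pow_mul I m 2 ▸ Ideal.pow_mem_pow hz 2)
  have split : (1 + x + z) ^ p - ((1 + x) ^ p + p * z) =
      p * (z * ((1 + x) ^ (p - 1) - 1) + z ^ 2 * r) + z ^ p := by
    linear_combination hr
  rw [split]
  exact add_mem
    (Ideal.mul_mem_mul (Ideal.mem_span_singleton_self _)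
      (add_mem linear_mem (Ideal.mul_mem_right r _ sq_mem)))
    (pow_mem_mul_pow_succ hI hm hz)

theorem exists_sub_one_add_add_pow_prime_mem {p e m : ℕ} {u x : R} (hp : p.Prime)
    (hI : I ^ e ≤ Ideal.span {(p : R)}) (hm : e < (p - 1) * m) (hx : x ∈ I)
    (hu : u - (1 + x) ^ p ∈ Ideal.span {(p : R)} * I ^ m) :
    ∃ z ∈ I ^ m, u - (1 + (x + z)) ^ p ∈ Ideal.span {(p : R)} * I ^ (m + 1) := by
  obtain ⟨z, z_mem, hz⟩ := Ideal.mem_span_singleton_mul.1 hu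
  refine ⟨z, z_mem, ?_⟩
  rw [← add_assoc, ← sub_add_cancel u ((1 + x) ^ p), ← hz, add_comm (_ * z), ← neg_mem_iff, neg_sub]
  exact one_add_add_pow_prime_sub_mem hp hI hm hx z_mem

theorem exists_adic_limit_of_approximations [IsPrecomplete I R] (P : ℕ → R → Prop)
    (base : ∃ x, P 0 x) (step : ∀ n x, P n x → ∃ z ∈ I ^ n, P (n + 1) (x + z)) :
    ∃ x, ∀ n, ∃ x', x - x' ∈ I ^ n ∧ P n x' := by
  obtain ⟨x₀, hx₀⟩ := base
  choose! correction correction_mem correction_spec using step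
  let s : ℕ → R := fun n ↦ Nat.rec x₀ (fun n x ↦ x + correction n x) n
  have s_spec (n : ℕ) : P n (s n) := by
    induction n with
    | zero => exact hx₀
    | succ n ih => exact correction_spec n _ ih
  have s_cauchy : AdicCompletion.IsAdicCauchy I R s := by
    refine (AdicCompletion.isAdicCauchy_iff I R s).2 fun n ↦ SModEq.symm ?_
    simpa only [s, SModEq.sub_mem, smul_eq_mul, Ideal.mul_top, add_sub_cancel_left] using
      correction_mem n _ (s_spec n)
  obtain ⟨x, hx⟩ := IsPrecomplete.prec inferInstance s_cauchy
  refine ⟨x, fun n ↦ ⟨s n, ?_, s_spec n⟩⟩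
  simpa only [SModEq.sub_mem, smul_eq_mul, Ideal.mul_top] using (hx n).symm

theorem eq_of_forall_sub_mem_pow [IsHausdorff I R] {x y : R} (h : ∀ n, x - y ∈ I ^ n) : x = y := by
  refine (IsHausdorff.eq_iff_smodEq (I := I)).2 fun n ↦ ?_
  simpa only [SModEq.sub_mem, smul_eq_mul, Ideal.mul_top] using h n

theorem exists_one_add_pow_prime_eq [IsAdicComplete I R] {p e l : ℕ} {y : R} (hp : p.Prime)
    (hI : I ^ e ≤ Ideal.span {(p : R)}) (hl : e < (p - 1) * l) (hy : y ∈ I ^ (e + l)) :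
    ∃ x ∈ I ^ l, (1 + x) ^ p = 1 + y := by
  have l_ne_zero : l ≠ 0 := by rintro rfl; simp at hl
  let IsApprox (n : ℕ) (x : R) : Prop :=
    x ∈ I ^ l ∧ 1 + y - (1 + x) ^ p ∈ Ideal.span {(p : R)} * I ^ (l + n)
  have zero_isApprox : IsApprox 0 0 :=
    ⟨zero_mem _, by simpa using Ideal.mul_mono_left hI (pow_add I e l ▸ hy)⟩
  have exists_correction (n : ℕ) (x : R) :
      IsApprox n x → ∃ z ∈ I ^ n, IsApprox (n + 1) (x + z) := by
    rintro ⟨x_mem, error_mem⟩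
    obtain ⟨z, z_mem, error_mem'⟩ := exists_sub_one_add_add_pow_prime_mem hp hI
      (hl.trans_le (by gcongr; omega)) (Ideal.pow_le_self l_ne_zero x_mem) error_mem
    exact ⟨z, Ideal.pow_le_pow_right (by omega) z_mem,
      add_mem x_mem (Ideal.pow_le_pow_right (by omega) z_mem), error_mem'⟩
  obtain ⟨x, hx⟩ :=
    exists_adic_limit_of_approximations IsApprox ⟨0, zero_isApprox⟩ exists_correction
  refine ⟨x, ?_, eq_of_forall_sub_mem_pow (I := I) fun n ↦ ?_⟩
  · obtain ⟨x', x_sub_mem, x'_mem, -⟩ := hx l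
    exact (Submodule.sub_mem_iff_left _ x'_mem).1 x_sub_mem
  · obtain ⟨x', x_sub_mem, -, error_mem⟩ := hx n
    have pow_sub_mem : (1 + x) ^ p - (1 + x') ^ p ∈ I ^ n :=
      Ideal.mem_of_dvd _ (by simpa using sub_dvd_pow_sub_pow (1 + x) (1 + x') p) x_sub_mem
    have error_mem_pow : 1 + y - (1 + x') ^ p ∈ I ^ n :=
      Ideal.pow_le_pow_right (Nat.le_add_left n l) (Ideal.mul_le_right error_mem)
    rw [← sub_sub_sub_cancel_right _ _ ((1 + x') ^ p)]
    exact sub_mem pow_sub_mem error_mem_pow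

theorem principal_units_p_pow_surjective_general [IsAdicComplete I R] {p e l : ℕ}
    (hp : p.Prime) (hI : I ^ e ≤ Ideal.span {(p : R)}) (hl : e < (p - 1) * l) (k : ℕ) :
    ∀ y ∈ I ^ (e * k + l), ∃ x ∈ I ^ l, (1 + x) ^ p ^ k = 1 + y := by
  induction k with
  | zero => exact fun y hy ↦ ⟨y, by simpa using hy, by simp⟩
  | succ k ih =>
    intro y hy
    rw [show e * (k + 1) + l = e + (e * k + l) by ring] at hy
    obtain ⟨z, z_mem, hz⟩ :=
      exists_one_add_pow_prime_eq hp hI (hl.trans_le (by gcongr; omega)) hy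
    obtain ⟨x, x_mem, hx⟩ := ih z z_mem
    exact ⟨x, x_mem, by rw [pow_succ, pow_mul, hx, hz]⟩

end CommRing

/-- **Surjectivity of the `p^k`-th power map on principal units:** let `O` be a complete
discrete valuation ring of characteristic `0` with maximal ideal `𝔪`, residue
characteristic `p`, and absolute ramification index `e = v(p)` (expressed by
`p ∈ 𝔪^e`, `p ∉ 𝔪^{e+1}`).  If `l ≥ 1` and `l > e/(p-1)`, then with `i = e·k + l`,
every element of `1 + 𝔪^i` is a `p^k`-th power of an element of `1 + 𝔪^l`. -/
theorem principal_units_p_pow_surjective (O : Type*) [CommRing O] [IsDomain O]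
    [IsDiscreteValuationRing O] [CharZero O]
    [IsAdicComplete (IsLocalRing.maximalIdeal O) O]
    (p : ℕ) (hp : p.Prime) (hresp : CharP (O ⧸ IsLocalRing.maximalIdeal O) p)
    (e : ℕ) (hpe : (p : O) ∈ IsLocalRing.maximalIdeal O ^ e)
    (hpe' : (p : O) ∉ IsLocalRing.maximalIdeal O ^ (e + 1))
    (k l : ℕ) (hl : 1 ≤ l) (hle : e < (p - 1) * l) :
    ∀ y ∈ IsLocalRing.maximalIdeal O ^ (e * k + l),
      ∃ x ∈ IsLocalRing.maximalIdeal O ^ l, (1 + x) ^ p ^ k = 1 + y := by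
  exact principal_units_p_pow_surjective_general hp (maximalIdeal_pow_le_span_singleton hpe') hle k
end
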